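/- arXiv:1603.02310 — 2 statements merged into one kernel-verified Lean document; each statement's English description precedes it below -/
import Mathlib

section
/- Let G be a 3-connected nonplanar graph that is {K5+, K33+, K5h, K33h}-free, and suppose the deletion of any three vertices of G leaves at most two components. Then G has an internally 4-connected nonplanar minor G' such that G is obtained from G' by 3-summing wheels onto distinct triangles of G'. -/
open SimpleGraph

/-- `H` is a minor of `G` (branch-set / model definition). -/
def IsMinor {W V : Type*} (H : SimpleGraph W) (G : SimpleGraph V) : Prop :=
  ∃ B : W → Set V,
    (∀ w, (B w).Nonempty) ∧
    (∀ w, (G.induce (B w)).Connected) ∧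
    (Pairwise fun w₁ w₂ => Disjoint (B w₁) (B w₂)) ∧
    (∀ ⦃w₁ w₂ : W⦄, H.Adj w₁ w₂ → ∃ v₁ ∈ B w₁, ∃ v₂ ∈ B w₂, G.Adj v₁ v₂)

def K5 : SimpleGraph (Fin 5) := ⊤

def K33 : SimpleGraph (Fin 3 ⊕ Fin 3) := completeBipartiteGraph (Fin 3) (Fin 3)

/-- A graph is planar iff it has neither a `K₅` nor a `K₃,₃` minor (Wagner's theorem). -/
def Planar {V : Type*} (G : SimpleGraph V) : Prop := ¬ IsMinor K5 G ∧ ¬ IsMinor K33 G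

/-- `G / uw`: contract the edge `uw`, merging `w` into `u` (the vertex `w` becomes isolated). -/
def contractEdge {V : Type*} (G : SimpleGraph V) (u w : V) : SimpleGraph V :=
  SimpleGraph.fromRel fun a b =>
    a ≠ w ∧ b ≠ w ∧ (G.Adj a b ∨ (a = u ∧ G.Adj w b) ∨ (b = u ∧ G.Adj a w))

/-- A nonplanar graph is almost-planar if for every edge, deletion or contraction is planar. -/
def AlmostPlanar {V : Type*} (G : SimpleGraph V) : Prop :=
  ¬ Planar G ∧ ∀ ⦃u v : V⦄, G.Adj u v →
    (Planar (G.deleteEdges {s(u, v)}) ∨ Planar (contractEdge G u v))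

/-- `G` is `k`-connected: more than `k` vertices and deleting fewer than `k` vertices
leaves a connected graph. -/
def KConnected {V : Type*} (G : SimpleGraph V) (k : ℕ) : Prop :=
  k < Nat.card V ∧ ∀ s : Set V, s.ncard < k → (G.induce (sᶜ)).Connected

/-- `{G[A], G[B]}` is a `k`-separation of `G`. -/
def IsSep {V : Type*} (G : SimpleGraph V) (k : ℕ) (A B : Set V) : Prop :=
  A ∪ B = Set.univ ∧ A ≠ Set.univ ∧ B ≠ Set.univ ∧ (A ∩ B).ncard = k ∧
  ∀ ⦃x y : V⦄, G.Adj x y → (x ∈ A ∧ y ∈ A) ∨ (x ∈ B ∧ y ∈ B)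

/-- The star `K_{1,3}`, with centre `0`. -/
def K13 : SimpleGraph (Fin 4) := SimpleGraph.fromRel fun a _ => a = 0

def InternallyFourConnected {V : Type*} (G : SimpleGraph V) : Prop :=
  KConnected G 3 ∧ 5 ≤ Nat.card V ∧
  ∀ A B : Set V, IsSep G 3 A B →
    Xor' (Nonempty (G.induce A ≃g K13)) (Nonempty (G.induce B ≃g K13))

/-- The wheel `W_n`: a cycle of length `n` plus a hub (`none`) joined to all of it. -/
def wheelGraph (n : ℕ) : SimpleGraph (Option (Fin n)) :=
  SimpleGraph.fromRel fun a b =>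
    match a, b with
    | some i, some j => j.val = (i.val + 1) % n
    | none, some _ => True
    | _, _ => False

def IsWheel {V : Type*} (G : SimpleGraph V) : Prop :=
  ∃ n, 3 ≤ n ∧ Nonempty (G ≃g wheelGraph n)

/-- The double wheel `DW_n`: a cycle of length `n` plus two adjacent hubs joined to all of it. -/
def doubleWheel (n : ℕ) : SimpleGraph (Fin n ⊕ Fin 2) :=
  SimpleGraph.fromRel fun a b =>
    match a, b with
    | .inl i, .inl j => j.val = (i.val + 1) % n
    | .inl _, .inr _ => True
    | .inr _, .inr _ => True
    | _, _ => False

/-- The Möbius ladder `M_n`: a cycle of length `2n` plus all "opposite" chords. -/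
def mobiusLadder (n : ℕ) : SimpleGraph (Fin (2 * n)) :=
  SimpleGraph.fromRel fun i j =>
    j.val = (i.val + 1) % (2 * n) ∨ j.val = (i.val + n) % (2 * n)

/-- `C²_m`: a cycle of length `m` plus all chords between vertices at distance two. -/
def squareCycle (m : ℕ) : SimpleGraph (Fin m) :=
  SimpleGraph.fromRel fun i j =>
    j.val = (i.val + 1) % m ∨ j.val = (i.val + 2) % m

/-- The alternating double wheel `AW_{2n}`: a cycle of length `2n` plus two adjacent hubs,
each joined to alternating cycle vertices. -/
def altDoubleWheel (n : ℕ) : SimpleGraph (Fin (2 * n) ⊕ Fin 2) :=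
  SimpleGraph.fromRel fun a b =>
    match a, b with
    | .inl i, .inl j => j.val = (i.val + 1) % (2 * n)
    | .inl i, .inr k => i.val % 2 = k.val
    | .inr _, .inr _ => True
    | _, _ => False

/-- The class `𝒲`: three wheels glued along a common triangle `V₀`, with no other edges. -/
def InClassW {V : Type*} (G : SimpleGraph V) : Prop :=
  ∃ P : V → Fin 4,
    (P ⁻¹' {0}).ncard = 3 ∧
    (∀ x y : V, P x = 0 → P y = 0 → x ≠ y → G.Adj x y) ∧
    (∀ i : Fin 4, i ≠ 0 → IsWheel (G.induce {v | P v = 0 ∨ P v = i})) ∧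
    (∀ ⦃x y : V⦄, G.Adj x y → ∃ i : Fin 4, i ≠ 0 ∧ (P x = 0 ∨ P x = i) ∧ (P y = 0 ∨ P y = i))

/-- `EX₁`: `K₃,₃` plus a vertex joined to all of one colour class. -/
def EX1 : SimpleGraph (Option (Fin 3 ⊕ Fin 3)) :=
  SimpleGraph.fromRel fun a b =>
    match a, b with
    | some (.inl _), some (.inr _) => True
    | none, some (.inl _) => True
    | _, _ => False

/-- `EX₂`: `K₅` plus a vertex joined to three of its vertices. -/
def EX2 : SimpleGraph (Option (Fin 5)) :=
  SimpleGraph.fromRel fun a b =>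
    match a, b with
    | some i, some j => i ≠ j
    | none, some j => j.val < 3
    | _, _ => False

/-- `EX₈`: `K₃,₃` plus a vertex joined to two vertices of one class and one of the other. -/
def EX8 : SimpleGraph (Option (Fin 3 ⊕ Fin 3)) :=
  SimpleGraph.fromRel fun a b =>
    match a, b with
    | some (.inl _), some (.inr _) => True
    | none, some x => x = Sum.inl 0 ∨ x = Sum.inl 1 ∨ x = Sum.inr 0
    | _, _ => False

/-- `K₅ʰ`: subdivide the edges `01` and `02` of `K₅` and join the two subdivision vertices. -/
def K5h : SimpleGraph (Fin 5 ⊕ Fin 2) :=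
  SimpleGraph.fromRel fun a b =>
    match a, b with
    | .inl i, .inl j =>
        i ≠ j ∧ ¬(i = 0 ∧ j = 1) ∧ ¬(i = 1 ∧ j = 0) ∧ ¬(i = 0 ∧ j = 2) ∧ ¬(i = 2 ∧ j = 0)
    | .inl i, .inr k => (k = 0 ∧ (i = 0 ∨ i = 1)) ∨ (k = 1 ∧ (i = 0 ∨ i = 2))
    | .inr _, .inr _ => True
    | _, _ => False

/-- `K₃,₃ʰ`: subdivide two edges of `K₃,₃` at a common endpoint and join
the two subdivision vertices. -/
def K33h : SimpleGraph ((Fin 3 ⊕ Fin 3) ⊕ Fin 2) :=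
  SimpleGraph.fromRel fun a b =>
    match a, b with
    | .inl (.inl i), .inl (.inr j) => ¬(i = 0 ∧ (j = 0 ∨ j = 1))
    | .inl (.inr j), .inl (.inl i) => ¬(i = 0 ∧ (j = 0 ∨ j = 1))
    | .inl x, .inr k =>
        (k = 0 ∧ (x = Sum.inl 0 ∨ x = Sum.inr 0)) ∨ (k = 1 ∧ (x = Sum.inl 0 ∨ x = Sum.inr 1))
    | .inr _, .inr _ => True
    | _, _ => False

/-- `K₅⁺`: `K₅` plus a pendant vertex. -/
def K5plus : SimpleGraph (Option (Fin 5)) :=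
  SimpleGraph.fromRel fun a b =>
    match a, b with
    | some i, some j => i ≠ j
    | none, some j => j = 0
    | _, _ => False

/-- `K₃,₃⁺`: `K₃,₃` plus a pendant vertex. -/
def K33plus : SimpleGraph (Option (Fin 3 ⊕ Fin 3)) :=
  SimpleGraph.fromRel fun a b =>
    match a, b with
    | some (.inl _), some (.inr _) => True
    | none, some x => x = Sum.inl 0
    | _, _ => False

/-- `K₅ ⊕ e`: disjoint union of `K₅` and one edge. -/
def K5oplus : SimpleGraph (Fin 5 ⊕ Fin 2) :=
  SimpleGraph.fromRel fun a b =>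
    match a, b with
    | .inl i, .inl j => i ≠ j
    | .inr _, .inr _ => True
    | _, _ => False

/-- `K₃,₃ ⊕ e`: disjoint union of `K₃,₃` and one edge. -/
def K33oplus : SimpleGraph ((Fin 3 ⊕ Fin 3) ⊕ Fin 2) :=
  SimpleGraph.fromRel fun a b =>
    match a, b with
    | .inl (.inl _), .inl (.inr _) => True
    | .inr _, .inr _ => True
    | _, _ => False

/-- The triad addition of `H` at `x y z`: add a new vertex joined to `x`, `y`, `z`. -/
def triadAddition {U : Type*} (H : SimpleGraph U) (x y z : U) : SimpleGraph (Option U) :=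
  SimpleGraph.fromRel fun a b =>
    match a, b with
    | some u, some v => H.Adj u v
    | none, some u => u = x ∨ u = y ∨ u = z
    | _, _ => False

def IsTriadAdditionOf {V U : Type*} (G : SimpleGraph V) (H : SimpleGraph U) : Prop :=
  ∃ x y z : U, x ≠ y ∧ y ≠ z ∧ x ≠ z ∧ Nonempty (G ≃g triadAddition H x y z)

/-- `G` is obtained from `H` by subdividing (possibly repeatedly) edges of `H`,
all of which lie in `S`. -/
def IsSubdivisionWithin {V W : Type*} (G : SimpleGraph V) (H : SimpleGraph W)
    (S : Set (Sym2 W)) : Prop :=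
  ∃ (f : W ↪ V) (p : ∀ ⦃u v : W⦄, H.Adj u v → G.Walk (f u) (f v)),
    (∀ ⦃u v : W⦄ (h : H.Adj u v), (p h).IsPath) ∧
    (∀ ⦃u v : W⦄ (h : H.Adj u v), p h.symm = (p h).reverse) ∧
    (∀ ⦃u v : W⦄ (h : H.Adj u v), s(u, v) ∉ S → (p h).length = 1) ∧
    (∀ ⦃u v : W⦄ (h : H.Adj u v) (w : W), f w ∈ (p h).support → w = u ∨ w = v) ∧
    (∀ ⦃u v u' v' : W⦄ (h : H.Adj u v) (h' : H.Adj u' v'), s(u, v) ≠ s(u', v') →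
      ∀ x : V, x ∈ (p h).support → x ∈ (p h').support → x ∈ Set.range f) ∧
    (∀ x : V, x ∈ Set.range f ∨ ∃ (u v : W) (h : H.Adj u v), x ∈ (p h).support) ∧
    (∀ e ∈ G.edgeSet, ∃ (u v : W) (h : H.Adj u v), e ∈ (p h).edges)

/-- `G` is a subdivision of `H`. -/
def IsSubdivision {V W : Type*} (G : SimpleGraph V) (H : SimpleGraph W) : Prop :=
  IsSubdivisionWithin G H Set.univ

/-- `D(H)`: the set of edges of `H` whose deletion leaves a planar graph. -/
def Dset {U : Type*} (H : SimpleGraph U) : Set (Sym2 U) :=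
  {e | e ∈ H.edgeSet ∧ Planar (H.deleteEdges {e})}

/-- `G[A]` together with all edges between vertices of `T` (`T ⊆ A` intended). -/
def deltaGraph {V : Type*} (G : SimpleGraph V) (A T : Set V) : SimpleGraph A :=
  SimpleGraph.fromRel fun a b => G.Adj a.1 b.1 ∨ (a.1 ∈ T ∧ b.1 ∈ T)

/-- `G[A]^Y` for the separation `{G[A], G[B]}`: add a new vertex joined to `A ∩ B`. -/
def sepY {V : Type*} (G : SimpleGraph V) (A B : Set V) : SimpleGraph (Option A) :=
  SimpleGraph.fromRel fun x y =>
    match x, y with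
    | some a, some b => G.Adj a.1 b.1
    | none, some a => a.1 ∈ A ∩ B
    | _, _ => False

/-- `G₂` is obtained from `G` by adding isolated vertices. -/
def AddIsolated {V₂ V : Type*} (G₂ : SimpleGraph V₂) (G : SimpleGraph V) : Prop :=
  ∃ f : V ↪ V₂, (∀ a b : V, G₂.Adj (f a) (f b) ↔ G.Adj a b) ∧
    ∀ x : V₂, x ∉ Set.range f → ∀ y : V₂, ¬ G₂.Adj x y

/-- The set of non-isolated vertices of `G` (so `G* = G.induce (core G)`). -/
def core {V : Type*} (G : SimpleGraph V) : Set V := {v | ∃ w, G.Adj v w}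

/-- `G` is obtained from `G'` by 3-summing wheels onto distinct triangles of `G'`. -/
def SumWheelsOnto {V U : Type*} (G : SimpleGraph V) (G' : SimpleGraph U) : Prop :=
  ∃ (g : U ↪ V) (k : ℕ) (Wp : Fin k → Set V) (T : Fin k → Set U),
    (∀ i, (T i).ncard = 3) ∧
    (∀ i, ∀ x ∈ T i, ∀ y ∈ T i, x ≠ y → G'.Adj x y) ∧
    Function.Injective T ∧
    (∀ i, Disjoint (Wp i) (Set.range ⇑g)) ∧
    (Pairwise fun i j => Disjoint (Wp i) (Wp j)) ∧
    (Set.range ⇑g ∪ ⋃ i, Wp i) = Set.univ ∧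
    (∀ i, IsWheel (deltaGraph G (Wp i ∪ ⇑g '' T i) (⇑g '' T i))) ∧
    (∀ a b : U, G.Adj (g a) (g b) → G'.Adj a b) ∧
    (∀ a b : U, G'.Adj a b → (G.Adj (g a) (g b) ∨ ∃ i, a ∈ T i ∧ b ∈ T i)) ∧
    (∀ ⦃x y : V⦄, G.Adj x y → (x ∈ Set.range ⇑g ∧ y ∈ Set.range ⇑g) ∨
      ∃ i, x ∈ Wp i ∪ ⇑g '' T i ∧ y ∈ Wp i ∪ ⇑g '' T i) ∧
    (∀ i, ∀ x ∈ Wp i, ∀ ⦃y : V⦄, G.Adj x y → y ∈ Wp i ∪ ⇑g '' T i)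

/-- `H` has an edge whose deletion and contraction are both nonplanar. -/
def HasBadEdge {V : Type*} (H : SimpleGraph V) : Prop :=
  ∃ u v : V, H.Adj u v ∧ ¬ Planar (H.deleteEdges {s(u, v)}) ∧ ¬ Planar (contractEdge H u v)


/-- set-connectedness by an invariance principle -/
def CC {V : Type*} (G : SimpleGraph V) (S : Set V) : Prop :=
  S.Nonempty ∧ ∀ P : Set V, (∀ a ∈ S, ∀ b ∈ S, G.Adj a b → a ∈ P → b ∈ P) →
    ∀ a ∈ S, ∀ b ∈ S, a ∈ P → b ∈ P

lemma cc_iff {V : Type*} {G : SimpleGraph V} {S : Set V} :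
    (G.induce S).Connected ↔ CC G S := by
  constructor
  · intro h
    obtain ⟨⟨s, hs⟩⟩ := h.nonempty
    refine ⟨⟨s, hs⟩, ?_⟩
    intro P hP a ha b hb haP
    have hr := h.preconnected ⟨a, ha⟩ ⟨b, hb⟩
    rw [SimpleGraph.reachable_iff_reflTransGen] at hr
    have : ∀ c : S, Relation.ReflTransGen (G.induce S).Adj ⟨a, ha⟩ c → c.1 ∈ P := by
      intro c hc
      induction hc with
      | refl => exact haP
      | tail _ h2 ih => exact hP _ (Subtype.prop _) _ (Subtype.prop _) h2 ih
    exact this _ hr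
  · rintro ⟨⟨s, hs⟩, h⟩
    have : Nonempty S := ⟨⟨s, hs⟩⟩
    refine SimpleGraph.Connected.mk ?_
    rintro ⟨a, ha⟩ ⟨b, hb⟩
    have := h {c | ∃ hc : c ∈ S, (G.induce S).Reachable ⟨a, ha⟩ ⟨c, hc⟩} (by
      rintro c hc d hd hcd ⟨_, hr⟩
      refine ⟨hd, hr.trans ?_⟩
      exact SimpleGraph.Adj.reachable (G := G.induce S) (by simpa using hcd)) a ha b hb ⟨ha, SimpleGraph.Reachable.refl _⟩
    exact this.2

section
variable {V : Type*} {G F : SimpleGraph V} {S T : Set V}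

lemma cc_edge (h : CC G S) (P : Set V) {a b : V} (ha : a ∈ S) (hb : b ∈ S)
    (haP : a ∈ P) (hbP : b ∉ P) : ∃ c ∈ S, ∃ d ∈ S, c ∈ P ∧ d ∉ P ∧ G.Adj c d := by
  by_contra hc
  push Not at hc
  exact hbP (h.2 P (fun c hcS d hdS hcd hcP => by
    by_contra hd
    exact hc c hcS d hdS hcP hd hcd) a ha b hb haP)

lemma cc_singleton (a : V) : CC G {a} :=
  ⟨⟨a, rfl⟩, fun P _ c hc d hd h => by
    rw [Set.mem_singleton_iff] at hc hd; rw [hd, ← hc]; exact h⟩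

lemma cc_of_base {a : V} (ha : a ∈ S)
    (h : ∀ P : Set V, (∀ c ∈ S, ∀ d ∈ S, G.Adj c d → (c ∈ P ↔ d ∈ P)) → a ∈ P → ∀ b ∈ S, b ∈ P) :
    CC G S := by
  refine ⟨⟨a, ha⟩, fun P hP c hc d hd hcP => ?_⟩
  have hP' : ∀ c ∈ S, ∀ d ∈ S, G.Adj c d → (c ∈ P ↔ d ∈ P) := fun c hc d hd hcd =>
    ⟨hP c hc d hd hcd, hP d hd c hc hcd.symm⟩
  by_cases haP : a ∈ P
  · exact h P hP' haP d hd
  · exact absurd hcP (h Pᶜ (fun c hc d hd hcd => not_congr (hP' c hc d hd hcd)) haP c hc)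

lemma cc_mem (h : CC G S) {P : Set V}
    (hP : ∀ c ∈ S, ∀ d ∈ S, G.Adj c d → (c ∈ P ↔ d ∈ P)) {a b : V} (ha : a ∈ S) (hb : b ∈ S)
    (haP : a ∈ P) : b ∈ P :=
  h.2 P (fun c hc d hd hcd => (hP c hc d hd hcd).1) a ha b hb haP

lemma cc_union (hS : CC G S) (hT : CC G T) {a b : V} (ha : a ∈ S) (hb : b ∈ T)
    (hab : a = b ∨ G.Adj a b) : CC G (S ∪ T) := by
  refine cc_of_base (Or.inl ha) fun P hP haP c hc => ?_
  have h1 : ∀ c ∈ S, c ∈ P := fun c hc => cc_mem hS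
    (fun c hc d hd => hP c (Or.inl hc) d (Or.inl hd)) ha hc haP
  have hbP : b ∈ P := by
    rcases hab with rfl | hab
    · exact haP
    · exact (hP a (Or.inl ha) b (Or.inr hb) hab).1 haP
  have h2 : ∀ c ∈ T, c ∈ P := fun c hc => cc_mem hT
    (fun c hc d hd => hP c (Or.inr hc) d (Or.inr hd)) hb hc hbP
  rcases hc with hc | hc
  · exact h1 c hc
  · exact h2 c hc

lemma cc_insert (hS : CC G S) {a b : V} (ha : a ∈ S) (hab : G.Adj a b) : CC G (insert b S) := by
  rw [Set.insert_eq, Set.union_comm]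
  exact cc_union hS (cc_singleton b) ha rfl (Or.inr hab)

lemma cc_mono (hS : CC G S) (h : ∀ a ∈ S, ∀ b ∈ S, G.Adj a b → F.Adj a b) : CC F S :=
  ⟨hS.1, fun P hP a ha b hb => hS.2 P (fun a ha b hb hab => hP a ha b hb (h a ha b hb hab)) a ha b hb⟩

/-- component of `a` in `S` -/
def cpt {V : Type*} (G : SimpleGraph V) (S : Set V) (a : V) : Set V :=
  {b | Relation.ReflTransGen (fun u v => G.Adj u v ∧ v ∈ S) a b}

lemma mem_cmp_self (a : V) : a ∈ cpt G S a := Relation.ReflTransGen.refl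

lemma cmp_subset {a : V} (ha : a ∈ S) : cpt G S a ⊆ S := by
  intro b hb
  induction hb with
  | refl => exact ha
  | tail _ h _ => exact h.2

lemma cmp_closed {a b c : V} (hb : b ∈ cpt G S a) (hbc : G.Adj b c) (hc : c ∈ S) :
    c ∈ cpt G S a := Relation.ReflTransGen.tail hb ⟨hbc, hc⟩

lemma cmp_cc (a : V) : CC G (cpt G S a) := by
  refine cc_of_base (mem_cmp_self a) fun P hP haP b hb => ?_
  induction hb with
  | refl => exact haP
  | tail h1 h2 ih => exact (hP _ h1 _ (cmp_closed h1 h2.1 h2.2) h2.1).1 ih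

lemma cmp_eq {a b : V} (ha : a ∈ S) (hb : b ∈ cpt G S a) : cpt G S b = cpt G S a := by
  have h1 : cpt G S b ⊆ cpt G S a := fun c hc => Relation.ReflTransGen.trans hb hc
  refine h1.antisymm ?_
  have h2 : a ∈ cpt G S b := by
    have := (cmp_cc (G := G) (S := S) a).2 (cpt G S b) (fun c _ d hd hcd hcP =>
      cmp_closed hcP hcd (cmp_subset ha hd)) b hb a (mem_cmp_self a) (mem_cmp_self b)
    exact this
  exact fun c hc => Relation.ReflTransGen.trans h2 hc

/-- noncut vertex lemma -/
lemma exists_noncut [Finite V] {W : Set V} (hW : CC G W) (hS : CC G S) (hSW : S ⊆ W)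
    (hne : S ≠ W) : ∃ w ∈ W, w ∉ S ∧ CC G (W \ {w}) := by
  have hfin : {T : Set V | CC G T ∧ S ⊆ T ∧ T ⊂ W}.Finite := Set.toFinite _
  obtain ⟨T, hT⟩ := hfin.exists_maximal ⟨S, hS, subset_rfl, hSW.ssubset_of_ne hne⟩
  obtain ⟨⟨hTc, hST, hTW⟩, hmax⟩ := hT
  obtain ⟨a, ha⟩ := hTc.1
  obtain ⟨b, hb, hbT⟩ := Set.exists_of_ssubset hTW
  obtain ⟨c, hc, d, hd, hcT, hdT, hcd⟩ := cc_edge hW T (hTW.1 ha) hb ha hbT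
  have h1 : CC G (insert d T) := cc_insert hTc hcT hcd
  have h2 : insert d T = W := by
    by_contra hne
    have : insert d T ⊆ T := hmax (show _ ∧ _ ∧ _ from ⟨h1, hST.trans (Set.subset_insert _ _),
      (Set.insert_subset hd hTW.1).ssubset_of_ne hne⟩) (Set.subset_insert _ _)
    exact hdT (this (Set.mem_insert _ _))
  refine ⟨d, hd, fun h => hdT (hST h), ?_⟩
  have : W \ {d} = T := by
    rw [← h2]; ext e; simp only [Set.mem_sdiff, Set.mem_insert_iff, Set.mem_singleton_iff]
    constructor
    · rintro ⟨h | h, h'⟩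
      · exact absurd h h'
      · exact h
    · intro h; exact ⟨Or.inr h, fun h' => hdT (h' ▸ h)⟩
  rw [this]; exact hTc

lemma cc_iUnion {ι : Type*} {H : SimpleGraph ι} {I : Set ι} {C : ι → Set V} (hI : CC H I)
    (hC : ∀ i ∈ I, CC G (C i))
    (hadj : ∀ i ∈ I, ∀ j ∈ I, H.Adj i j → ∃ a ∈ C i, ∃ b ∈ C j, G.Adj a b) :
    CC G (⋃ i ∈ I, C i) := by
  obtain ⟨i, hi⟩ := hI.1
  obtain ⟨a, ha⟩ := (hC i hi).1
  have hm : ∀ j ∈ I, ∀ c ∈ C j, c ∈ ⋃ i ∈ I, C i := fun j hj c hc => Set.mem_biUnion hj hc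
  refine cc_of_base (hm i hi a ha) fun P hP haP b hb => ?_
  have key : ∀ j ∈ I, ∀ c ∈ C j, ∀ d ∈ C j, c ∈ P → d ∈ P := fun j hj c hc d hd hcP =>
    cc_mem (hC j hj) (fun c hc d hd => hP c (hm j hj c hc) d (hm j hj d hd)) hc hd hcP
  have := hI.2 {j | ∀ c ∈ C j, c ∈ P} (fun j hj k hk hjk hjP => by
    obtain ⟨c, hc, d, hd, hcd⟩ := hadj j hj k hk hjk
    have : d ∈ P := (hP c (hm j hj c hc) d (hm k hk d hd) hcd).1 (hjP c hc)
    exact fun e he => key k hk d hd e he this)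
  rw [Set.mem_iUnion₂] at hb
  obtain ⟨j, hj, hb⟩ := hb
  exact this i hi j hj (fun c hc => key i hi a ha c hc haP) b hb

end

/-- models -/
def Mdl {W V : Type*} (K : SimpleGraph W) (G : SimpleGraph V) (B : W → Set V) : Prop :=
  (∀ w, CC G (B w)) ∧ (∀ w₁ w₂, ∀ v, v ∈ B w₁ → v ∈ B w₂ → w₁ = w₂) ∧
  (∀ w₁ w₂, K.Adj w₁ w₂ → ∃ a ∈ B w₁, ∃ b ∈ B w₂, G.Adj a b)

def MIn {W V : Type*} (K : SimpleGraph W) (G : SimpleGraph V) (S : Set V) : Prop :=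
  ∃ B, Mdl K G B ∧ ∀ w, B w ⊆ S

def NP {V : Type*} (G : SimpleGraph V) (S : Set V) : Prop := MIn K5 G S ∨ MIn K33 G S

lemma isMinor_iff {W V : Type*} {K : SimpleGraph W} {G : SimpleGraph V} :
    IsMinor K G ↔ ∃ B, Mdl K G B := by
  constructor
  · rintro ⟨B, -, h1, h2, h3⟩
    refine ⟨B, fun w => cc_iff.1 (h1 w), ?_, fun w₁ w₂ h => h3 h⟩
    intro w₁ w₂ v h h'
    by_contra hne
    exact Set.disjoint_left.1 (h2 hne) h h'
  · rintro ⟨B, h1, h2, h3⟩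
    refine ⟨B, fun w => (h1 w).1, fun w => cc_iff.2 (h1 w), ?_, fun w₁ w₂ h => h3 _ _ h⟩
    intro w₁ w₂ hne
    exact Set.disjoint_left.2 fun v h h' => hne (h2 _ _ v h h')

lemma isMinor_iff_MIn {W V : Type*} {K : SimpleGraph W} {G : SimpleGraph V} :
    IsMinor K G ↔ MIn K G Set.univ := by
  rw [isMinor_iff]; exact ⟨fun ⟨B, h⟩ => ⟨B, h, fun _ => Set.subset_univ _⟩, fun ⟨B, h, _⟩ => ⟨B, h⟩⟩

lemma not_planar_iff {V : Type*} {G : SimpleGraph V} : ¬ Planar G ↔ NP G Set.univ := by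
  unfold Planar NP
  rw [← isMinor_iff_MIn, ← isMinor_iff_MIn]; tauto

lemma MIn.mono {W V : Type*} {K : SimpleGraph W} {G F : SimpleGraph V} {S T : Set V}
    (h : MIn K G S) (hST : S ⊆ T) (hGF : ∀ a ∈ S, ∀ b ∈ S, G.Adj a b → F.Adj a b) : MIn K F T := by
  obtain ⟨B, ⟨h1, h2, h3⟩, h4⟩ := h
  refine ⟨B, ⟨fun w => cc_mono (h1 w) fun a ha b hb => hGF a (h4 w ha) b (h4 w hb), h2, ?_⟩,
    fun w => (h4 w).trans hST⟩
  intro w₁ w₂ hw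
  obtain ⟨a, ha, b, hb, hab⟩ := h3 w₁ w₂ hw
  exact ⟨a, ha, b, hb, hGF a (h4 _ ha) b (h4 _ hb) hab⟩

lemma NP.mono {V : Type*} {G F : SimpleGraph V} {S T : Set V}
    (h : NP G S) (hST : S ⊆ T) (hGF : ∀ a ∈ S, ∀ b ∈ S, G.Adj a b → F.Adj a b) : NP F T :=
  h.imp (fun h => h.mono hST hGF) (fun h => h.mono hST hGF)

lemma isMinor_trans {W V U : Type*} {K : SimpleGraph W} {H : SimpleGraph U} {G : SimpleGraph V}
    (h1 : IsMinor K H) (h2 : IsMinor H G) : IsMinor K G := by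
  rw [isMinor_iff] at *
  obtain ⟨B, b1, b2, b3⟩ := h1
  obtain ⟨C, c1, c2, c3⟩ := h2
  refine ⟨fun w => ⋃ u ∈ B w, C u, fun w => cc_iUnion (b1 w) (fun u _ => c1 u)
    (fun i _ j _ h => c3 i j h), ?_, ?_⟩
  · intro w₁ w₂ v h h'
    rw [Set.mem_iUnion₂] at h h'
    obtain ⟨u, hu, hv⟩ := h
    obtain ⟨u', hu', hv'⟩ := h'
    have := c2 _ _ v hv hv'
    subst this
    exact b2 _ _ u hu hu'
  · intro w₁ w₂ h
    obtain ⟨u, hu, u', hu', huu⟩ := b3 _ _ h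
    obtain ⟨a, ha, b, hb, hab⟩ := c3 _ _ huu
    exact ⟨a, Set.mem_biUnion hu ha, b, Set.mem_biUnion hu' hb, hab⟩

/-- transfer to induced subgraphs -/
lemma cc_induce {V : Type*} {F : SimpleGraph V} {B : Set V} {S : Set B} :
    CC (F.induce B) S ↔ CC F (Subtype.val '' S) := by
  constructor
  · rintro ⟨⟨s, hs⟩, h⟩
    refine ⟨⟨s, s, hs, rfl⟩, ?_⟩
    rintro P hP _ ⟨a, ha, rfl⟩ _ ⟨b, hb, rfl⟩ haP
    exact h (Subtype.val ⁻¹' P) (fun c hc d hd hcd => hP _ ⟨c, hc, rfl⟩ _ ⟨d, hd, rfl⟩ hcd) a ha b hb haP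
  · rintro ⟨⟨_, s, hs, rfl⟩, h⟩
    refine ⟨⟨s, hs⟩, ?_⟩
    rintro P hP a ha b hb haP
    have := h (Subtype.val '' P) (by
      rintro _ ⟨c, hc, rfl⟩ _ ⟨d, hd, rfl⟩ hcd ⟨c', hc', hcc⟩
      obtain rfl := Subtype.val_injective hcc
      exact ⟨d, hP _ hc d hd hcd hc', rfl⟩) a ⟨a, ha, rfl⟩ b ⟨b, hb, rfl⟩ ⟨a, haP, rfl⟩
    obtain ⟨b', hb', e⟩ := this
    obtain rfl := Subtype.val_injective e
    exact hb'

lemma MIn_induce {W V : Type*} {K : SimpleGraph W} {F : SimpleGraph V} {B : Set V} {S : Set B} :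
    MIn K (F.induce B) S ↔ MIn K F (Subtype.val '' S) := by
  constructor
  · rintro ⟨M, ⟨h1, h2, h3⟩, h4⟩
    refine ⟨fun w => Subtype.val '' M w, ⟨fun w => cc_induce.1 (h1 w), ?_, ?_⟩,
      fun w => Set.image_mono (h4 w)⟩
    · rintro w₁ w₂ _ ⟨a, ha, rfl⟩ ⟨b, hb, e⟩
      obtain rfl := Subtype.val_injective e
      exact h2 _ _ _ ha hb
    · intro w₁ w₂ h
      obtain ⟨a, ha, b, hb, hab⟩ := h3 _ _ h
      exact ⟨a, ⟨a, ha, rfl⟩, b, ⟨b, hb, rfl⟩, hab⟩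
  · rintro ⟨M, ⟨h1, h2, h3⟩, h4⟩
    have hM : ∀ w, Subtype.val '' (Subtype.val ⁻¹' M w : Set B) = M w := by
      intro w
      rw [Subtype.image_preimage_coe, Set.inter_eq_right]
      exact (h4 w).trans (by rintro _ ⟨a, _, rfl⟩; exact a.2)
    refine ⟨fun w => Subtype.val ⁻¹' M w, ⟨fun w => cc_induce.2 (by rw [hM]; exact h1 w),
      fun w₁ w₂ v hv hv' => h2 _ _ _ hv hv', ?_⟩, ?_⟩
    · intro w₁ w₂ h
      obtain ⟨a, ha, b, hb, hab⟩ := h3 _ _ h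
      obtain ⟨a, _, rfl⟩ := h4 _ ha
      obtain ⟨b, _, rfl⟩ := h4 _ hb
      exact ⟨a, ha, b, hb, hab⟩
    · intro w a ha
      obtain ⟨a', ha', e⟩ := h4 _ ha
      obtain rfl := Subtype.val_injective e
      exact ha'

lemma NP_induce {V : Type*} {F : SimpleGraph V} {B : Set V} {S : Set B} :
    NP (F.induce B) S ↔ NP F (Subtype.val '' S) := or_congr MIn_induce MIn_induce

/-- add all edges inside `X` -/
def addTri {V : Type*} (G : SimpleGraph V) (X : Set V) : SimpleGraph V :=
  SimpleGraph.fromRel fun a b => G.Adj a b ∨ (a ∈ X ∧ b ∈ X)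

lemma addTri_adj {V : Type*} {G : SimpleGraph V} {X : Set V} {a b : V} :
    (addTri G X).Adj a b ↔ G.Adj a b ∨ (a ≠ b ∧ a ∈ X ∧ b ∈ X) := by
  unfold addTri
  rw [SimpleGraph.fromRel_adj]
  have := @SimpleGraph.Adj.ne _ G a b
  have := G.adj_comm a b
  tauto

lemma delta_adj {V : Type*} {G : SimpleGraph V} {A T : Set V} {a b : A} :
    (deltaGraph G A T).Adj a b ↔ G.Adj a.1 b.1 ∨ (a.1 ≠ b.1 ∧ a.1 ∈ T ∧ b.1 ∈ T) := by
  unfold deltaGraph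
  rw [SimpleGraph.fromRel_adj]
  have := @SimpleGraph.Adj.ne _ G a b
  have := G.adj_comm a b
  have : a ≠ b ↔ a.1 ≠ b.1 := by rw [Ne, Ne, Subtype.ext_iff]
  tauto


lemma Mdl.comp {W W' V : Type*} {K : SimpleGraph W} {K' : SimpleGraph W'} {G : SimpleGraph V}
    {B : W → Set V} (h : Mdl K G B) (f : W' → W) (hf : Function.Injective f)
    (hadj : ∀ a b, K'.Adj a b → K.Adj (f a) (f b)) : Mdl K' G (fun w => B (f w)) :=
  ⟨fun w => h.1 _, fun w₁ w₂ v hv hv' => hf (h.2.1 _ _ v hv hv'), fun _ _ hw => h.2.2 _ _ (hadj _ _ hw)⟩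

lemma Mdl.plus {W V : Type*} {K : SimpleGraph W} {K' : SimpleGraph (Option W)} {G : SimpleGraph V}
    {B : W → Set V} (h : Mdl K G B) {d c : V} {w₀ : W} (hd : ∀ w, d ∉ B w) (hc : c ∈ B w₀)
    (hcd : G.Adj c d) (h1 : ∀ a b, K'.Adj (some a) (some b) → K.Adj a b)
    (h2 : ∀ a, K'.Adj none (some a) → a = w₀) : IsMinor K' G := by
  rw [isMinor_iff]
  refine ⟨fun o => o.elim {d} B, ?_, ?_, ?_⟩
  · rintro (_ | w)
    · exact cc_singleton d
    · exact h.1 w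
  · rintro (_ | w₁) (_ | w₂) v hv hv'
    · rfl
    · exact absurd hv' (by rw [show v = d from hv]; exact hd _)
    · exact absurd hv (by rw [show v = d from hv']; exact hd _)
    · exact congrArg some (h.2.1 _ _ v hv hv')
  · rintro (_ | w₁) (_ | w₂) hw
    · exact absurd hw (K'.loopless.irrefl _)
    · obtain rfl := h2 _ hw
      exact ⟨d, rfl, c, hc, hcd.symm⟩
    · obtain rfl := h2 _ hw.symm
      exact ⟨c, hc, d, rfl, hcd⟩
    · exact h.2.2 _ _ (h1 _ _ hw)

lemma K33_adj {a b : Fin 3 ⊕ Fin 3} :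
    K33.Adj a b ↔ (a.isLeft ∧ b.isRight) ∨ (a.isRight ∧ b.isLeft) := by
  unfold K33; simp [completeBipartiteGraph]

lemma K33_auto (w : Fin 3 ⊕ Fin 3) : ∃ f : Fin 3 ⊕ Fin 3 → Fin 3 ⊕ Fin 3, Function.Injective f ∧
    f (Sum.inl 0) = w ∧ ∀ a b, K33.Adj a b → K33.Adj (f a) (f b) := by
  rcases w with i | i
  · refine ⟨Sum.map (Equiv.swap 0 i) id, ?_, by simp, ?_⟩
    · exact Sum.map_injective.2 ⟨(Equiv.swap 0 i).injective, Function.injective_id⟩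
    · rintro (a | a) (b | b) <;> simp [K33_adj]
  · refine ⟨fun w => (Sum.map (Equiv.swap 0 i) id w).swap, ?_, by simp, ?_⟩
    · exact Sum.swap_leftInverse.injective.comp
        (Sum.map_injective.2 ⟨(Equiv.swap 0 i).injective, Function.injective_id⟩)
    · rintro (a | a) (b | b) <;> simp [K33_adj]

lemma tight_of_free {V : Type*} {G : SimpleGraph V} (hG : CC G Set.univ)
    (h5 : ¬ IsMinor K5plus G) (h33 : ¬ IsMinor K33plus G) {S : Set V} (h : NP G S) (v : V) :
    v ∈ S := by
  by_contra hv
  rcases h with ⟨B, hB, hBS⟩ | ⟨B, hB, hBS⟩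
  · obtain ⟨a, ha⟩ := (hB.1 0).1
    obtain ⟨c, -, d, -, hc, hd, hcd⟩ := cc_edge hG (⋃ w, B w) (Set.mem_univ a) (Set.mem_univ v)
      (Set.mem_iUnion.2 ⟨0, ha⟩) (by rw [Set.mem_iUnion]; rintro ⟨w, hw⟩; exact hv (hBS w hw))
    rw [Set.mem_iUnion] at hc hd
    push Not at hd
    obtain ⟨w, hw⟩ := hc
    refine h5 ((hB.comp (K' := K5) (Equiv.swap 0 w) (Equiv.injective _) ?_).plus (w₀ := 0) (c := c)
      (d := d) (fun w => hd _) (by simpa using hw) hcd ?_ ?_)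
    · intro a b; simp [K5]
    · intro a b; simp only [K5plus, K5, SimpleGraph.fromRel_adj]; intro h; exact fun e => h.1 (congrArg _ e)
    · intro a; simp [K5plus]
  · obtain ⟨a, ha⟩ := (hB.1 (Sum.inl 0)).1
    obtain ⟨c, -, d, -, hc, hd, hcd⟩ := cc_edge hG (⋃ w, B w) (Set.mem_univ a) (Set.mem_univ v)
      (Set.mem_iUnion.2 ⟨_, ha⟩) (by rw [Set.mem_iUnion]; rintro ⟨w, hw⟩; exact hv (hBS w hw))
    rw [Set.mem_iUnion] at hc hd
    push Not at hd
    obtain ⟨w, hw⟩ := hc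
    obtain ⟨f, hf, hf0, hfa⟩ := K33_auto w
    refine h33 ((hB.comp (K' := K33) f hf hfa).plus (w₀ := Sum.inl 0) (c := c)
      (d := d) (fun w => hd _) (by simpa [hf0] using hw) hcd ?_ ?_)
    · rintro (a | a) (b | b) <;> simp [K33plus, K33_adj]
    · intro a; simp [K33plus]

section
variable {V : Type*} {G : SimpleGraph V}

open Classical in
lemma y_insert {W : Type*} {K : SimpleGraph W} {x : Fin 3 → V} {M : W → Set V} {B W' : Set V}
    (hM : Mdl K (addTri G (Set.range x)) M) (hMB : ∀ w, M w ⊆ B) (hW : CC G W')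
    (hWB : ∀ v ∈ W', v ∉ B) (hx : ∀ i, ∃ v ∈ W', G.Adj (x i) v) (w₀ : W)
    (h0 : ∃ i, x i ∈ M w₀) (h1 : ∀ w, w ≠ w₀ → ∀ i j, x i ∈ M w → x j ∈ M w → x i = x j)
    (h2 : ∀ w₁ w₂, w₁ ≠ w₀ → w₂ ≠ w₀ → K.Adj w₁ w₂ → ∀ i j, x i ∈ M w₁ → x j ∈ M w₂ → False) :
    ∃ M', Mdl K G M' ∧ (∀ w, M' w ⊆ B ∪ W') ∧ W' ⊆ M' w₀ := by
  refine ⟨fun w => if w = w₀ then M w₀ ∪ W' else M w, ⟨?_, ?_, ?_⟩, ?_, ?_⟩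
  · intro w
    by_cases hw : w = w₀
    · subst hw
      simp only [if_true]
      obtain ⟨v, hv⟩ := hW.1
      refine cc_of_base (Or.inr hv) fun P hP hvP => ?_
      have hWP : ∀ c ∈ W', c ∈ P := fun c hc => cc_mem hW
        (fun c hc d hd => hP c (Or.inr hc) d (Or.inr hd)) hv hc hvP
      have hXP : ∀ i, x i ∈ M w → x i ∈ P := by
        intro i hi
        obtain ⟨v, hv, hiv⟩ := hx i
        exact (hP _ (Or.inl hi) _ (Or.inr hv) hiv).2 (hWP v hv)
      obtain ⟨i, hi⟩ := h0
      rintro b (hb | hb)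
      · refine cc_mem (hM.1 w) (P := P) ?_ hi hb (hXP i hi)
        intro c hc d hd hcd
        rw [addTri_adj] at hcd
        rcases hcd with hcd | ⟨-, ⟨j, rfl⟩, ⟨k, rfl⟩⟩
        · exact hP c (Or.inl hc) d (Or.inl hd) hcd
        · exact iff_of_true (hXP _ hc) (hXP _ hd)
      · exact hWP b hb
    · simp only [if_neg hw]
      refine cc_mono (hM.1 w) fun a ha b hb hab => ?_
      rw [addTri_adj] at hab
      rcases hab with hab | ⟨hne, ⟨j, rfl⟩, ⟨k, rfl⟩⟩
      · exact hab
      · exact absurd (h1 w hw j k ha hb) hne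
  · have key : ∀ w v, (v ∈ if w = w₀ then M w₀ ∪ W' else M w) → v ∈ M w ∨ (v ∈ W' ∧ w = w₀) := by
      intro w v hv
      split_ifs at hv with h
      · subst h; exact hv.imp id (fun h => ⟨h, rfl⟩)
      · exact Or.inl hv
    intro w₁ w₂ v hv hv'
    rcases key _ _ hv with h | ⟨h, h'⟩ <;> rcases key _ _ hv' with k | ⟨k, k'⟩
    · exact hM.2.1 _ _ v h k
    · exact absurd (hMB _ h) (hWB v k)
    · exact absurd (hMB _ k) (hWB v h)
    · rw [h', k']
  · have sub : ∀ w v, v ∈ M w → v ∈ if w = w₀ then M w₀ ∪ W' else M w := by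
      intro w v hv
      split_ifs with h
      · exact Or.inl (h ▸ hv)
      · exact hv
    have sub' : ∀ v ∈ W', v ∈ if w₀ = w₀ then M w₀ ∪ W' else M w₀ := by
      intro v hv; rw [if_pos rfl]; exact Or.inr hv
    intro w₁ w₂ hw
    obtain ⟨a, ha, b, hb, hab⟩ := hM.2.2 _ _ hw
    rw [addTri_adj] at hab
    rcases hab with hab | ⟨hne, ⟨j, rfl⟩, ⟨k, rfl⟩⟩
    · exact ⟨a, sub _ _ ha, b, sub _ _ hb, hab⟩
    · by_cases e1 : w₁ = w₀
      · subst e1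
        obtain ⟨v, hv, hkv⟩ := hx k
        exact ⟨v, sub' v hv, x k, sub _ _ hb, hkv.symm⟩
      · by_cases e2 : w₂ = w₀
        · subst e2
          obtain ⟨v, hv, hkv⟩ := hx j
          exact ⟨x j, sub _ _ ha, v, sub' v hv, hkv⟩
        · exact (h2 w₁ w₂ e1 e2 hw j k ha hb).elim
  · intro w v hv
    dsimp only at hv
    split_ifs at hv with h
    · exact hv.imp (fun h => hMB _ h) id
    · exact Or.inl (hMB _ hv)
  · intro v hv
    simp only [if_true]; exact Or.inr hv

/-- model in `B ∪ W'` where `W'` is part of one branch set, or unused -/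
def YM {W V : Type*} (K : SimpleGraph W) (G : SimpleGraph V) (B W' : Set V) : Prop :=
  ∃ M, Mdl K G M ∧ (∀ w, M w ⊆ B ∪ W') ∧ ((∃ w₀, W' ⊆ M w₀) ∨ ∀ w, M w ⊆ B)

lemma ym_or {W : Type*} {K : SimpleGraph W} {x : Fin 3 → V} {M : W → Set V} {B W' : Set V}
    (hM : Mdl K (addTri G (Set.range x)) M) (hMB : ∀ w, M w ⊆ B) (hW : CC G W')
    (hWB : ∀ v ∈ W', v ∉ B) (hx : ∀ i, ∃ v ∈ W', G.Adj (x i) v) :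
    YM K G B W' ∨ ∃ e : Fin 3 → W, Function.Injective e ∧ ∀ i, x i ∈ M (e i) := by
  have fin : ∀ w₀, (∃ i, x i ∈ M w₀) → (∀ w, w ≠ w₀ → ∀ i j, x i ∈ M w → x j ∈ M w → x i = x j) →
    (∀ w₁ w₂, w₁ ≠ w₀ → w₂ ≠ w₀ → K.Adj w₁ w₂ → ∀ i j, x i ∈ M w₁ → x j ∈ M w₂ → False) →
    YM K G B W' := by
    intro w₀ h0 h1 h2
    obtain ⟨M', a, b, c⟩ := y_insert hM hMB hW hWB hx w₀ h0 h1 h2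
    exact ⟨M', a, b, Or.inl ⟨w₀, c⟩⟩
  by_cases hno : ∃ w i, x i ∈ M w
  swap
  · push Not at hno
    left
    have hG : ∀ w₁ w₂, ∀ a ∈ M w₁, ∀ b ∈ M w₂, (addTri G (Set.range x)).Adj a b → G.Adj a b := by
      intro w₁ w₂ a ha b hb hab
      rw [addTri_adj] at hab
      rcases hab with hab | ⟨hne, ⟨j, rfl⟩, ⟨k, rfl⟩⟩
      · exact hab
      · exact absurd ha (hno _ _)
    refine ⟨M, ⟨fun w => cc_mono (hM.1 w) (hG w w), hM.2.1, ?_⟩,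
      fun w => (hMB w).trans Set.subset_union_left, Or.inr hMB⟩
    intro w₁ w₂ hw
    obtain ⟨a, ha, b, hb, hab⟩ := hM.2.2 _ _ hw
    exact ⟨a, ha, b, hb, hG _ _ a ha b hb hab⟩
  by_cases h2 : ∃ w i j, i ≠ j ∧ x i ∈ M w ∧ x j ∈ M w
  · left
    obtain ⟨w₀, i, j, hij, hi, hj⟩ := h2
    have third : ∀ a b : Fin 3, a ≠ i → a ≠ j → b ≠ i → b ≠ j → a = b := by
      clear * - hij; revert i j; decide
    have hne : ∀ w, w ≠ w₀ → ∀ a, x a ∈ M w → a ≠ i ∧ a ≠ j := by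
      intro w hw a ha
      constructor
      · rintro rfl; exact hw (hM.2.1 _ _ _ ha hi)
      · rintro rfl; exact hw (hM.2.1 _ _ _ ha hj)
    refine fin w₀ ⟨i, hi⟩ ?_ ?_
    · intro w hw a b ha hb
      rw [third a b (hne w hw a ha).1 (hne w hw a ha).2 (hne w hw b hb).1 (hne w hw b hb).2]
    · intro w₁ w₂ hw₁ hw₂ hw a b ha hb
      have := third a b (hne _ hw₁ a ha).1 (hne _ hw₁ a ha).2 (hne _ hw₂ b hb).1 (hne _ hw₂ b hb).2
      subst this
      exact hw.ne (hM.2.1 _ _ _ ha hb)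
  push Not at h2
  by_cases h3 : ∃ k, ∀ w, x k ∉ M w
  · left
    obtain ⟨k, hk⟩ := h3
    obtain ⟨w₀, i, hi⟩ := hno
    have hik : i ≠ k := by rintro rfl; exact hk _ hi
    have third : ∀ a b : Fin 3, a ≠ i → a ≠ k → b ≠ i → b ≠ k → a = b := by
      clear * - hik; revert i k; decide
    have hne : ∀ w, w ≠ w₀ → ∀ a, x a ∈ M w → a ≠ i ∧ a ≠ k := by
      intro w hw a ha
      constructor
      · rintro rfl; exact hw (hM.2.1 _ _ _ ha hi)
      · rintro rfl; exact hk _ ha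
    refine fin w₀ ⟨i, hi⟩ ?_ ?_
    · intro w hw a b ha hb
      rw [third a b (hne w hw a ha).1 (hne w hw a ha).2 (hne w hw b hb).1 (hne w hw b hb).2]
    · intro w₁ w₂ hw₁ hw₂ hw a b ha hb
      have := third a b (hne _ hw₁ a ha).1 (hne _ hw₁ a ha).2 (hne _ hw₂ b hb).1 (hne _ hw₂ b hb).2
      subst this
      exact hw.ne (hM.2.1 _ _ _ ha hb)
  push Not at h3
  choose e he using h3
  right
  refine ⟨e, ?_, he⟩
  intro i j hij
  by_contra hne
  exact h2 (e i) i j hne (he i) (hij ▸ he j)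

lemma K33_nonadj (e : Fin 3 → Fin 3 ⊕ Fin 3) :
    ∃ k : Fin 3, ∀ i j, i ≠ k → j ≠ k → ¬ K33.Adj (e i) (e j) := by
  have : ∀ b : Fin 3 → Bool, ∃ k : Fin 3, ∀ i j, i ≠ k → j ≠ k → b i = b j := by decide
  obtain ⟨k, hk⟩ := this (fun i => (e i).isLeft)
  refine ⟨k, fun i j hi hj h => ?_⟩
  have := hk i j hi hj
  rw [K33_adj] at h
  rcases h1 : e i with a | a <;> rcases h2 : e j with b | b <;> simp_all

lemma fin5_rest : ∀ e : Fin 3 → Fin 5, Function.Injective e →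
    ∃ d d', d ≠ d' ∧ (∀ i, e i ≠ d) ∧ ∀ i, e i ≠ d' := by
  intro e _
  have h : ∀ a b c : Fin 5, ∃ d d', d ≠ d' ∧ (a ≠ d ∧ b ≠ d ∧ c ≠ d) ∧ a ≠ d' ∧ b ≠ d' ∧ c ≠ d' := by
    set_option maxRecDepth 10000 in decide
  obtain ⟨d, d', h1, ⟨h2, h3, h4⟩, h5, h6, h7⟩ := h (e 0) (e 1) (e 2)
  refine ⟨d, d', h1, ?_, ?_⟩ <;> intro i <;> fin_cases i <;> assumption

lemma ym_of_np {x : Fin 3 → V} {B W' : Set V}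
    (h : NP (addTri G (Set.range x)) B) (hW : CC G W')
    (hWB : ∀ v ∈ W', v ∉ B) (hx : ∀ i, ∃ v ∈ W', G.Adj (x i) v) :
    YM K5 G B W' ∨ YM K33 G B W' := by
  rcases h with ⟨M, hM, hMB⟩ | ⟨M, hM, hMB⟩
  · rcases ym_or hM hMB hW hWB hx with h | ⟨e, he, hxe⟩
    · exact Or.inl h
    right
    obtain ⟨d, d', hdd, hd, hd'⟩ := fin5_rest e he
    have xin : ∀ i w, x i ∈ M w → w = e i := fun i w hw => hM.2.1 _ _ _ hw (hxe i)
    have hG1 : ∀ w, CC G (M w) := fun w => cc_mono (hM.1 w) fun a ha b hb hab => by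
      rw [addTri_adj] at hab
      rcases hab with hab | ⟨hne, ⟨j, rfl⟩, ⟨k, rfl⟩⟩
      · exact hab
      · have := he ((xin j w ha).symm.trans (xin k w hb))
        exact absurd (congrArg x this) hne
    have hG2 : ∀ i w, (∀ j, e j ≠ w) → ∃ a ∈ M (e i), ∃ b ∈ M w, G.Adj a b := by
      intro i w hw
      obtain ⟨a, ha, b, hb, hab⟩ := hM.2.2 (e i) w (hw i)
      refine ⟨a, ha, b, hb, ?_⟩
      rw [addTri_adj] at hab
      rcases hab with hab | ⟨hne, ⟨j, rfl⟩, ⟨k, rfl⟩⟩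
      · exact hab
      · exact absurd (xin k w hb).symm (hw k)
    have hG3 : ∀ i, ∃ a ∈ M (e i), ∃ b ∈ W', G.Adj a b := fun i => by
      obtain ⟨v, hv, h⟩ := hx i
      exact ⟨x i, hxe i, v, hv, h⟩
    have hdis : ∀ w v, v ∈ M w → v ∉ W' := fun w v h h' => hWB v h' (hMB _ h)
    let M' : Fin 3 ⊕ Fin 3 → Set V := Sum.elim (fun i => M (e i)) ![W', M d, M d']
    have hcross : ∀ i j, ∃ a ∈ M' (Sum.inl i), ∃ b ∈ M' (Sum.inr j), G.Adj a b := by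
      intro i j
      fin_cases j
      · exact hG3 i
      · exact hG2 i d hd
      · exact hG2 i d' hd'
    refine ⟨M', ⟨?_, ?_, ?_⟩, ?_, Or.inl ⟨Sum.inr 0, subset_rfl⟩⟩
    · rintro (i | j)
      · exact hG1 _
      · fin_cases j
        · exact hW
        · exact hG1 _
        · exact hG1 _
    · have mm : ∀ w w' v, v ∈ M w → v ∈ M w' → w ≠ w' → False := fun w w' v h h' hne =>
        hne (hM.2.1 _ _ v h h')
      have cr : ∀ i j v, v ∈ M' (Sum.inl i) → v ∈ M' (Sum.inr j) → False := by
        intro i j v hv hv'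
        fin_cases j
        · exact hdis _ _ hv hv'
        · exact mm _ _ _ hv hv' (hd i)
        · exact mm _ _ _ hv hv' (hd' i)
      rintro (i | i) (j | j) v hv hv'
      · exact congrArg _ (he (hM.2.1 _ _ v hv hv'))
      · exact (cr _ _ _ hv hv').elim
      · exact (cr _ _ _ hv' hv).elim
      · fin_cases i <;> fin_cases j <;> first
          | rfl
          | exact (hdis _ _ hv hv').elim
          | exact (hdis _ _ hv' hv).elim
          | exact (mm _ _ _ hv hv' hdd).elim
          | exact (mm _ _ _ hv' hv hdd).elim
    · rintro (i | i) (j | j) hw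
      · simp [K33_adj] at hw
      · exact hcross i j
      · obtain ⟨a, ha, b, hb, hab⟩ := hcross j i
        exact ⟨b, hb, a, ha, hab.symm⟩
      · simp [K33_adj] at hw
    · rintro (i | j)
      · exact (hMB _).trans Set.subset_union_left
      · fin_cases j
        · exact Set.subset_union_right
        · exact (hMB _).trans Set.subset_union_left
        · exact (hMB _).trans Set.subset_union_left
  · right
    rcases ym_or hM hMB hW hWB hx with h | ⟨e, he, hxe⟩
    · exact h
    have xin : ∀ i w, x i ∈ M w → w = e i := fun i w hw => hM.2.1 _ _ _ hw (hxe i)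
    obtain ⟨k, hk⟩ := K33_nonadj e
    obtain ⟨M', a, b, c⟩ := y_insert hM hMB hW hWB hx (e k) ⟨k, hxe k⟩ (by
      intro w hw i j hi hj
      exact congrArg x (he ((xin i w hi).symm.trans (xin j w hj)))) (by
      intro w₁ w₂ h1 h2 hw i j hi hj
      obtain rfl := xin _ _ hi
      obtain rfl := xin _ _ hj
      exact hk i j (fun h => h1 (h ▸ rfl)) (fun h => h2 (h ▸ rfl)) hw)
    exact ⟨M', a, b, Or.inl ⟨_, c⟩⟩
end


section
variable {V : Type*} {G F : SimpleGraph V}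

lemma rt_minor {W : Type*} {K : SimpleGraph W} {x : Fin 3 → V} {C : Fin 3 → Set V} {S : Set V}
    (hK : MIn K (addTri F (Set.range x)) S) (hxC : ∀ i, x i ∈ C i) (hC : ∀ i, CC F (C i))
    (hCS : ∀ i, ∀ v ∈ C i, v ∈ S → v = x i) (hdisj : ∀ i j v, v ∈ C i → v ∈ C j → i = j)
    (hadj : ∀ i j, i ≠ j → ∃ a ∈ C i, ∃ b ∈ C j, F.Adj a b) : MIn K F (S ∪ ⋃ i, C i) := by
  obtain ⟨M, hM, hMS⟩ := hK
  have mem : ∀ w v, (v ∈ M w ∪ ⋃ i ∈ {i | x i ∈ M w}, C i) ↔ (v ∈ M w ∨ ∃ i, x i ∈ M w ∧ v ∈ C i) := by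
    intro w v; simp
  refine ⟨fun w => M w ∪ ⋃ i ∈ {i | x i ∈ M w}, C i, ⟨?_, ?_, ?_⟩, ?_⟩
  · intro w
    obtain ⟨a, ha⟩ := (hM.1 w).1
    refine cc_of_base (Or.inl ha) fun P hP haP b hb => ?_
    have hsame : ∀ i, x i ∈ M w → ∀ c ∈ C i, ∀ d ∈ C i, c ∈ P → d ∈ P := by
      intro i hi c hc d hd
      exact cc_mem (hC i) (fun c hc d hd => hP c ((mem w c).2 (Or.inr ⟨i, hi, hc⟩)) d
        ((mem w d).2 (Or.inr ⟨i, hi, hd⟩))) hc hd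
    have hmove : ∀ i j, x i ∈ M w → x j ∈ M w → x i ∈ P → x j ∈ P := by
      intro i j hi hj hiP
      by_cases hij : i = j
      · subst hij; exact hiP
      obtain ⟨c, hc, d, hd, hcd⟩ := hadj i j hij
      have h1 := hsame i hi _ (hxC i) c hc hiP
      have h2 := (hP c ((mem w c).2 (Or.inr ⟨i, hi, hc⟩)) d
        ((mem w d).2 (Or.inr ⟨j, hj, hd⟩)) hcd).1 h1
      exact hsame j hj d hd _ (hxC j) h2
    have hMP : ∀ b ∈ M w, b ∈ P := fun b hb => by
      refine cc_mem (hM.1 w) ?_ ha hb haP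
      intro c hc d hd hcd
      rw [addTri_adj] at hcd
      rcases hcd with hcd | ⟨-, ⟨j, rfl⟩, ⟨k, rfl⟩⟩
      · exact hP c (Or.inl hc) d (Or.inl hd) hcd
      · exact ⟨hmove j k hc hd, hmove k j hd hc⟩
    rcases (mem w b).1 hb with hb | ⟨i, hi, hb⟩
    · exact hMP b hb
    · exact hsame i hi _ (hxC i) b hb (hMP _ hi)
  · intro w₁ w₂ v hv hv'
    rcases (mem _ _).1 hv with h | ⟨i, hi, h⟩ <;> rcases (mem _ _).1 hv' with k | ⟨j, hj, k⟩
    · exact hM.2.1 _ _ v h k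
    · rw [hCS j v k (hMS _ h)] at h; exact hM.2.1 _ _ _ h hj
    · rw [hCS i v h (hMS _ k)] at k; exact hM.2.1 _ _ _ hi k
    · obtain rfl := hdisj i j v h k
      exact hM.2.1 _ _ _ hi hj
  · intro w₁ w₂ hw
    obtain ⟨a, ha, b, hb, hab⟩ := hM.2.2 _ _ hw
    rw [addTri_adj] at hab
    rcases hab with hab | ⟨hne, ⟨j, rfl⟩, ⟨k, rfl⟩⟩
    · exact ⟨a, Or.inl ha, b, Or.inl hb, hab⟩
    · obtain ⟨c, hc, d, hd, hcd⟩ := hadj j k (fun h => hne (h ▸ rfl))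
      exact ⟨c, (mem _ _).2 (Or.inr ⟨j, ha, hc⟩), d, (mem _ _).2 (Or.inr ⟨k, hb, hd⟩), hcd⟩
  · intro w v hv
    rcases (mem _ _).1 hv with h | ⟨i, hi, h⟩
    · exact Or.inl (hMS _ h)
    · exact Or.inr (Set.mem_iUnion.2 ⟨i, h⟩)

lemma cc_shadow {B X S : Set V} (hB : ∀ a b, a ∉ B → b ∈ B → G.Adj a b → b ∈ X)
    (hS : CC G S) (hne : (S ∩ B).Nonempty) : CC (addTri G X) (S ∩ B) := by
  obtain ⟨a, ha⟩ := hne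
  refine ⟨⟨a, ha⟩, fun P hP c hc d hd hcP => ?_⟩
  have hG : ∀ c ∈ S ∩ B, ∀ d ∈ S ∩ B, G.Adj c d → c ∈ P → d ∈ P := fun c hc d hd hcd =>
    hP c hc d hd (addTri_adj.2 (Or.inl hcd))
  by_cases hX : ∃ e ∈ S ∩ B, e ∈ X ∧ e ∈ P
  · obtain ⟨e, he, heX, heP⟩ := hX
    have hXP : ∀ f ∈ S ∩ B, f ∈ X → f ∈ P := by
      intro f hf hfX
      by_cases hef : e = f
      · exact hef ▸ heP
      · exact hP e he f hf (addTri_adj.2 (Or.inr ⟨hef, heX, hfX⟩)) heP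
    have := hS.2 (P ∩ B ∪ Bᶜ) (by
      intro u hu v hv huv huP
      by_cases hvB : v ∈ B
      · rcases huP with huP | huP
        · exact Or.inl ⟨hG u ⟨hu, huP.2⟩ v ⟨hv, hvB⟩ huv huP.1, hvB⟩
        · exact Or.inl ⟨hXP v ⟨hv, hvB⟩ (hB u v huP hvB huv), hvB⟩
      · exact Or.inr hvB) c hc.1 d hd.1 (Or.inl ⟨hcP, hc.2⟩)
    rcases this with h | h
    · exact h.1
    · exact absurd hd.2 h
  · push Not at hX
    have := hS.2 (P ∩ B) (by
      intro u hu v hv huv huP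
      by_cases hvB : v ∈ B
      · exact ⟨hG u ⟨hu, huP.2⟩ v ⟨hv, hvB⟩ huv huP.1, hvB⟩
      · exact absurd huP.1 (hX u ⟨hu, huP.2⟩ (hB v u hvB huP.2 huv.symm))) c hc.1 d hd.1 ⟨hcP, hc.2⟩
    exact this.1

lemma third_fin (i : Fin 3) : ∃ j k : Fin 3, i ≠ j ∧ i ≠ k ∧ j ≠ k := by
  revert i; decide

lemma np_of_three [Finite V] {x : Fin 3 → V} {B : Set V}
    (hxF : ∀ i j, i ≠ j → F.Adj (x i) (x j)) (hR : CC F (B \ Set.range x)) :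
    ∀ n : ℕ, ∀ (b d : Set V) (c : Fin 3 → Set V), ((b ∪ d)ᶜ).ncard = n →
      CC F b → CC F d → b ⊆ B \ Set.range x → d ⊆ B \ Set.range x → (∀ v ∈ b, v ∉ d) →
      (∀ i, CC F (c i)) → (∀ i, c i ⊆ B) → (∀ i j v, v ∈ c i → v ∈ c j → i = j) →
      (∀ i, ∀ v ∈ c i, v ∉ b) → (∀ i, ∀ v ∈ c i, v ∉ d) → (∀ i, x i ∈ c i) →
      (∀ i, ∃ u ∈ b, ∃ v ∈ c i, F.Adj u v) → (∀ i, ∃ u ∈ d, ∃ v ∈ c i, F.Adj u v) → NP F B := by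
  intro n
  induction n using Nat.strong_induction_on with
  | _ n ih =>
  intro b d c hn hb hd hbR hdR hbd hc hcB hcc hcb hcd hxc hbc hdc
  by_cases hedge : ∃ u ∈ b, ∃ v ∈ d, F.Adj u v
  · -- K5
    left
    refine ⟨Fin.cons b (Fin.cons d c), ⟨?_, ?_, ?_⟩, ?_⟩
    · intro w
      refine Fin.cases hb (fun w => Fin.cases hd hc w) w
    · intro w w' v
      refine Fin.cases ?_ (fun w => Fin.cases ?_ (fun w => ?_) w) w <;>
      refine Fin.cases ?_ (fun w' => Fin.cases ?_ (fun w' => ?_) w') w' <;>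
      simp only [Fin.cons_zero, Fin.cons_succ] <;> intro h h'
      all_goals first
        | trivial
        | rfl
        | exact (hbd v h h').elim
        | exact (hbd v h' h).elim
        | exact (hcb _ v h h').elim
        | exact (hcb _ v h' h).elim
        | exact (hcd _ v h h').elim
        | exact (hcd _ v h' h).elim
        | rw [hcc _ _ v h h']
    · have sym : ∀ S T : Set V, (∃ u ∈ S, ∃ v ∈ T, F.Adj u v) → ∃ u ∈ T, ∃ v ∈ S, F.Adj u v := by
        rintro S T ⟨u, hu, v, hv, h⟩; exact ⟨v, hv, u, hu, h.symm⟩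
      intro w w'
      refine Fin.cases ?_ (fun w => Fin.cases ?_ (fun w => ?_) w) w <;>
      refine Fin.cases ?_ (fun w' => Fin.cases ?_ (fun w' => ?_) w') w' <;>
      simp only [Fin.cons_zero, Fin.cons_succ] <;> intro h
      · exact absurd rfl h.ne
      · exact hedge
      · exact hbc _
      · exact sym _ _ hedge
      · exact absurd rfl h.ne
      · exact hdc _
      · exact sym _ _ (hbc _)
      · exact sym _ _ (hdc _)
      · exact ⟨_, hxc _, _, hxc _, hxF _ _ (fun e => h.ne (by rw [e]))⟩
    · intro w
      refine Fin.cases (hbR.trans Set.diff_subset) (fun w => Fin.cases (hdR.trans Set.diff_subset) hcB w) w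
  push Not at hedge
  obtain ⟨b0, hb0⟩ := hb.1
  obtain ⟨d0, hd0⟩ := hd.1
  obtain ⟨u, huR, m, hmR, hub, hmb, hum⟩ := cc_edge hR b (hbR hb0) (hdR hd0) hb0
    (fun h => hbd d0 h hd0)
  have hmd : m ∉ d := fun h => hedge u hub m h hum
  have hlt : ∀ b' : Set V, b ⊆ b' → m ∈ b' → ((b' ∪ d)ᶜ).ncard < n := by
    intro b' hbb hmb'
    rw [← hn]
    refine Set.ncard_lt_ncard ?_ (Set.toFinite _)
    refine (Set.ssubset_iff_of_subset ?_).2 ⟨m, ?_, ?_⟩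
    · exact Set.compl_subset_compl.2 (Set.union_subset_union_left _ hbb)
    · rintro (h | h)
      · exact hmb h
      · exact hmd h
    · exact fun h => h (Or.inl hmb')
  by_cases hmc : ∃ i, m ∈ c i
  swap
  · push Not at hmc
    refine ih _ (hlt (insert m b) (Set.subset_insert _ _) (Set.mem_insert _ _)) (insert m b) d c rfl
      (cc_insert hb hub hum) hd (Set.insert_subset hmR hbR) hdR ?_ hc hcB hcc ?_ hcd hxc ?_ hdc
    · rintro v (rfl | hv)
      · exact hmd
      · exact hbd v hv
    · rintro i v hv (rfl | hv')
      · exact hmc i hv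
      · exact hcb i v hv hv'
    · intro i
      obtain ⟨u, hu, v, hv, h⟩ := hbc i
      exact ⟨u, Or.inr hu, v, hv, h⟩
  obtain ⟨i, hmi⟩ := hmc
  have hmx : m ∈ c i \ {x i} := ⟨hmi, fun h => hmR.2 ⟨i, h.symm⟩⟩
  set Q := cpt F (c i \ {x i}) m with hQ
  have hQs : Q ⊆ c i \ {x i} := cmp_subset hmx
  have hQc : CC F Q := cmp_cc m
  have hmQ : m ∈ Q := mem_cmp_self m
  have hxQ : x i ∉ Q := fun h => (hQs h).2 rfl
  have hout : ∀ e ∈ c i, e ∉ Q → ∀ q ∈ Q, F.Adj q e → e = x i := by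
    intro e he heQ q hq hqe
    by_contra hne
    exact heQ (cmp_closed hq hqe ⟨he, hne⟩)
  obtain ⟨q, hqc, e, hec, hqQ, heQ, hqe⟩ := cc_edge (hc i) Q hmi (hxc i) hmQ hxQ
  have hex := hout e hec heQ q hqQ hqe
  subst hex
  by_cases hQd : ∃ u ∈ d, ∃ v ∈ Q, F.Adj u v
  · -- K33
    right
    obtain ⟨j, k, hij, hik, hjk⟩ := third_fin i
    let L : Fin 3 → Set V := ![b, d, {x i}]
    let R : Fin 3 → Set V := ![Q, c j, c k]
    have hLR : ∀ s t, ∃ u ∈ L s, ∃ v ∈ R t, F.Adj u v := by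
      intro s t
      fin_cases s <;> fin_cases t
      · exact ⟨u, hub, m, hmQ, hum⟩
      · exact hbc j
      · exact hbc k
      · exact hQd
      · exact hdc j
      · exact hdc k
      · exact ⟨x i, rfl, q, hqQ, hqe.symm⟩
      · exact ⟨x i, rfl, x j, hxc j, hxF _ _ hij⟩
      · exact ⟨x i, rfl, x k, hxc k, hxF _ _ hik⟩
    have hLRd : ∀ s t v, v ∈ L s → v ∈ R t → False := by
      intro s t v hs ht
      fin_cases s <;> fin_cases t
      · exact hcb i v (hQs ht).1 hs
      · exact hcb j v ht hs
      · exact hcb k v ht hs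
      · exact hcd i v (hQs ht).1 hs
      · exact hcd j v ht hs
      · exact hcd k v ht hs
      · exact hxQ ((show v = x i from hs) ▸ ht)
      · exact hij (hcc _ _ v ((show v = x i from hs) ▸ hxc i) ht)
      · exact hik (hcc _ _ v ((show v = x i from hs) ▸ hxc i) ht)
    have hxb : x i ∉ b := hcb i _ (hxc i)
    have hxd : x i ∉ d := hcd i _ (hxc i)
    have hLd : ∀ s t v, v ∈ L s → v ∈ L t → s = t := by
      intro s t v hs ht
      fin_cases s <;> fin_cases t <;> first
        | rfl
        | exact (hbd v hs ht).elim
        | exact (hbd v ht hs).elim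
        | exact (hxb ((show v = x i from hs) ▸ ht)).elim
        | exact (hxb ((show v = x i from ht) ▸ hs)).elim
        | exact (hxd ((show v = x i from hs) ▸ ht)).elim
        | exact (hxd ((show v = x i from ht) ▸ hs)).elim
    have hRd : ∀ s t v, v ∈ R s → v ∈ R t → s = t := by
      intro s t v hs ht
      fin_cases s <;> fin_cases t <;> first
        | rfl
        | exact (hij (hcc _ _ v (hQs hs).1 ht)).elim
        | exact (hij (hcc _ _ v (hQs ht).1 hs)).elim
        | exact (hik (hcc _ _ v (hQs hs).1 ht)).elim
        | exact (hik (hcc _ _ v (hQs ht).1 hs)).elim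
        | exact (hjk (hcc _ _ v hs ht)).elim
        | exact (hjk (hcc _ _ v ht hs)).elim
    refine ⟨Sum.elim L R, ⟨?_, ?_, ?_⟩, ?_⟩
    · rintro (s | s)
      · fin_cases s
        · exact hb
        · exact hd
        · exact cc_singleton _
      · fin_cases s
        · exact hQc
        · exact hc j
        · exact hc k
    · rintro (s | s) (t | t) v hs ht
      · exact congrArg _ (hLd s t v hs ht)
      · exact (hLRd s t v hs ht).elim
      · exact (hLRd t s v ht hs).elim
      · exact congrArg _ (hRd s t v hs ht)
    · rintro (s | s) (t | t) h
      · simp [K33_adj] at h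
      · exact hLR s t
      · obtain ⟨u, hu, v, hv, h⟩ := hLR t s
        exact ⟨v, hv, u, hu, h.symm⟩
      · simp [K33_adj] at h
    · rintro (s | s)
      · fin_cases s
        · exact hbR.trans Set.diff_subset
        · exact hdR.trans Set.diff_subset
        · exact Set.singleton_subset_iff.2 (hcB i (hxc i))
      · fin_cases s
        · exact (hQs.trans Set.diff_subset).trans (hcB i)
        · exact hcB j
        · exact hcB k
  push Not at hQd
  -- absorb Q into b
  have hsub : ∀ j, Function.update c i (c i \ Q) j ⊆ c j := by
    intro j
    by_cases h : j = i
    · subst h; rw [Function.update_self]; exact Set.diff_subset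
    · rw [Function.update_of_ne h]
  have hni : ∀ j, j ≠ i → ∀ v ∈ c j, v ∉ Q := fun j hj v hv hvQ => hj (hcc _ _ v hv (hQs hvQ).1)
  have hmem : ∀ j v, v ∈ c j → v ∉ Q → v ∈ Function.update c i (c i \ Q) j := by
    intro j v hv hvQ
    by_cases h : j = i
    · subst h; rw [Function.update_self]; exact ⟨hv, hvQ⟩
    · rw [Function.update_of_ne h]; exact hv
  have hnQ : ∀ j v, v ∈ Function.update c i (c i \ Q) j → v ∉ Q := by
    intro j v hv
    by_cases h : j = i
    · subst h; rw [Function.update_self] at hv; exact hv.2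
    · rw [Function.update_of_ne h] at hv; exact hni j h v hv
  refine ih _ (hlt (b ∪ Q) Set.subset_union_left (Or.inr hmQ)) (b ∪ Q) d
    (Function.update c i (c i \ Q)) rfl
      (cc_union hb hQc hub hmQ (Or.inr hum)) hd ?_ hdR ?_ ?_ (fun j => (hsub j).trans (hcB j))
      (fun j k v h h' => hcc j k v (hsub j h) (hsub k h')) ?_
      (fun j v h => hcd j v (hsub j h)) ?_ ?_ ?_
  · refine Set.union_subset hbR fun v hv => ⟨hcB i (hQs hv).1, ?_⟩
    rintro ⟨j, rfl⟩
    by_cases h : j = i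
    · exact hxQ (h ▸ hv)
    · exact hni j h _ (hxc j) hv
  · rintro v (hv | hv)
    · exact hbd v hv
    · exact hcd i v (hQs hv).1
  · intro j
    by_cases h : j = i
    · subst h
      rw [Function.update_self]
      refine cc_of_base (a := x j) ⟨hxc j, hxQ⟩ fun P hP hxP e he => ?_
      have := cc_mem (hc j) (P := P ∪ Q) (by
        have key : ∀ u ∈ c j, ∀ v ∈ c j, F.Adj u v → u ∈ P ∪ Q → v ∈ P ∪ Q := by
          intro u hu v hv huv huP
          by_cases hvQ : v ∈ Q
          · exact Or.inr hvQ
          · by_cases huQ : u ∈ Q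
            · rw [hout v hv hvQ u huQ huv]; exact Or.inl hxP
            · exact Or.inl ((hP u ⟨hu, huQ⟩ v ⟨hv, hvQ⟩ huv).1 (huP.resolve_right huQ))
        exact fun u hu v hv huv => ⟨key u hu v hv huv, key v hv u hu huv.symm⟩) (hxc j) he.1 (Or.inl hxP)
      exact this.resolve_right he.2
    · rw [Function.update_of_ne h]; exact hc j
  · rintro j v hv (h | h)
    · exact hcb j v (hsub j hv) h
    · exact hnQ j v hv h
  · intro j
    refine hmem j _ (hxc j) ?_
    by_cases h : j = i
    · exact h ▸ hxQ
    · exact hni j h _ (hxc j)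
  · intro j
    by_cases h : j = i
    · subst h
      exact ⟨q, Or.inr hqQ, x j, hmem j _ (hxc j) hxQ, hqe⟩
    · obtain ⟨u, hu, v, hv, huv⟩ := hbc j
      exact ⟨u, Or.inl hu, v, hmem j v hv (hni j h v hv), huv⟩
  · intro j
    obtain ⟨u, hu, v, hv, huv⟩ := hdc j
    exact ⟨u, hu, v, hmem j v hv (fun h => hQd u hu v h huv), huv⟩

end


section
variable {V : Type*} {G F : SimpleGraph V}

lemma meetX {A B S : Set V} {x : Fin 3 → V}
    (hx : ∀ v, v ∈ Set.range x ↔ v ∈ A ∧ v ∈ B)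
    (hE : ∀ a b, G.Adj a b → (a ∈ A ∧ b ∈ A) ∨ (a ∈ B ∧ b ∈ B)) (hS : CC G S)
    (ha : ∃ a ∈ S, a ∈ A) (hb : ∃ b ∈ S, b ∈ B) : ∃ i, x i ∈ S := by
  obtain ⟨a, haS, haA⟩ := ha
  obtain ⟨b, hbS, hbB⟩ := hb
  by_cases haB : a ∈ B
  · obtain ⟨i, rfl⟩ := (hx a).2 ⟨haA, haB⟩
    exact ⟨i, haS⟩
  · obtain ⟨c, hc, d, hd, hcB, hdB, hcd⟩ := cc_edge hS B hbS haS hbB haB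
    rcases hE c d hcd with h | h
    · obtain ⟨i, rfl⟩ := (hx c).2 ⟨h.1, hcB⟩
      exact ⟨i, hc⟩
    · exact absurd h.2 hdB

lemma side_all {W : Type*} {K : SimpleGraph W} {M : W → Set V} {A B : Set V} {x : Fin 3 → V}
    (hx : ∀ v, v ∈ Set.range x ↔ v ∈ A ∧ v ∈ B)
    (hE : ∀ a b, G.Adj a b → (a ∈ A ∧ b ∈ A) ∨ (a ∈ B ∧ b ∈ B)) (hM : Mdl K G M)
    (h : ∀ w, ∃ b ∈ M w, b ∈ B) : MIn K (addTri G (Set.range x)) B := by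
  refine ⟨fun w => M w ∩ B, ⟨fun w => cc_shadow ?_ (hM.1 w) (h w), ?_, ?_⟩, fun w => Set.inter_subset_right⟩
  · intro a b ha hb hab
    rcases hE a b hab with h | h
    · exact (hx b).2 ⟨h.2, hb⟩
    · exact absurd h.1 ha
  · intro w₁ w₂ v h1 h2
    exact hM.2.1 _ _ v h1.1 h2.1
  · intro w₁ w₂ hw
    obtain ⟨a, ha, b, hb, hab⟩ := hM.2.2 _ _ hw
    rcases hE a b hab with hh | hh
    · obtain ⟨i, hi⟩ := meetX hx hE (hM.1 w₁) ⟨a, ha, hh.1⟩ (h w₁)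
      obtain ⟨j, hj⟩ := meetX hx hE (hM.1 w₂) ⟨b, hb, hh.2⟩ (h w₂)
      refine ⟨x i, ⟨hi, ((hx _).1 ⟨i, rfl⟩).2⟩, x j, ⟨hj, ((hx _).1 ⟨j, rfl⟩).2⟩, addTri_adj.2 (Or.inr ⟨?_, ⟨i, rfl⟩, ⟨j, rfl⟩⟩)⟩
      intro e
      rw [← e] at hj
      exact hw.ne (hM.2.1 _ _ _ hi hj)
    · exact ⟨a, ⟨ha, hh.1⟩, b, ⟨hb, hh.2⟩, addTri_adj.2 (Or.inl hab)⟩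

lemma three_side [Finite V] {M : Fin 3 ⊕ Fin 3 → Set V} {A B : Set V} {x : Fin 3 → V}
    (hAB : ∀ v, v ∈ A ∨ v ∈ B)
    (hx : ∀ v, v ∈ Set.range x ↔ v ∈ A ∧ v ∈ B) (hxi : Function.Injective x)
    (hE : ∀ a b, G.Adj a b → (a ∈ A ∧ b ∈ A) ∨ (a ∈ B ∧ b ∈ B)) (hM : Mdl K33 G M)
    (hB : CC G (B \ A)) {σ : Fin 3 → Fin 3} (hσ : Function.Injective σ)
    (hxσ : ∀ i, x (σ i) ∈ M (Sum.inr i)) {j k : Fin 3} (hjk : j ≠ k)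
    (hj : ∀ v ∈ M (Sum.inl j), v ∉ A) (hk : ∀ v ∈ M (Sum.inl k), v ∉ A) :
    NP (addTri G (Set.range x)) B := by
  have hle : ∀ a b, G.Adj a b → (addTri G (Set.range x)).Adj a b := fun a b h => addTri_adj.2 (Or.inl h)
  have hr : Set.range (x ∘ σ) = Set.range x :=
    (Finite.injective_iff_surjective.1 hσ).range_comp x
  have hBR : B \ Set.range (x ∘ σ) = B \ A := by
    rw [hr]; ext v; simp only [Set.mem_diff, hx]; tauto
  have hxB : ∀ i, x i ∈ B := fun i => ((hx _).1 ⟨i, rfl⟩).2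
  have sub : ∀ l, (∀ v ∈ M (Sum.inl l), v ∉ A) → M (Sum.inl l) ⊆ B \ A := fun l hl v hv =>
    ⟨(hAB v).resolve_left (hl v hv), hl v hv⟩
  have hadj : ∀ l, (∀ v ∈ M (Sum.inl l), v ∉ A) → ∀ i, ∃ u ∈ M (Sum.inl l), ∃ v ∈ M (Sum.inr i) ∩ B,
      (addTri G (Set.range x)).Adj u v := by
    intro l hl i
    obtain ⟨a, ha, b, hb, hab⟩ := hM.2.2 (Sum.inl l) (Sum.inr i) (by simp [K33_adj])
    refine ⟨a, ha, b, ⟨hb, ?_⟩, hle _ _ hab⟩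
    rcases hE a b hab with h | h
    · exact absurd h.1 (hl a ha)
    · exact h.2
  refine np_of_three (x := x ∘ σ) (F := addTri G (Set.range x)) (B := B) ?_ ?_ _ (M (Sum.inl j)) (M (Sum.inl k))
    (fun i => M (Sum.inr i) ∩ B) rfl (cc_mono (hM.1 _) fun a _ b _ => hle a b)
    (cc_mono (hM.1 _) fun a _ b _ => hle a b) ?_ ?_ ?_ ?_ (fun i => Set.inter_subset_right) ?_ ?_ ?_
    (fun i => ⟨hxσ i, hxB _⟩) (hadj j hj) (hadj k hk)
  · intro a b hab
    exact addTri_adj.2 (Or.inr ⟨fun e => hab (hσ (hxi e)), ⟨_, rfl⟩, ⟨_, rfl⟩⟩)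
  · rw [hBR]; exact cc_mono hB fun a _ b _ => hle a b
  · rw [hBR]; exact sub j hj
  · rw [hBR]; exact sub k hk
  · intro v h1 h2
    exact hjk (Sum.inl.inj (hM.2.1 _ _ v h1 h2))
  · intro i
    refine cc_shadow ?_ (hM.1 _) ⟨_, hxσ i, hxB _⟩
    intro a b ha hb hab
    rcases hE a b hab with h | h
    · exact (hx b).2 ⟨h.2, hb⟩
    · exact absurd h.1 ha
  · intro i l v h1 h2
    exact Sum.inr.inj (hM.2.1 _ _ v h1.1 h2.1)
  · intro i v h1 h2
    exact absurd (hM.2.1 _ _ v h1.1 h2) (by simp)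
  · intro i v h1 h2
    exact absurd (hM.2.1 _ _ v h1.1 h2) (by simp)

lemma np_split [Finite V] {A B : Set V} {x : Fin 3 → V}
    (hAB : ∀ v, v ∈ A ∨ v ∈ B)
    (hx : ∀ v, v ∈ Set.range x ↔ v ∈ A ∧ v ∈ B) (hxi : Function.Injective x)
    (hE : ∀ a b, G.Adj a b → (a ∈ A ∧ b ∈ A) ∨ (a ∈ B ∧ b ∈ B))
    (hA : CC G (A \ B)) (hB : CC G (B \ A)) (h : NP G Set.univ) :
    NP (addTri G (Set.range x)) B ∨ NP (addTri G (Set.range x)) A := by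
  have hx' : ∀ v, v ∈ Set.range x ↔ v ∈ B ∧ v ∈ A := fun v => (hx v).trans and_comm
  have hE' : ∀ a b, G.Adj a b → (a ∈ B ∧ b ∈ B) ∨ (a ∈ A ∧ b ∈ A) := fun a b h => (hE a b h).symm
  have key : ∀ {W : Type} (K : SimpleGraph W) (M : W → Set V), Mdl K G M →
      (MIn K (addTri G (Set.range x)) B ∨ MIn K (addTri G (Set.range x)) A) ∨
      ∃ w₁ w₂, w₁ ≠ w₂ ∧ ¬ K.Adj w₁ w₂ ∧ (∀ v ∈ M w₁, v ∉ B) ∧ (∀ v ∈ M w₂, v ∉ A) := by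
    intro W K M hM
    by_cases h1 : ∀ w, ∃ b ∈ M w, b ∈ B
    · exact Or.inl (Or.inl (side_all hx hE hM h1))
    by_cases h2 : ∀ w, ∃ b ∈ M w, b ∈ A
    · exact Or.inl (Or.inr (side_all hx' hE' hM h2))
    push Not at h1 h2
    obtain ⟨w₁, h1⟩ := h1
    obtain ⟨w₂, h2⟩ := h2
    refine Or.inr ⟨w₁, w₂, ?_, ?_, h1, h2⟩
    · rintro rfl
      obtain ⟨a, ha⟩ := (hM.1 w₁).1
      exact (hAB a).elim (h2 a ha) (h1 a ha)
    · intro hw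
      obtain ⟨a, ha, b, hb, hab⟩ := hM.2.2 _ _ hw
      rcases hE a b hab with h | h
      · exact h2 b hb h.2
      · exact h1 a ha h.1
  rcases h with ⟨M, hM, -⟩ | ⟨M, hM, -⟩
  · rcases key K5 M hM with h | ⟨w₁, w₂, h1, h2, -⟩
    · exact h.imp Or.inl Or.inl
    · exact absurd h1 (by simpa [K5] using h2)
  · rcases key K33 M hM with h | ⟨w₁, w₂, h1, h2, h3, h4⟩
    · exact h.imp Or.inr Or.inr
    obtain ⟨f, hf, hf0, hfa⟩ := K33_auto w₁
    have hfs : Function.Surjective f := Finite.injective_iff_surjective.1 hf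
    obtain ⟨w₂', rfl⟩ := hfs w₂
    have hN := hM.comp f hf hfa
    subst hf0
    have hw2 : ∃ j, w₂' = Sum.inl j := by
      rcases w₂' with j | j
      · exact ⟨j, rfl⟩
      · exact absurd (hfa (Sum.inl 0) (Sum.inr j) (by simp [K33_adj])) h2
    obtain ⟨j, rfl⟩ := hw2
    have hj0 : (0 : Fin 3) ≠ j := fun e => h1 (by rw [e])
    have hmeet : ∀ i, ∃ s, x s ∈ M (f (Sum.inr i)) := by
      intro i
      refine meetX hx hE (hN.1 (Sum.inr i)) ?_ ?_
      · obtain ⟨a, ha, b, hb, hab⟩ := hN.2.2 (Sum.inl 0) (Sum.inr i) (by simp [K33_adj])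
        rcases hE a b hab with h | h
        · exact ⟨b, hb, h.2⟩
        · exact absurd h.1 (h3 a ha)
      · obtain ⟨a, ha, b, hb, hab⟩ := hN.2.2 (Sum.inl j) (Sum.inr i) (by simp [K33_adj])
        rcases hE a b hab with h | h
        · exact absurd h.1 (h4 a ha)
        · exact ⟨b, hb, h.2⟩
    choose σ hσ using hmeet
    have hσi : Function.Injective σ := by
      intro i l e
      have := hσ i
      rw [e] at this
      exact Sum.inr.inj (hN.2.1 _ _ _ this (hσ l))
    have hσs : Function.Surjective σ := Finite.injective_iff_surjective.1 hσi
    obtain ⟨k, hk0, hkj⟩ : ∃ k : Fin 3, (0 : Fin 3) ≠ k ∧ j ≠ k := by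
      clear * -
      revert j; decide
    have hkX : ∀ s, x s ∉ M (f (Sum.inl k)) := by
      intro s hs
      obtain ⟨i, rfl⟩ := hσs s
      exact absurd (hN.2.1 _ _ _ hs (hσ i)) (by simp)
    by_cases hkA : ∃ a ∈ M (f (Sum.inl k)), a ∈ A
    · right
      refine three_side (fun v => (hAB v).symm) hx' hxi hE' hN hA hσi hσ hk0 h3 ?_
      intro v hv hvB
      obtain ⟨s, hs⟩ := meetX hx hE (hN.1 (Sum.inl k)) hkA ⟨v, hv, hvB⟩
      exact hkX s hs
    · left
      push Not at hkA
      exact three_side hAB hx hxi hE hN hB hσi hσ hkj h4 hkA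

end


section
variable {V : Type*} {G F : SimpleGraph V}

def Lk {V : Type*} (G : SimpleGraph V) (S T : Set V) : Prop := ∃ a ∈ S, ∃ b ∈ T, G.Adj a b

lemma Lk.symm {S T : Set V} (h : Lk G S T) : Lk G T S := by
  obtain ⟨a, ha, b, hb, h⟩ := h
  exact ⟨b, hb, a, ha, h.symm⟩

lemma Lk.mono {S T S' T' : Set V} (h : Lk G S T) (h1 : S ⊆ S') (h2 : T ⊆ T') : Lk G S' T' := by
  obtain ⟨a, ha, b, hb, h⟩ := h
  exact ⟨a, h1 ha, b, h2 hb, h⟩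

lemma prism_core {W : Type*} {K : SimpleGraph W} {x v : Fin 3 → V} {M : W → Set V} {w₀ : W}
    (hvi : Function.Injective v) (hvv : ∀ i j, i ≠ j → G.Adj (v i) (v j))
    (hvx : ∀ i, G.Adj (v i) (x i)) (hxv : ∀ i j, x i ≠ v j)
    (hN : ∀ i a, G.Adj (v i) a → a = x i ∨ ∃ j, a = v j)
    (ht : ∀ u, ¬ MIn K G {u}ᶜ) (hM : Mdl K G M) (hS : ∀ i, v i ∈ M w₀) :
    ∃ (T : Fin 3 → Set V) (π : Fin 3 → W), (∀ i, CC G (T i)) ∧ (∀ i, T i ⊆ M w₀) ∧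
      (∀ i j u, u ∈ T i → u ∈ T j → i = j) ∧ (∀ i j, i ≠ j → Lk G (T i) (T j)) ∧
      (∀ i, K.Adj w₀ (π i)) ∧ Function.Injective π ∧ (∀ i, Lk G (T i) (M (π i))) ∧
      (∀ w, K.Adj w₀ w → ∃ i, Lk G (T i) (M w)) := by
  classical
  set S' := M w₀ \ Set.range v with hS'
  set T : Fin 3 → Set V := fun i => {y | y = v i ∨ (x i ∈ S' ∧ y ∈ cpt G S' (x i))} with hT
  have hTS : ∀ i, T i ⊆ M w₀ := by
    rintro i y (rfl | ⟨h1, h2⟩)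
    · exact hS i
    · exact (cmp_subset h1 h2).1
  have hvT : ∀ i, v i ∈ T i := fun i => Or.inl rfl
  have hTv : ∀ i j, v j ∈ T i → j = i := by
    rintro i j (h | ⟨h1, h2⟩)
    · exact hvi h
    · exact absurd ⟨j, rfl⟩ (cmp_subset h1 h2).2
  have hTc : ∀ i, CC G (T i) := by
    intro i
    by_cases h : x i ∈ S'
    · have : T i = insert (v i) (cpt G S' (x i)) := by
        ext y; simp only [hT, Set.mem_setOf_eq, Set.mem_insert_iff]; tauto
      rw [this]
      exact cc_insert (cmp_cc _) (mem_cmp_self _) (hvx i).symm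
    · have : T i = {v i} := by
        ext y; simp only [hT, Set.mem_setOf_eq, Set.mem_singleton_iff]; tauto
      rw [this]; exact cc_singleton _
  have hTl : ∀ i j, i ≠ j → Lk G (T i) (T j) := fun i j h => ⟨v i, hvT i, v j, hvT j, hvv i j h⟩
  have hcov : ∀ u ∈ M w₀, ∃ i, u ∈ T i := by
    intro u hu
    have := (hM.1 w₀).2 {u | ∃ i, u ∈ T i} (by
      rintro a ha b hb hab ⟨i, hi⟩
      by_cases hbv : b ∈ Set.range v
      · obtain ⟨j, rfl⟩ := hbv; exact ⟨j, hvT j⟩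
      rcases hi with rfl | ⟨h1, h2⟩
      · rcases hN i b hab with rfl | ⟨j, rfl⟩
        · exact ⟨i, Or.inr ⟨⟨hb, hbv⟩, mem_cmp_self _⟩⟩
        · exact absurd ⟨j, rfl⟩ hbv
      · exact ⟨i, Or.inr ⟨h1, cmp_closed h2 hab ⟨hb, hbv⟩⟩⟩) (v 0) (hS 0) u hu ⟨0, hvT 0⟩
    exact this
  have hreach : ∀ w, K.Adj w₀ w → ∃ i, Lk G (T i) (M w) := by
    intro w hw
    obtain ⟨a, ha, b, hb, hab⟩ := hM.2.2 _ _ hw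
    obtain ⟨i, hi⟩ := hcov a ha
    exact ⟨i, a, hi, b, hb, hab⟩
  have hpriv : ∀ k, ∃ w, K.Adj w₀ w ∧ ∀ i, Lk G (T i) (M w) → i = k := by
    intro k
    obtain ⟨i, j, hki, hkj, hij⟩ := third_fin k
    by_contra hcon
    push Not at hcon
    refine ht (v k) ⟨fun w => if w = w₀ then T i ∪ T j else M w, ⟨?_, ?_, ?_⟩, ?_⟩
    · intro w
      dsimp only
      split_ifs with h
      · exact cc_union (hTc i) (hTc j) (hvT i) (hvT j) (Or.inr (hvv i j hij))
      · exact hM.1 w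
    · intro w₁ w₂ u
      have hsub : ∀ w, u ∈ (if w = w₀ then T i ∪ T j else M w) → u ∈ M w := by
        intro w hw
        split_ifs at hw with h
        · subst h; exact hw.elim (fun h => hTS i h) (fun h => hTS j h)
        · exact hw
      intro h1 h2
      exact hM.2.1 _ _ u (hsub _ h1) (hsub _ h2)
    · have key : ∀ w, K.Adj w₀ w → Lk G (T i ∪ T j) (M w) := by
        intro w hw
        obtain ⟨l, hl, hlk⟩ := hcon w hw
        have : l = i ∨ l = j := by
          clear * - hlk hki hkj hij
          revert l k i j; decide
        rcases this with rfl | rfl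
        · exact hl.mono Set.subset_union_left subset_rfl
        · exact hl.mono Set.subset_union_right subset_rfl
      intro w₁ w₂ hw
      dsimp only
      split_ifs with h1 h2 h2
      · subst h1 h2; exact absurd rfl hw.ne
      · subst h1; exact key _ hw
      · subst h2; exact (key _ hw.symm).symm
      · exact hM.2.2 _ _ hw
    · intro w u hu
      dsimp only at hu
      rintro rfl
      split_ifs at hu with h
      · rcases hu with h | h
        · exact hki (hTv _ _ h)
        · exact hkj (hTv _ _ h)
      · exact h (hM.2.1 _ _ _ hu (hS k))
  choose π hπ1 hπ2 using hpriv
  have hπ3 : ∀ i, Lk G (T i) (M (π i)) := by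
    intro i
    obtain ⟨j, hj⟩ := hreach _ (hπ1 i)
    have := hπ2 i j hj
    subst this; exact hj
  refine ⟨T, π, hTc, hTS, ?_, hTl, hπ1, ?_, hπ3, hreach⟩
  · intro i j u hi hj
    by_contra hij
    rcases hi with rfl | ⟨h1, h2⟩
    · exact hij (hTv _ _ hj)
    rcases hj with rfl | ⟨h3, h4⟩
    · exact (cmp_subset h1 h2).2 ⟨j, rfl⟩
    have e : cpt G S' (x i) = cpt G S' (x j) := by rw [← cmp_eq h1 h2, cmp_eq h3 h4]
    obtain ⟨a, ha, b, hb, hab⟩ := hπ3 i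
    rcases ha with rfl | ⟨-, ha⟩
    · have hb0 : b ∉ M w₀ := fun h => (hπ1 i).ne (hM.2.1 _ _ _ h hb)
      rcases hN i b hab with rfl | ⟨l, rfl⟩
      · exact hb0 h1.1
      · exact hb0 (hS l)
    · exact hij ((hπ2 i j ⟨a, Or.inr ⟨h3, e ▸ ha⟩, b, hb, hab⟩).symm)
  · intro i j e
    have := hπ3 i
    rw [e] at this
    exact hπ2 j i this

lemma prism_K33_aux {x v : Fin 3 → V} {M : Fin 3 ⊕ Fin 3 → Set V}
    (hvi : Function.Injective v) (hvv : ∀ i j, i ≠ j → G.Adj (v i) (v j))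
    (hvx : ∀ i, G.Adj (v i) (x i)) (hxv : ∀ i j, x i ≠ v j)
    (hN : ∀ i a, G.Adj (v i) a → a = x i ∨ ∃ j, a = v j)
    (ht : ∀ u, ¬ MIn K33 G {u}ᶜ) (hM : Mdl K33 G M) (hS : ∀ i, v i ∈ M (Sum.inl 0)) : IsMinor K33h G := by
  obtain ⟨T, π, h1, h2, h3, h4, h5, h6, h7, -⟩ := prism_core hvi hvv hvx hxv hN ht hM hS
  have hτ : ∀ i, ∃ j, π i = Sum.inr j := by
    intro i
    have := h5 i
    rcases h : π i with j | j
    · rw [h] at this; simp [K33_adj] at this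
    · exact ⟨j, rfl⟩
  choose τ hτ using hτ
  have hτi : Function.Injective τ := fun i j e => h6 (by rw [hτ, hτ, e])
  have hτs : Function.Surjective τ := Finite.injective_iff_surjective.1 hτi
  choose ρ hρ using hτs
  have hρi : Function.Injective ρ := fun i j e => by rw [← hρ i, e, hρ]
  have h8 : ∀ j, Lk G (T (ρ j)) (M (Sum.inr j)) := by
    intro j
    have := h7 (ρ j)
    rw [hτ, hρ] at this; exact this
  have hsub : ∀ a, (if a = Sum.inl 0 then T (ρ 2) else M a) ⊆ M a := by
    intro a
    split_ifs with h
    · subst h; exact h2 _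
    · rfl
  rw [isMinor_iff]
  refine ⟨Sum.elim (fun a => if a = Sum.inl 0 then T (ρ 2) else M a)
    (fun k : Fin 2 => T (ρ k.castSucc)), ?_, ?_, ?_⟩
  · rintro (a | k)
    · simp only [Sum.elim_inl]
      split_ifs
      · exact h1 _
      · exact hM.1 _
    · exact h1 _
  · have key : ∀ a (k : Fin 2) u, u ∈ (if a = Sum.inl 0 then T (ρ 2) else M a) → u ∈ T (ρ k.castSucc) → False := by
      intro a k u ha hk
      have : a = Sum.inl 0 := hM.2.1 _ _ u (hsub a ha) (h2 _ hk)
      subst this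
      rw [if_pos rfl] at ha
      have := hρi (h3 _ _ u ha hk)
      clear * - this
      revert k; decide
    rintro (a | k) (b | l) u ha hb
    · exact congrArg _ (hM.2.1 _ _ u (hsub a ha) (hsub b hb))
    · exact (key a l u ha hb).elim
    · exact (key b k u hb ha).elim
    · have := hρi (h3 _ _ u ha hb)
      rw [Fin.castSucc_inj] at this
      rw [this]
  · have half : ∀ a b : (Fin 3 ⊕ Fin 3) ⊕ Fin 2, a ≠ b → (match a, b with
    | .inl (.inl i), .inl (.inr j) => ¬(i = 0 ∧ (j = 0 ∨ j = 1))
    | .inl (.inr j), .inl (.inl i) => ¬(i = 0 ∧ (j = 0 ∨ j = 1))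
    | .inl x, .inr k =>
        (k = 0 ∧ (x = Sum.inl 0 ∨ x = Sum.inr 0)) ∨ (k = 1 ∧ (x = Sum.inl 0 ∨ x = Sum.inr 1))
    | .inr _, .inr _ => True
    | _, _ => False) → Lk G (Sum.elim (fun a => if a = Sum.inl 0 then T (ρ 2) else M a)
        (fun k : Fin 2 => T (ρ k.castSucc)) a) (Sum.elim (fun a => if a = Sum.inl 0 then T (ρ 2) else M a)
        (fun k : Fin 2 => T (ρ k.castSucc)) b) := by
      have hlr : ∀ i j : Fin 3, ¬(i = 0 ∧ (j = 0 ∨ j = 1)) →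
          Lk G (if (Sum.inl i : Fin 3 ⊕ Fin 3) = Sum.inl 0 then T (ρ 2) else M (Sum.inl i)) (M (Sum.inr j)) := by
        intro i j hij
        split_ifs with h
        · have hj : j = 2 := by
            have := Sum.inl.inj h
            clear * - this hij
            revert i j; decide
          subst hj; exact h8 2
        · exact hM.2.2 _ _ (by simp [K33_adj])
      have h02 : ∀ k : Fin 2, ρ 2 ≠ ρ k.castSucc := by
        intro k e
        have := hρi e
        clear * - this
        revert k; decide
      rintro ((i | j) | k) ((i' | j') | k') hne h
      · exact h.elim
      · simpa using hlr i j' h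
      · simp only [Sum.inl.injEq, reduceCtorEq, or_false] at h
        have hi : i = 0 := by tauto
        subst hi
        simpa using h4 _ _ (h02 k')
      · simpa using (hlr i' j h).symm
      · exact h.elim
      · simp only [Sum.inr.injEq, reduceCtorEq, false_or] at h
        rcases h with ⟨rfl, rfl⟩ | ⟨rfl, rfl⟩
        · simpa using (h8 0).symm
        · simpa using (h8 1).symm
      · exact h.elim
      · exact h.elim
      · exact h4 _ _ (fun e => hne (by rw [Fin.castSucc_injective _ (hρi e)]))
    intro a b h
    rw [K33h, SimpleGraph.fromRel_adj] at h
    rcases h with ⟨hne, h | h⟩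
    · exact half a b hne h
    · exact (half b a hne.symm h).symm

lemma prism_K33 {x v : Fin 3 → V} {M : Fin 3 ⊕ Fin 3 → Set V} {w₀ : Fin 3 ⊕ Fin 3}
    (hvi : Function.Injective v) (hvv : ∀ i j, i ≠ j → G.Adj (v i) (v j))
    (hvx : ∀ i, G.Adj (v i) (x i)) (hxv : ∀ i j, x i ≠ v j)
    (hN : ∀ i a, G.Adj (v i) a → a = x i ∨ ∃ j, a = v j)
    (ht : ∀ u, ¬ MIn K33 G {u}ᶜ) (hM : Mdl K33 G M) (hS : ∀ i, v i ∈ M w₀) : IsMinor K33h G := by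
  obtain ⟨f, hf, rfl, hfa⟩ := K33_auto w₀
  exact prism_K33_aux hvi hvv hvx hxv hN ht (hM.comp f hf hfa) hS

lemma prism_K5 {x v : Fin 3 → V} {M : Fin 5 → Set V} {w₀ : Fin 5}
    (hvi : Function.Injective v) (hvv : ∀ i j, i ≠ j → G.Adj (v i) (v j))
    (hvx : ∀ i, G.Adj (v i) (x i)) (hxv : ∀ i j, x i ≠ v j)
    (hN : ∀ i a, G.Adj (v i) a → a = x i ∨ ∃ j, a = v j)
    (ht : ∀ u, ¬ MIn K5 G {u}ᶜ) (hM : Mdl K5 G M) (hS : ∀ i, v i ∈ M w₀) : IsMinor K5h G := by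
  obtain ⟨T, π, h1, h2, h3, h4, h5, h6, h7, h8⟩ := prism_core hvi hvv hvx hxv hN ht hM hS
  obtain ⟨w₄, h40, h4π⟩ : ∃ w₄, w₀ ≠ w₄ ∧ ∀ i, π i ≠ w₄ := by
    obtain ⟨d, d', hdd, hd, hd'⟩ := fin5_rest π h6
    by_cases h : w₀ = d
    · exact ⟨d', fun e => hdd (h.symm.trans e), hd'⟩
    · exact ⟨d, h, hd⟩
  obtain ⟨i, hi⟩ := h8 w₄ (by simpa [K5] using h40)
  obtain ⟨j, k, hij, hik, hjk⟩ := third_fin i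
  let q : Fin 5 → Fin 5 := ![w₀, π j, π k, π i, w₄]
  have hπ0 : ∀ i, w₀ ≠ π i := fun i => (h5 i).ne
  have hq : Function.Injective q := by
    intro a b h
    have e1 := h6.ne hij
    have e2 := h6.ne hik
    have e3 := h6.ne hjk
    have e4 := hπ0 i
    have e5 := hπ0 j
    have e6 := hπ0 k
    have e7 := h4π i
    have e8 := h4π j
    have e9 := h4π k
    fin_cases a <;> fin_cases b <;> simp [q] at h ⊢ <;>
      first | exact e1 h | exact e2 h | exact e3 h | exact e4 h | exact e5 h | exact e6 h | exact e7 h | exact e8 h | exact e9 h | exact h40 h | exact e1 h.symm | exact e2 h.symm | exact e3 h.symm | exact e4 h.symm | exact e5 h.symm | exact e6 h.symm | exact e7 h.symm | exact e8 h.symm | exact e9 h.symm | exact h40 h.symm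
  let t : Fin 2 → Fin 3 := ![j, k]
  have hti : ∀ l, t l ≠ i := by
    intro l; fin_cases l
    · exact hij.symm
    · exact hik.symm
  have htt : ∀ l l', t l = t l' → l = l' := by
    intro l l' h
    fin_cases l <;> fin_cases l' <;> simp [t] at h ⊢
    · exact hjk h
    · exact hjk h.symm
  have hsub : ∀ a : Fin 5, (if a = 0 then T i else M (q a)) ⊆ M (q a) := by
    intro a
    split_ifs with h
    · subst h; exact h2 _
    · rfl
  rw [isMinor_iff]
  refine ⟨Sum.elim (fun a => if a = 0 then T i else M (q a)) (fun l : Fin 2 => T (t l)), ?_, ?_, ?_⟩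
  · rintro (a | l)
    · simp only [Sum.elim_inl]
      split_ifs
      · exact h1 _
      · exact hM.1 _
    · exact h1 _
  · have key : ∀ (a : Fin 5) (l : Fin 2) u, u ∈ (if a = 0 then T i else M (q a)) → u ∈ T (t l) → False := by
      intro a l u ha hl
      have : q a = q 0 := hM.2.1 _ _ u (hsub a ha) (h2 _ hl)
      have := hq this
      subst this
      rw [if_pos rfl] at ha
      exact hti l (h3 _ _ u hl ha)
    rintro (a | k) (b | l) u ha hb
    · exact congrArg _ (hq (hM.2.1 _ _ u (hsub a ha) (hsub b hb)))
    · exact (key a l u ha hb).elim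
    · exact (key b k u hb ha).elim
    · rw [htt _ _ (h3 _ _ u ha hb)]
  · have h0 : ∀ b : Fin 5, b ≠ 0 → b ≠ 1 → b ≠ 2 → Lk G (T i) (M (q b)) := by
      intro b
      fin_cases b
      · intro h; exact absurd rfl h
      · intro _ h; exact absurd rfl h
      · intro _ _ h; exact absurd rfl h
      · intro _ _ _; exact h7 i
      · intro _ _ _; exact hi
    have half : ∀ a b : Fin 5 ⊕ Fin 2, a ≠ b → (match a, b with
      | .inl i, .inl j =>
        i ≠ j ∧ ¬(i = 0 ∧ j = 1) ∧ ¬(i = 1 ∧ j = 0) ∧ ¬(i = 0 ∧ j = 2) ∧ ¬(i = 2 ∧ j = 0)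
      | .inl i, .inr k => (k = 0 ∧ (i = 0 ∨ i = 1)) ∨ (k = 1 ∧ (i = 0 ∨ i = 2))
      | .inr _, .inr _ => True
      | _, _ => False) → Lk G (Sum.elim (fun a => if a = 0 then T i else M (q a)) (fun l : Fin 2 => T (t l)) a)
        (Sum.elim (fun a => if a = 0 then T i else M (q a)) (fun l : Fin 2 => T (t l)) b) := by
      rintro (a | l) (b | l') hne h
      · simp only [Sum.elim_inl]
        have hab : a ≠ b := h.1
        split_ifs with ha hb hb
        · exact absurd (ha.trans hb.symm) hab
        · subst ha; exact h0 b hb (by tauto) (by tauto)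
        · subst hb; exact (h0 a ha (by tauto) (by tauto)).symm
        · exact hM.2.2 _ _ (by simpa [K5] using hq.ne hab)
      · simp only [Sum.elim_inl, Sum.elim_inr]
        by_cases ha : a = 0
        · rw [if_pos ha]; exact h4 _ _ (hti l').symm
        · rw [if_neg ha]
          rcases h with ⟨rfl, h⟩ | ⟨rfl, h⟩
          · have := h.resolve_left ha
            subst this
            exact (h7 j).symm
          · have := h.resolve_left ha
            subst this
            exact (h7 k).symm
      · exact h.elim
      · exact h4 _ _ (fun e => hne (by rw [htt _ _ e]))
    intro a b h
    rw [K5h, SimpleGraph.fromRel_adj] at h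
    rcases h with ⟨hne, h | h⟩
    · exact half a b hne h
    · exact (half b a hne.symm h).symm

lemma prism_contra {x v : Fin 3 → V} {B : Set V}
    (hvi : Function.Injective v) (hvv : ∀ i j, i ≠ j → G.Adj (v i) (v j))
    (hvx : ∀ i, G.Adj (v i) (x i)) (hxv : ∀ i j, x i ≠ v j)
    (hN : ∀ i a, G.Adj (v i) a → a = x i ∨ ∃ j, a = v j) (hvB : ∀ i, v i ∉ B)
    (ht : ∀ S, NP G S → ∀ u, u ∈ S) (h5 : ¬ IsMinor K5h G) (h33 : ¬ IsMinor K33h G)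
    (h : NP (addTri G (Set.range x)) B) : False := by
  have hcc : CC G (Set.range v) := by
    refine cc_of_base ⟨0, rfl⟩ fun P hP h0 b hb => ?_
    obtain ⟨i, rfl⟩ := hb
    by_cases hi : 0 = i
    · subst hi; exact h0
    · exact (hP _ ⟨0, rfl⟩ _ ⟨i, rfl⟩ (hvv 0 i hi)).1 h0
  rcases ym_of_np h hcc (by rintro _ ⟨i, rfl⟩; exact hvB i) (fun i => ⟨v i, ⟨i, rfl⟩, (hvx i).symm⟩) with h | h
  · obtain ⟨M, hM, -, ⟨w₀, h0⟩ | h0⟩ := h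
    · refine h5 (prism_K5 hvi hvv hvx hxv hN ?_ hM (fun i => h0 ⟨i, rfl⟩))
      intro u hu
      exact ht _ (Or.inl hu) u rfl
    · exact hvB 0 (ht B (Or.inl ⟨M, hM, h0⟩) _)
  · obtain ⟨M, hM, -, ⟨w₀, h0⟩ | h0⟩ := h
    · refine h33 (prism_K33 hvi hvv hvx hxv hN ?_ hM (fun i => h0 ⟨i, rfl⟩))
      intro u hu
      exact ht _ (Or.inr hu) u rfl
    · exact hvB 0 (ht B (Or.inr ⟨M, hM, h0⟩) _)

end


section
variable {V : Type*} {G F : SimpleGraph V}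

lemma path_lemma [Finite V] : ∀ (n : ℕ) (W : Set V) (u v : V), W.ncard = n → CC G W → u ∈ W → v ∈ W →
    u ≠ v → (∀ w ∈ W, CC G (W \ {w}) → w = u ∨ w = v) →
    ∃ (k : ℕ) (p : ℕ → V), 1 ≤ k ∧ p 0 = u ∧ p k = v ∧ (∀ w, w ∈ W ↔ ∃ i ≤ k, p i = w) ∧
      (∀ i j, i ≤ k → j ≤ k → p i = p j → i = j) ∧
      (∀ i j, i ≤ k → j ≤ k → (G.Adj (p i) (p j) ↔ j = i + 1 ∨ i = j + 1)) := by
  intro n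
  induction n with
  | zero =>
    intro W u v hn _ hu
    rw [Set.ncard_eq_zero (Set.toFinite _)] at hn
    subst hn; exact hu.elim
  | succ n ih =>
  intro W u v hn hW hu hv huv hnc
  have huc : CC G (W \ {u}) := by
    obtain ⟨w, hw, hwv, hwc⟩ := exists_noncut hW (cc_singleton v) (Set.singleton_subset_iff.2 hv)
      (fun e => huv (by rw [← e] at hu; exact hu))
    rcases hnc w hw hwc with rfl | rfl
    · exact hwc
    · exact absurd rfl hwv
  have hnb : ∃ c ∈ W, c ≠ u ∧ G.Adj u c := by
    obtain ⟨c, hc, d, hd, hcu, hdu, h⟩ := cc_edge hW {u} hu hv rfl (fun h => huv h.symm)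
    have : c = u := hcu
    subst this
    exact ⟨d, hd, hdu, h⟩
  obtain ⟨c, hc, hcu, hcadj⟩ := hnb
  by_cases hWv : W \ {u} = {v}
  · have hcv : c = v := by
      have : c ∈ W \ {u} := ⟨hc, hcu⟩
      rw [hWv] at this; exact this
    subst hcv
    have hmem : ∀ w, w ∈ W ↔ w = u ∨ w = c := by
      intro w
      constructor
      · intro hw
        by_cases h : w = u
        · exact Or.inl h
        · have : w ∈ W \ {u} := ⟨hw, h⟩
          rw [hWv] at this; exact Or.inr this
      · rintro (rfl | rfl) <;> assumption
    refine ⟨1, fun i => if i = 0 then u else c, le_rfl, by simp, by simp, ?_, ?_, ?_⟩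
    · intro w
      rw [hmem]
      constructor
      · rintro (rfl | rfl)
        · exact ⟨0, by simp, by simp⟩
        · exact ⟨1, by simp, by simp⟩
      · rintro ⟨i, hi, rfl⟩
        by_cases h : i = 0 <;> simp [h]
    · intro i j hi hj h
      interval_cases i <;> interval_cases j <;> simp_all
    · intro i j hi hj
      interval_cases i <;> interval_cases j <;> simp [hcadj, hcadj.symm]
  · have key : ∀ w ∈ W \ {u}, CC G ((W \ {u}) \ {w}) → w ≠ v → ∀ d ∈ W, G.Adj u d → d = w := by
      intro w hw hwc hwv d hd hud
      by_contra hdw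
      have e : W \ {w} = insert u ((W \ {u}) \ {w}) := by
        have hwu : w ≠ u := hw.2
        ext y; simp only [Set.mem_diff, Set.mem_insert_iff, Set.mem_singleton_iff]
        by_cases hy : y = u
        · subst hy; simp [hu, hwu.symm]
        · simp [hy]
      have : CC G (W \ {w}) := by
        rw [e]
        exact cc_insert hwc (a := d) ⟨⟨hd, fun h => by rw [show d = u from h] at hud; exact hud.ne rfl⟩, hdw⟩ hud.symm
      rcases hnc w hw.1 this with h | h
      · exact hw.2 h
      · exact hwv h
    have hv' : v ∈ W \ {u} := ⟨hv, fun h => huv h.symm⟩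
    obtain ⟨w, hw, hwv, hwc⟩ := exists_noncut huc (cc_singleton v)
      (Set.singleton_subset_iff.2 hv') (fun e => hWv e.symm)
    have hwv : w ≠ v := hwv
    have hcw : c = w := key w hw hwc hwv c hc hcadj
    subst hcw
    obtain ⟨k, p, hk, hp0, hpk, hpW, hpi, hpa⟩ := ih (W \ {u}) c v
      (by rw [Set.ncard_diff_singleton_of_mem hu, hn]; rfl) huc hw hv' hwv (by
        intro w' hw' hwc'
        by_cases h : w' = v
        · exact Or.inr h
        · exact Or.inl (key w' hw' hwc' h c hc hcadj).symm)
    have hpu : ∀ i ≤ k, p i ≠ u := fun i hi => ((hpW (p i)).2 ⟨i, hi, rfl⟩).2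
    have hua : ∀ i ≤ k, (G.Adj u (p i) ↔ i = 0) := by
      intro i hi
      constructor
      · intro h
        refine hpi i 0 hi (Nat.zero_le _) ?_
        rw [hp0]
        exact key c hw hwc hwv _ ((hpW (p i)).2 ⟨i, hi, rfl⟩).1 h
      · rintro rfl
        rw [hp0]; exact hcadj
    refine ⟨k + 1, fun i => Nat.casesOn i u p, by omega, rfl, hpk, ?_, ?_, ?_⟩
    · intro y
      constructor
      · intro hy
        by_cases h : y = u
        · exact ⟨0, Nat.zero_le _, h.symm⟩
        · obtain ⟨i, hi, e⟩ := (hpW y).1 ⟨hy, h⟩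
          exact ⟨i + 1, by omega, e⟩
      · rintro ⟨i, hi, rfl⟩
        cases i with
        | zero => exact hu
        | succ i => exact ((hpW _).2 ⟨i, by omega, rfl⟩).1
    · intro i j hi hj h
      cases i with
      | zero =>
        cases j with
        | zero => rfl
        | succ j => exact absurd h.symm (hpu j (by omega))
      | succ i =>
        cases j with
        | zero => exact absurd h (hpu i (by omega))
        | succ j => rw [hpi i j (by omega) (by omega) h]
    · intro i j hi hj
      cases i with
      | zero =>
        cases j with
        | zero => simp
        | succ j =>
          have := hua j (by omega)
          change G.Adj u (p j) ↔ _
          rw [this]; omega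
      | succ i =>
        cases j with
        | zero =>
          have := hua i (by omega)
          rw [SimpleGraph.adj_comm]
          change G.Adj u (p i) ↔ _
          rw [this]; omega
        | succ j =>
          have := hpa i j (by omega) (by omega)
          change G.Adj (p i) (p j) ↔ _
          rw [this]; omega

def Fan {V : Type*} (G : SimpleGraph V) (W : Set V) (x : Fin 3 → V) : Prop :=
  ∃ (k : ℕ) (p : ℕ → V) (a b c : Fin 3), a ≠ b ∧ a ≠ c ∧ b ≠ c ∧ (∀ w, w ∈ W ↔ ∃ i ≤ k, p i = w) ∧
    (∀ i j, i ≤ k → j ≤ k → p i = p j → i = j) ∧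
    (∀ i j, i ≤ k → j ≤ k → (G.Adj (p i) (p j) ↔ j = i + 1 ∨ i = j + 1)) ∧
    (∀ i ≤ k, G.Adj (p i) (x a)) ∧ (∀ i ≤ k, (G.Adj (p i) (x b) ↔ i = 0)) ∧
    (∀ i ≤ k, (G.Adj (p i) (x c) ↔ i = k))

lemma fin3_cover : ∀ a b c : Fin 3, a ≠ b → a ≠ c → b ≠ c → ∀ l, l = a ∨ l = b ∨ l = c := by decide

lemma fan_of [Finite V] {W : Set V} {x : Fin 3 → V} (hW : CC G W) (hxi : Function.Injective x)
    (hxW : ∀ i, x i ∉ W)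
    (hN : ∀ w ∈ W, ∀ a, G.Adj w a → a ∈ W ∨ ∃ i, a = x i) (hx : ∀ i, ∃ w ∈ W, G.Adj (x i) w)
    (hP1 : ∀ W' ⊆ W, CC G W' → (∀ i, ∃ v ∈ W', G.Adj (x i) v) → W' = W)
    (hdeg : ∀ w a b, ∃ c, G.Adj w c ∧ c ≠ a ∧ c ≠ b)
    (hprism : ∀ v y : Fin 3 → V, Function.Injective v → Set.range y = Set.range x →
      (∀ i, v i ∈ W) → (∀ i j, i ≠ j → G.Adj (v i) (v j)) → (∀ i, G.Adj (v i) (y i)) →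
      (∀ i a, G.Adj (v i) a → a = y i ∨ ∃ j, a = v j) → False) : Fan G W x := by
  have hU : ∀ w ∈ W, CC G (W \ {w}) → ∃ i, ∀ v ∈ W, (G.Adj (x i) v ↔ v = w) := by
    intro w hw hc
    by_contra hcon
    push Not at hcon
    have := hP1 (W \ {w}) Set.diff_subset hc (by
      intro i
      by_contra hno
      push Not at hno
      obtain ⟨v, hv, h⟩ := hcon i
      have hiff : ∀ v ∈ W, G.Adj (x i) v → v = w := by
        intro v hv h
        by_contra hvw
        exact hno v ⟨hv, hvw⟩ h
      obtain ⟨v', hv', hh⟩ := hx i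
      have e := hiff v' hv' hh
      rcases h with ⟨h1, h2⟩ | ⟨h1, h2⟩
      · exact h2 (hiff v hv h1)
      · rw [h2] at h1; rw [e] at hh; exact h1 hh)
    rw [← this] at hw
    exact hw.2 rfl
  by_cases h1 : ∃ w, W = {w}
  · obtain ⟨w, rfl⟩ := h1
    have hxa : ∀ i, G.Adj w (x i) := by
      intro i
      obtain ⟨v, hv, h⟩ := hx i
      rw [show v = w from hv] at h; exact h.symm
    refine ⟨0, fun _ => w, 0, 1, 2, by decide, by decide, by decide, ?_, ?_, ?_, ?_, ?_, ?_⟩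
    · intro y
      constructor
      · intro h; exact ⟨0, le_rfl, h.symm⟩
      · rintro ⟨i, -, rfl⟩; rfl
    · intro i j hi hj _; omega
    · intro i j hi hj; simp; omega
    · intro i _; exact hxa _
    · intro i hi; simp [hxa]; omega
    · intro i hi; simp [hxa]; omega
  push Not at h1
  obtain ⟨w0, hw0⟩ := hW.1
  obtain ⟨u, hu, -, huc⟩ := exists_noncut hW (cc_singleton w0) (Set.singleton_subset_iff.2 hw0) (h1 w0).symm
  obtain ⟨v, hv, hvu, hvc⟩ := exists_noncut hW (cc_singleton u) (Set.singleton_subset_iff.2 hu) (h1 u).symm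
  have hvu : v ≠ u := hvu
  have huniq : ∀ {w w' : V} {i : Fin 3}, w ∈ W → w' ∈ W → (∀ v ∈ W, (G.Adj (x i) v ↔ v = w)) →
      (∀ v ∈ W, (G.Adj (x i) v ↔ v = w')) → w = w' := by
    intro w w' i hw _ h h'
    exact (h' w hw).1 ((h w hw).2 rfl)
  by_cases ht : ∃ t ∈ W, t ≠ u ∧ t ≠ v ∧ CC G (W \ {t})
  · exfalso
    obtain ⟨t, htW, htu, htv, htc⟩ := ht
    have claim : ∀ u v t, u ∈ W → v ∈ W → t ∈ W → u ≠ v → u ≠ t → v ≠ t → CC G (W \ {u}) → CC G (W \ {v}) →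
        CC G (W \ {t}) → G.Adj u t := by
      intro u v t hu hv ht huv hut hvt huc hvc htc
      obtain ⟨iu, hiu⟩ := hU u hu huc
      obtain ⟨iv, hiv⟩ := hU v hv hvc
      obtain ⟨it, hit⟩ := hU t ht htc
      have d1 : iu ≠ iv := by rintro rfl; exact huv (huniq hu hv hiu hiv)
      have d2 : iu ≠ it := by rintro rfl; exact hut (huniq hu ht hiu hit)
      have d3 : iv ≠ it := by rintro rfl; exact hvt (huniq hv ht hiv hit)
      have hcov := fin3_cover iu iv it d1 d2 d3
      obtain ⟨k, p, hk, hp0, hpk, hpW, hpi, hpa⟩ := path_lemma (G := G) _ (W \ {t}) u v rfl htc ⟨hu, hut⟩ ⟨hv, hvt⟩ huv (by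
        intro s hs hsc
        obtain ⟨c, hc, hc1, hc2⟩ := hdeg t (x it) s
        have hcW : c ∈ W := by
          rcases hN t ht c hc with h | ⟨i, rfl⟩
          · exact h
          · rcases hcov i with rfl | rfl | rfl
            · exact absurd ((hiu t ht).1 hc.symm).symm hut
            · exact absurd ((hiv t ht).1 hc.symm).symm hvt
            · exact absurd rfl hc1
        have hst : s ≠ t := hs.2
        have e : W \ {s} = insert t ((W \ {t}) \ {s}) := by
          ext y; simp only [Set.mem_diff, Set.mem_insert_iff, Set.mem_singleton_iff]
          by_cases hy : y = t
          · subst hy; simp [ht, hst.symm]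
          · simp [hy]
        have hsn : CC G (W \ {s}) := by
          rw [e]
          exact cc_insert hsc (a := c) ⟨⟨hcW, hc.ne'⟩, hc2⟩ hc.symm
        obtain ⟨i, hi⟩ := hU s hs.1 hsn
        rcases hcov i with rfl | rfl | rfl
        · exact Or.inl (huniq hs.1 hu hi hiu)
        · exact Or.inr (huniq hs.1 hv hi hiv)
        · exact absurd (huniq hs.1 ht hi hit) hst)
      obtain ⟨c, hc, hc1, hc2⟩ := hdeg u (x iu) (p 1)
      rcases hN u hu c hc with h | ⟨i, rfl⟩
      · by_cases hct : c = t
        · exact hct ▸ hc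
        · obtain ⟨j, hj, rfl⟩ := (hpW c).1 ⟨h, hct⟩
          rw [← hp0, hpa 0 j (by omega) hj] at hc
          have : j = 1 := by omega
          subst this
          exact absurd rfl hc2
      · rcases hcov i with rfl | rfl | rfl
        · exact absurd rfl hc1
        · exact absurd ((hiv u hu).1 hc.symm) huv
        · exact absurd ((hit u hu).1 hc.symm) hut
    have aut := claim u v t hu hv htW hvu.symm htu.symm htv.symm huc hvc htc
    have avt := claim v u t hv hu htW hvu htv.symm htu.symm hvc huc htc
    have auv := claim u t v hu htW hv htu.symm hvu.symm htv huc htc hvc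
    obtain ⟨iu, hiu⟩ := hU u hu huc
    obtain ⟨iv, hiv⟩ := hU v hv hvc
    obtain ⟨it, hit⟩ := hU t htW htc
    have d1 : iu ≠ iv := by rintro rfl; exact hvu.symm (huniq hu hv hiu hiv)
    have d2 : iu ≠ it := by rintro rfl; exact htu.symm (huniq hu htW hiu hit)
    have d3 : iv ≠ it := by rintro rfl; exact htv.symm (huniq hv htW hiv hit)
    have hcov := fin3_cover iu iv it d1 d2 d3
    have hcc : CC G {u, v, t} := by
      refine cc_insert (a := v) ?_ (Or.inl rfl) auv.symm
      exact cc_insert (cc_singleton t) rfl avt.symm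
    have hWe : ({u, v, t} : Set V) = W := by
      refine hP1 _ ?_ hcc ?_
      · rintro y (rfl | rfl | rfl) <;> assumption
      · intro i
        rcases hcov i with rfl | rfl | rfl
        · exact ⟨u, by simp, (hiu u hu).2 rfl⟩
        · exact ⟨v, by simp, (hiv v hv).2 rfl⟩
        · exact ⟨t, by simp, (hit t htW).2 rfl⟩
    have hWm : ∀ y ∈ W, y = u ∨ y = v ∨ y = t := by
      intro y hy; rw [← hWe] at hy; exact hy
    have hnb : ∀ (w : V) (i : Fin 3), w ∈ W → (∀ v ∈ W, (G.Adj (x i) v ↔ v = w)) → ∀ a, G.Adj w a →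
        a = x i ∨ a = u ∨ a = v ∨ a = t := by
      intro w i hw hi a ha
      rcases hN w hw a ha with h | ⟨j, rfl⟩
      · exact Or.inr (hWm a h)
      · left
        rcases hcov j with rfl | rfl | rfl
        · have := (hiu w hw).1 ha.symm; subst this
          have : i = j := by
            rcases hcov i with h | h | h
            · exact h
            · subst h; exact absurd (huniq hv hw hiv hi) hvu
            · subst h; exact absurd (huniq htW hw hit hi) htu
          rw [this]
        · have := (hiv w hw).1 ha.symm; subst this
          have : i = j := by
            rcases hcov i with h | h | h
            · subst h; exact absurd (huniq hu hw hiu hi) hvu.symm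
            · exact h
            · subst h; exact absurd (huniq htW hw hit hi) htv
          rw [this]
        · have := (hit w hw).1 ha.symm; subst this
          have : i = j := by
            rcases hcov i with h | h | h
            · subst h; exact absurd (huniq hu hw hiu hi) htu.symm
            · subst h; exact absurd (huniq hv hw hiv hi) htv.symm
            · exact h
          rw [this]
    have hrange : ∀ a, (a = u ∨ a = v ∨ a = t) → ∃ j : Fin 3, a = (![u, v, t] : Fin 3 → V) j := by
      rintro a (rfl | rfl | rfl)
      · exact ⟨0, rfl⟩
      · exact ⟨1, rfl⟩
      · exact ⟨2, rfl⟩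
    refine hprism ![u, v, t] ![x iu, x iv, x it] ?_ ?_ ?_ ?_ ?_ ?_
    · intro i j h
      fin_cases i <;> fin_cases j <;> first
        | rfl
        | exact absurd h hvu
        | exact absurd h hvu.symm
        | exact absurd h htu
        | exact absurd h htu.symm
        | exact absurd h htv
        | exact absurd h htv.symm
    · ext y
      constructor
      · rintro ⟨i, rfl⟩
        fin_cases i
        · exact ⟨iu, rfl⟩
        · exact ⟨iv, rfl⟩
        · exact ⟨it, rfl⟩
      · rintro ⟨i, rfl⟩
        rcases hcov i with rfl | rfl | rfl
        · exact ⟨0, rfl⟩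
        · exact ⟨1, rfl⟩
        · exact ⟨2, rfl⟩
    · intro i; fin_cases i <;> assumption
    · intro i j hij
      fin_cases i <;> fin_cases j <;> first
        | exact absurd rfl hij
        | exact auv
        | exact auv.symm
        | exact aut
        | exact aut.symm
        | exact avt
        | exact avt.symm
    · intro i; fin_cases i
      · exact ((hiu u hu).2 rfl).symm
      · exact ((hiv v hv).2 rfl).symm
      · exact ((hit t htW).2 rfl).symm
    · intro i a ha; fin_cases i
      · exact (hnb u iu hu hiu a ha).imp id (hrange a)
      · exact (hnb v iv hv hiv a ha).imp id (hrange a)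
      · exact (hnb t it htW hit a ha).imp id (hrange a)
  · push Not at ht
    obtain ⟨k, p, hk, hp0, hpk, hpW, hpi, hpa⟩ := path_lemma (G := G) _ W u v rfl hW hu hv hvu.symm (by
      intro w hw hwc
      by_contra hcon
      push Not at hcon
      exact ht w hw hcon.1 hcon.2 hwc)
    obtain ⟨b, hb⟩ := hU u hu huc
    obtain ⟨c, hc⟩ := hU v hv hvc
    have hbc : b ≠ c := by rintro rfl; exact hvu (huniq hv hu hc hb)
    obtain ⟨a, hab, hac⟩ : ∃ a : Fin 3, a ≠ b ∧ a ≠ c := by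
      clear * -
      revert b c; decide
    have hcov := fin3_cover a b c hab hac hbc
    have hpm : ∀ i ≤ k, p i ∈ W := fun i hi => (hpW _).2 ⟨i, hi, rfl⟩
    have hB : ∀ i ≤ k, (G.Adj (p i) (x b) ↔ i = 0) := by
      intro i hi
      rw [SimpleGraph.adj_comm, hb _ (hpm i hi), ← hp0]
      exact ⟨fun h => hpi _ _ hi (Nat.zero_le _) h, fun h => by rw [h]⟩
    have hC : ∀ i ≤ k, (G.Adj (p i) (x c) ↔ i = k) := by
      intro i hi
      rw [SimpleGraph.adj_comm, hc _ (hpm i hi), ← hpk]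
      exact ⟨fun h => hpi _ _ hi le_rfl h, fun h => by rw [h]⟩
    refine ⟨k, p, a, b, c, hab, hac, hbc, hpW, hpi, hpa, ?_, hB, hC⟩
    intro i hi
    obtain ⟨d, hd, hd1, hd2⟩ := hdeg (p i) (if i = 0 then x b else p (i - 1)) (if i = k then x c else p (i + 1))
    rcases hN _ (hpm i hi) d hd with h | ⟨l, rfl⟩
    · exfalso
      obtain ⟨j, hj, rfl⟩ := (hpW d).1 h
      rcases (hpa i j hi hj).1 hd with h | h
      · rw [if_neg (by omega)] at hd2; exact hd2 (by rw [h])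
      · rw [if_neg (by omega)] at hd1; exact hd1 (by rw [h]; rfl)
    · rcases hcov l with rfl | rfl | rfl
      · exact hd
      · exfalso
        have := (hB i hi).1 hd
        rw [if_pos this] at hd1; exact hd1 rfl
      · exfalso
        have := (hC i hi).1 hd
        rw [if_pos this] at hd2; exact hd2 rfl

end


section
variable {V : Type*} {G F : SimpleGraph V}

lemma wheel_adj_some {n : ℕ} {i j : Fin n} : (wheelGraph n).Adj (some i) (some j) ↔
    i ≠ j ∧ (j.val = (i.val + 1) % n ∨ i.val = (j.val + 1) % n) := by
  unfold wheelGraph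
  rw [SimpleGraph.fromRel_adj]
  simp

lemma wheel_adj_none {n : ℕ} {j : Fin n} : (wheelGraph n).Adj none (some j) := by
  unfold wheelGraph
  rw [SimpleGraph.fromRel_adj]
  simp

lemma mod_aux {k i : ℕ} (hi : i < k + 3) : (i + 1) % (k + 3) = if i = k + 2 then 0 else i + 1 := by
  split_ifs with h
  · subst h; simp
  · exact Nat.mod_eq_of_lt (by omega)

lemma fan_wheel {W A T : Set V} {x : Fin 3 → V} (h : Fan G W x) (hxi : Function.Injective x)
    (hxW : ∀ i, x i ∉ W) (hT : T = Set.range x) (hA : A = W ∪ T) : IsWheel (deltaGraph G A T) := by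
  subst hA
  obtain ⟨k, p, a, b, c, hab, hac, hbc, hpW, hpi, hpa, hA, hB, hC⟩ := h
  have hcov := fin3_cover a b c hab hac hbc
  have hpm : ∀ i ≤ k, p i ∈ W := fun i hi => (hpW _).2 ⟨i, hi, rfl⟩
  have hxT : ∀ i, x i ∈ T := fun i => hT ▸ ⟨i, rfl⟩
  have hpT : ∀ i ≤ k, p i ∉ T := by
    intro i hi h
    rw [hT] at h
    obtain ⟨j, e⟩ := h
    exact hxW j (e ▸ hpm i hi)
  have hpx : ∀ i ≤ k, ∀ j, p i ≠ x j := fun i hi j e => hxW j (e ▸ hpm i hi)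
  let q : ℕ → V := fun i => if i = 0 then x b else if i = k + 2 then x c else p (i - 1)
  have q0 : q 0 = x b := rfl
  have qe : q (k + 2) = x c := by simp [q]
  have qp : ∀ i ≤ k, q (i + 1) = p i := by
    intro i hi
    simp only [q]
    rw [if_neg (by omega), if_neg (by omega)]; rfl
  have hcase : ∀ i, i < k + 3 → i = 0 ∨ i = k + 2 ∨ ∃ j ≤ k, i = j + 1 := by
    intro i hi
    by_cases h0 : i = 0
    · exact Or.inl h0
    by_cases h1 : i = k + 2
    · exact Or.inr (Or.inl h1)
    · exact Or.inr (Or.inr ⟨i - 1, by omega, by omega⟩)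
  let D : V → V → Prop := fun u v => G.Adj u v ∨ (u ≠ v ∧ u ∈ T ∧ v ∈ T)
  have Dsymm : ∀ u v, D u v ↔ D v u := by
    intro u v; simp only [D, G.adj_comm u v, ne_comm (a := u)]; tauto
  have hDx : ∀ i j, D (x i) (x j) ↔ i ≠ j := by
    intro i j
    constructor
    · rintro (h | h) rfl
      · exact h.ne rfl
      · exact h.1 rfl
    · intro h; exact Or.inr ⟨hxi.ne h, hxT i, hxT j⟩
  have hDp : ∀ i ≤ k, ∀ v, D (p i) v ↔ G.Adj (p i) v := by
    intro i hi v
    exact ⟨fun h => h.elim id (fun h => absurd h.2.1 (hpT i hi)), Or.inl⟩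
  have hDq : ∀ i j, i < k + 3 → j < k + 3 → (D (q i) (q j) ↔
      (j = i + 1 ∨ i = j + 1 ∨ (i = 0 ∧ j = k + 2) ∨ (j = 0 ∧ i = k + 2))) := by
    intro i j hi hj
    rcases hcase i hi with rfl | rfl | ⟨i, hi', rfl⟩ <;> rcases hcase j hj with rfl | rfl | ⟨j, hj', rfl⟩
    · rw [q0, hDx]; simp
    · rw [q0, qe, hDx]; simp [hbc]
    · rw [q0, qp j hj', Dsymm, hDp j hj', hB j hj']; omega
    · rw [q0, qe, hDx]; simp [hbc.symm]
    · rw [qe, hDx]; simp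
    · rw [qe, qp j hj', Dsymm, hDp j hj', hC j hj']; omega
    · rw [q0, qp i hi', hDp i hi', hB i hi']; omega
    · rw [qe, qp i hi', hDp i hi', hC i hi']; omega
    · rw [qp i hi', qp j hj', hDp i hi', hpa i j hi' hj']; omega
  have hqinj : ∀ i j, i < k + 3 → j < k + 3 → q i = q j → i = j := by
    intro i j hi hj
    rcases hcase i hi with rfl | rfl | ⟨i, hi', rfl⟩ <;> rcases hcase j hj with rfl | rfl | ⟨j, hj', rfl⟩
    · intro _; rfl
    · rw [q0, qe]; exact fun e => absurd (hxi e) hbc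
    · rw [q0, qp j hj']; exact fun e => absurd e.symm (hpx j hj' _)
    · rw [q0, qe]; exact fun e => absurd (hxi e) hbc.symm
    · intro _; rfl
    · rw [qe, qp j hj']; exact fun e => absurd e.symm (hpx j hj' _)
    · rw [q0, qp i hi']; exact fun e => absurd e (hpx i hi' _)
    · rw [qe, qp i hi']; exact fun e => absurd e (hpx i hi' _)
    · rw [qp i hi', qp j hj']; exact fun e => by rw [hpi i j hi' hj' e]
  have hDa : ∀ i, i < k + 3 → D (x a) (q i) := by
    intro i hi
    rcases hcase i hi with rfl | rfl | ⟨i, hi', rfl⟩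
    · rw [q0, hDx]; exact hab
    · rw [qe, hDx]; exact hac
    · rw [qp i hi', Dsymm]; exact Or.inl (hA i hi')
  have hqne : ∀ i, i < k + 3 → x a ≠ q i := by
    intro i hi e
    have := hDa i hi
    rw [← e, hDx] at this; exact this rfl
  have hqA : ∀ i, i < k + 3 → q i ∈ W ∪ T := by
    intro i hi
    rcases hcase i hi with rfl | rfl | ⟨i, hi', rfl⟩
    · rw [q0]; exact Or.inr (hxT _)
    · rw [qe]; exact Or.inr (hxT _)
    · rw [qp i hi']; exact Or.inl (hpm i hi')
  let f : Option (Fin (k + 3)) → ↥(W ∪ T) := fun s =>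
    match s with
    | none => ⟨x a, Or.inr (hxT a)⟩
    | some i => ⟨q i, hqA i i.2⟩
  have hf : Function.Bijective f := by
    constructor
    · rintro (_ | i) (_ | j) h
      · rfl
      · exact absurd (congrArg Subtype.val h) (hqne j j.2)
      · exact absurd (congrArg Subtype.val h).symm (hqne i i.2)
      · rw [Fin.ext (hqinj i j i.2 j.2 (congrArg Subtype.val h))]
    · rintro ⟨y, hy | hy⟩
      · obtain ⟨i, hi, rfl⟩ := (hpW y).1 hy
        exact ⟨some ⟨i + 1, by omega⟩, Subtype.ext (qp i hi)⟩
      · have hy' := hy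
        rw [hT] at hy'
        obtain ⟨i, rfl⟩ := hy'
        rcases hcov i with rfl | rfl | rfl
        · exact ⟨none, rfl⟩
        · exact ⟨some ⟨0, by omega⟩, rfl⟩
        · exact ⟨some ⟨k + 2, by omega⟩, Subtype.ext qe⟩
  refine ⟨k + 3, by omega, ⟨SimpleGraph.Iso.symm ⟨Equiv.ofBijective f hf, ?_⟩⟩⟩
  intro s t
  rw [delta_adj]
  change D (f s).1 (f t).1 ↔ _
  rcases s with _ | i <;> rcases t with _ | j
  · simp only [SimpleGraph.irrefl, iff_false]
    change ¬ D (x a) (x a)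
    rw [hDx]; simp
  · exact iff_of_true (hDa j j.2) wheel_adj_none
  · rw [Dsymm, SimpleGraph.adj_comm]
    exact iff_of_true (hDa i i.2) wheel_adj_none
  · change D (q i) (q j) ↔ _
    rw [hDq i j i.2 j.2, wheel_adj_some, mod_aux i.2, mod_aux j.2, ne_eq, Fin.ext_iff]
    have := i.2
    have := j.2
    split_ifs <;> omega

def RT {V : Type*} (G : SimpleGraph V) (W : Set V) (x : Fin 3 → V) (C : Fin 3 → Set V) : Prop :=
  (∀ i, x i ∈ C i) ∧ (∀ i, CC G (C i)) ∧ (∀ i, ∀ v ∈ C i, v = x i ∨ v ∈ W) ∧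
  (∀ i j v, v ∈ C i → v ∈ C j → i = j) ∧ (∀ i j, i ≠ j → ∃ a ∈ C i, ∃ b ∈ C j, G.Adj a b)

lemma fan_rt {W A : Set V} {x : Fin 3 → V} (h : Fan G W x) (hxi : Function.Injective x)
    (hxW : ∀ i, x i ∉ W) (hA : A = W ∪ Set.range x) :
    (∃ C, RT G W x C) ∨ Nonempty (G.induce A ≃g K13) := by
  subst hA
  obtain ⟨k, p, a, b, c, hab, hac, hbc, hpW, hpi, hpa, hA, hB, hC⟩ := h
  have hcov := fin3_cover a b c hab hac hbc
  have hpm : ∀ i ≤ k, p i ∈ W := fun i hi => (hpW _).2 ⟨i, hi, rfl⟩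
  have hpx : ∀ i ≤ k, ∀ j, p i ≠ x j := fun i hi j e => hxW j (e ▸ hpm i hi)
  by_cases hk : 1 ≤ k
  · left
    refine ⟨fun l => {y | y = x l ∨ (l = b ∧ y = p 0) ∨ (l = c ∧ ∃ i, 1 ≤ i ∧ i ≤ k ∧ y = p i)}, ?_, ?_, ?_, ?_, ?_⟩
    · intro i; exact Or.inl rfl
    · intro l
      refine cc_of_base (a := x l) (Or.inl rfl) fun P hP hx0 y hy => ?_
      rcases hy with rfl | ⟨rfl, rfl⟩ | ⟨rfl, i, hi1, hik, rfl⟩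
      · exact hx0
      · exact (hP _ (Or.inl rfl) _ (Or.inr (Or.inl ⟨rfl, rfl⟩)) ((hB 0 (by omega)).2 rfl).symm).1 hx0
      · have hm : ∀ i, 1 ≤ i → i ≤ k → p i ∈ ({y | y = x l ∨ (l = b ∧ y = p 0) ∨ (l = l ∧ ∃ i, 1 ≤ i ∧ i ≤ k ∧ y = p i)} : Set V) :=
          fun i h1 h2 => Or.inr (Or.inr ⟨rfl, i, h1, h2, rfl⟩)
        have hpk : p k ∈ P := (hP _ (Or.inl rfl) _ (hm k hk le_rfl) ((hC k le_rfl).2 rfl).symm).1 hx0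
        have hd : ∀ d, d < k → p (k - d) ∈ P := by
          intro d
          induction d with
          | zero => intro _; exact hpk
          | succ d ih =>
            intro hd
            refine (hP _ (hm (k - d) (by omega) (by omega)) _ (hm (k - (d + 1)) (by omega) (by omega)) ?_).1 (ih (by omega))
            rw [hpa _ _ (by omega) (by omega)]; omega
        have := hd (k - i) (by omega)
        rwa [show k - (k - i) = i by omega] at this
    · rintro l v (rfl | ⟨rfl, rfl⟩ | ⟨rfl, i, hi1, hik, rfl⟩)
      · exact Or.inl rfl
      · exact Or.inr (hpm 0 (by omega))
      · exact Or.inr (hpm i hik)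
    · rintro l m v (rfl | ⟨rfl, rfl⟩ | ⟨rfl, i, hi1, hik, rfl⟩) (h | ⟨rfl, h⟩ | ⟨rfl, j, hj1, hjk, h⟩)
      · exact hxi h
      · exact absurd h.symm (hpx 0 (by omega) _)
      · exact absurd h.symm (hpx j hjk _)
      · exact absurd h (hpx 0 (by omega) _)
      · rfl
      · exact absurd (hpi 0 j (by omega) hjk h) (by omega)
      · exact absurd h (hpx i hik _)
      · exact absurd (hpi i 0 hik (by omega) h) (by omega)
      · rfl
    · have eab : G.Adj (x a) (p 0) := (hA 0 (by omega)).symm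
      have eac : G.Adj (x a) (p k) := (hA k (by omega)).symm
      have ebc : G.Adj (p 0) (p 1) := (hpa 0 1 (by omega) hk).2 (by omega)
      have mb : p 0 ∈ ({y | y = x b ∨ (b = b ∧ y = p 0) ∨ (b = c ∧ ∃ i, 1 ≤ i ∧ i ≤ k ∧ y = p i)} : Set V) :=
        Or.inr (Or.inl ⟨rfl, rfl⟩)
      have mc : ∀ i, 1 ≤ i → i ≤ k → p i ∈ ({y | y = x c ∨ (c = b ∧ y = p 0) ∨ (c = c ∧ ∃ i, 1 ≤ i ∧ i ≤ k ∧ y = p i)} : Set V) :=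
          fun i h1 h2 => Or.inr (Or.inr ⟨rfl, i, h1, h2, rfl⟩)
      intro i j hij
      rcases hcov i with rfl | rfl | rfl <;> rcases hcov j with rfl | rfl | rfl
      · exact absurd rfl hij
      · exact ⟨_, Or.inl rfl, _, mb, eab⟩
      · exact ⟨_, Or.inl rfl, _, mc k hk le_rfl, eac⟩
      · exact ⟨_, mb, _, Or.inl rfl, eab.symm⟩
      · exact absurd rfl hij
      · exact ⟨_, mb, _, mc 1 le_rfl hk, ebc⟩
      · exact ⟨_, mc k hk le_rfl, _, Or.inl rfl, eac.symm⟩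
      · exact ⟨_, mc 1 le_rfl hk, _, mb, ebc.symm⟩
      · exact absurd rfl hij
  have hk0 : k = 0 := by omega
  subst hk0
  have hpx' : ∀ i, G.Adj (p 0) (x i) := by
    intro i
    rcases hcov i with rfl | rfl | rfl
    · exact hA 0 le_rfl
    · exact (hB 0 le_rfl).2 rfl
    · exact (hC 0 le_rfl).2 rfl
  have hpn : ∀ j, p 0 ≠ x j := hpx 0 le_rfl
  by_cases he : ∃ i j, G.Adj (x i) (x j)
  · left
    obtain ⟨i, j, hij⟩ := he
    have hne : i ≠ j := fun e => hij.ne (by rw [e])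
    obtain ⟨l, hli, hlj⟩ : ∃ l : Fin 3, l ≠ i ∧ l ≠ j := by
      clear * -
      revert i j; decide
    have hcov' := fin3_cover l i j hli hlj hne
    refine ⟨fun m => {y | y = x m ∨ (m = l ∧ y = p 0)}, ?_, ?_, ?_, ?_, ?_⟩
    · intro i; exact Or.inl rfl
    · intro m
      refine cc_of_base (a := x m) (Or.inl rfl) fun P hP hx0 y hy => ?_
      rcases hy with rfl | ⟨rfl, rfl⟩
      · exact hx0
      · exact (hP _ (Or.inl rfl) _ (Or.inr ⟨rfl, rfl⟩) (hpx' _).symm).1 hx0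
    · rintro l v (rfl | ⟨rfl, rfl⟩)
      · exact Or.inl rfl
      · exact Or.inr (hpm 0 le_rfl)
    · rintro m m' v (rfl | ⟨rfl, rfl⟩) (h | ⟨rfl, h⟩)
      · exact hxi h
      · exact absurd h.symm (hpn _)
      · exact absurd h (hpn _)
      · rfl
    · have ml : p 0 ∈ ({y | y = x l ∨ (l = l ∧ y = p 0)} : Set V) := Or.inr ⟨rfl, rfl⟩
      intro m m' hm
      rcases hcov' m with rfl | rfl | rfl <;> rcases hcov' m' with rfl | rfl | rfl
      · exact absurd rfl hm
      · exact ⟨_, ml, _, Or.inl rfl, hpx' _⟩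
      · exact ⟨_, ml, _, Or.inl rfl, hpx' _⟩
      · exact ⟨_, Or.inl rfl, _, ml, (hpx' _).symm⟩
      · exact absurd rfl hm
      · exact ⟨_, Or.inl rfl, _, Or.inl rfl, hij⟩
      · exact ⟨_, Or.inl rfl, _, ml, (hpx' _).symm⟩
      · exact ⟨_, Or.inl rfl, _, Or.inl rfl, hij.symm⟩
      · exact absurd rfl hm
  · right
    push Not at he
    have hW : ∀ w, w ∈ W ↔ w = p 0 := by
      intro w
      rw [hpW]
      constructor
      · rintro ⟨i, hi, rfl⟩; rw [Nat.le_zero.1 hi]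
      · rintro rfl; exact ⟨0, le_rfl, rfl⟩
    let f : Fin 4 → ↥(W ∪ Set.range x) :=
      Fin.cons ⟨p 0, Or.inl (hpm 0 le_rfl)⟩ (fun i => ⟨x i, Or.inr ⟨i, rfl⟩⟩)
    have f0 : (f 0).1 = p 0 := rfl
    have fs : ∀ i : Fin 3, (f i.succ).1 = x i := fun i => rfl
    have hf : Function.Bijective f := by
      constructor
      · intro i j
        refine Fin.cases ?_ (fun i => ?_) i <;> refine Fin.cases ?_ (fun j => ?_) j
        · intro _; rfl
        · intro e; exact absurd (congrArg Subtype.val e) (hpn j)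
        · intro e; exact absurd (congrArg Subtype.val e).symm (hpn i)
        · intro e; exact congrArg Fin.succ (hxi (congrArg Subtype.val e))
      · rintro ⟨y, hy | ⟨i, rfl⟩⟩
        · exact ⟨0, Subtype.ext ((hW y).1 hy).symm⟩
        · exact ⟨i.succ, rfl⟩
    refine ⟨SimpleGraph.Iso.symm ⟨Equiv.ofBijective f hf, ?_⟩⟩
    intro s t
    change G.Adj (f s).1 (f t).1 ↔ _
    rw [K13, SimpleGraph.fromRel_adj]
    refine Fin.cases ?_ (fun s => ?_) s <;> refine Fin.cases ?_ (fun t => ?_) t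
    · simp
    · rw [f0, fs]; simp [hpx', Fin.succ_ne_zero, (Fin.succ_ne_zero _).symm]
    · rw [f0, fs]; simp [(hpx' s).symm, Fin.succ_ne_zero]
    · rw [fs, fs]; simp [he, Fin.succ_ne_zero]

end


/-- Coloring form of: deleting three vertices leaves at most two components. -/
def HS {V : Type*} (G : SimpleGraph V) : Prop :=
  ∀ X : Set V, X.ncard = 3 → ∀ c : V → Fin 3,
    (∀ a b, a ∉ X → b ∉ X → G.Adj a b → c a = c b) → (∀ i, ∃ a, a ∉ X ∧ c a = i) → False

theorem hs_of {V : Type*} [Finite V] {G : SimpleGraph V}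
    (h : ∀ x y z : V, Nat.card (G.induce (({x, y, z} : Set V)ᶜ)).ConnectedComponent ≤ 2) :
    HS G := by
  intro X hX c hc hs
  obtain ⟨x, y, z, -, -, -, rfl⟩ := Set.ncard_eq_three.1 hX
  have key := h x y z
  let H := G.induce (({x, y, z} : Set V)ᶜ)
  have hw : ∀ (a b : (({x, y, z} : Set V)ᶜ : Set V)), H.Reachable a b → c a.1 = c b.1 := by
    intro a b ⟨p⟩
    induction p with
    | nil => rfl
    | @cons u v w hadj _ ih => exact (hc u.1 v.1 u.2 v.2 hadj).trans ih
  let f : H.ConnectedComponent → Fin 3 :=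
    Quot.lift (fun a => c a.1) (fun a b hab => hw a b hab)
  have hf : Function.Surjective f := by
    intro i
    obtain ⟨a, ha, hi⟩ := hs i
    exact ⟨H.connectedComponentMk ⟨a, ha⟩, hi⟩
  have : Finite H.ConnectedComponent := Quot.finite _
  have := Nat.card_le_card_of_surjective f hf
  simp only [Nat.card_eq_fintype_card, Fintype.card_fin] at this
  have h2 : Nat.card H.ConnectedComponent ≤ 2 := key
  omega

theorem NP.card {V : Type*} [Finite V] {G : SimpleGraph V} {S : Set V} (h : NP G S) :
    5 ≤ S.ncard := by
  have key : ∀ {W : Type} [Fintype W] (K : SimpleGraph W), 5 ≤ Fintype.card W → MIn K G S →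
      5 ≤ S.ncard := by
    rintro W _ K hW ⟨B, ⟨h1, h2, -⟩, h3⟩
    choose f hf using fun w => (h1 w).1
    have hi : Function.Injective f := fun a b e => h2 a b (f a) (hf a) (e ▸ hf b)
    have : (Set.range f).ncard = Fintype.card W := by
      rw [← Set.image_univ, Set.ncard_image_of_injective _ hi, Set.ncard_univ,
        Nat.card_eq_fintype_card]
    rw [← this] at hW
    refine hW.trans (Set.ncard_le_ncard ?_ S.toFinite)
    rintro _ ⟨w, rfl⟩
    exact h3 w (hf w)
  rcases h with h | h
  · exact key K5 (by simp) h
  · exact key K33 (by simp) h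

/-- The standing hypotheses. -/
structure Gd {V : Type*} (G : SimpleGraph V) : Prop where
  k3 : KConnected G 3
  np : NP G Set.univ
  f1 : ¬ IsMinor K5plus G
  f2 : ¬ IsMinor K33plus G
  f3 : ¬ IsMinor K5h G
  f4 : ¬ IsMinor K33h G
  hs : HS G

theorem Gd.cc {V : Type*} {G : SimpleGraph V} (h : Gd G) {s : Set V} (hs : s.ncard < 3) :
    CC G sᶜ := cc_iff.1 (h.k3.2 s hs)

theorem Gd.tight {V : Type*} {G : SimpleGraph V} (h : Gd G) {S : Set V} (hS : NP G S) (u : V) :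
    u ∈ S := by
  refine tight_of_free ?_ h.f1 h.f2 hS u
  have := h.cc (s := ∅) (by simp)
  simpa using this

theorem Gd.deg {V : Type*} [Finite V] {G : SimpleGraph V} (h : Gd G) (w a b : V) :
    ∃ c, G.Adj w c ∧ c ≠ a ∧ c ≠ b := by
  have hcard : (({a, b} \ {w} : Set V)).ncard < 3 := by
    have h1 : (({a, b} \ {w} : Set V)).ncard ≤ ({a, b} : Set V).ncard :=
      Set.ncard_le_ncard Set.diff_subset (Set.toFinite _)
    have h2 : ({a, b} : Set V).ncard ≤ 2 := by
      refine (Set.ncard_insert_le _ _).trans ?_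
      simp
    omega
  have hcc := h.cc hcard
  have hV := h.k3.1
  have : ∃ d, d ∉ ({a, b, w} : Set V) := by
    by_contra hcon
    push Not at hcon
    have h1 : ({a, b, w} : Set V) = Set.univ := Set.eq_univ_of_forall hcon
    have h2 : ({a, b, w} : Set V).ncard ≤ 3 := by
      refine (Set.ncard_insert_le _ _).trans ?_
      have := Set.ncard_insert_le b ({w} : Set V)
      simp at this
      omega
    rw [h1, Set.ncard_univ] at h2
    omega
  obtain ⟨d, hd⟩ := this
  simp only [Set.mem_insert_iff, Set.mem_singleton_iff, not_or] at hd
  obtain ⟨c, hc, e, he, hcw, hew, hce⟩ := cc_edge hcc {w} (a := w) (b := d) (by simp)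
    (by simp [hd]) rfl (by simp [hd])
  rw [Set.mem_singleton_iff] at hcw hew
  subst hcw
  refine ⟨e, hce, ?_, ?_⟩ <;> rintro rfl <;> exact he ⟨by simp, hew⟩

section sep
variable {V : Type*} {G : SimpleGraph V} {A B : Set V}

theorem sep_symm (h : IsSep G 3 A B) : IsSep G 3 B A :=
  ⟨by rw [Set.union_comm]; exact h.1, h.2.2.1, h.2.1, by rw [Set.inter_comm]; exact h.2.2.2.1,
    fun _ _ hxy => (h.2.2.2.2 hxy).symm⟩

variable [Finite V]

theorem sep_cc (hG : Gd G) (h : IsSep G 3 A B) : CC G (A \ B) := by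
  classical
  obtain ⟨hU, hA, hB, hX, hE⟩ := h
  have hU' : ∀ v, v ∈ A ∨ v ∈ B := fun v => by
    have : v ∈ A ∪ B := hU ▸ Set.mem_univ v
    exact this
  obtain ⟨a, ha⟩ := (Set.ne_univ_iff_exists_notMem B).1 hB
  obtain ⟨b, hb⟩ := (Set.ne_univ_iff_exists_notMem A).1 hA
  have haA : a ∈ A \ B := ⟨(hU' a).resolve_right ha, ha⟩
  have hsub := cmp_subset (G := G) haA
  by_cases hC : cpt G (A \ B) a = A \ B
  · rw [← hC]; exact cmp_cc a
  exfalso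
  obtain ⟨d, hd, hdC⟩ : ∃ d ∈ A \ B, d ∉ cpt G (A \ B) a := by
    by_contra hcon
    push Not at hcon
    exact hC (hsub.antisymm hcon)
  refine hG.hs (A ∩ B) hX (fun v => if v ∈ cpt G (A \ B) a then 0 else if v ∈ A then 1 else 2)
    ?_ ?_
  · have key : ∀ u v, u ∉ A ∩ B → v ∉ A ∩ B → G.Adj u v →
      (u ∈ cpt G (A \ B) a → v ∈ cpt G (A \ B) a) ∧ (u ∈ A → v ∈ A) := by
      intro u v hu hv huv
      have h1 : u ∈ A → v ∈ A := by
        intro huA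
        rcases hE huv with h | h
        · exact h.2
        · exact absurd ⟨huA, h.1⟩ hu
      refine ⟨fun huC => cmp_closed huC huv ?_, h1⟩
      have hvA := h1 (hsub huC).1
      exact ⟨hvA, fun hvB => hv ⟨hvA, hvB⟩⟩
    intro u v hu hv huv
    obtain ⟨k1, k2⟩ := key u v hu hv huv
    obtain ⟨k3, k4⟩ := key v u hv hu huv.symm
    by_cases h1 : u ∈ cpt G (A \ B) a
    · simp [h1, k1 h1]
    · have h1' : v ∉ cpt G (A \ B) a := fun h => h1 (k3 h)
      by_cases h2 : u ∈ A
      · simp [h1, h1', h2, k2 h2]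
      · have h2' : v ∉ A := fun h => h2 (k4 h)
        simp [h1, h1', h2, h2']
  · intro i
    fin_cases i
    · exact ⟨a, fun h => ha h.2, by simp [mem_cmp_self]⟩
    · exact ⟨d, fun h => hd.2 h.2, by simp [hdC, hd.1]⟩
    · have hbC : b ∉ cpt G (A \ B) a := fun h => hb (hsub h).1
      exact ⟨b, fun h => hb h.1, by simp [hb, hbC]⟩

/-- A vertex of the cut has a neighbour strictly inside. -/
theorem sep_nbr (hG : Gd G) (h : IsSep G 3 A B) {x : V} (hx : x ∈ A ∩ B) :
    ∃ w ∈ A \ B, G.Adj x w := by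
  obtain ⟨hU, hA, hB, hX, hE⟩ := h
  have hU' : ∀ v, v ∈ A ∨ v ∈ B := fun v => by
    have : v ∈ A ∪ B := hU ▸ Set.mem_univ v
    exact this
  obtain ⟨a, ha⟩ := (Set.ne_univ_iff_exists_notMem B).1 hB
  obtain ⟨b, hb⟩ := (Set.ne_univ_iff_exists_notMem A).1 hA
  have hc : ((A ∩ B) \ {x}).ncard < 3 := by
    rw [← hX]
    exact Set.ncard_lt_ncard ⟨Set.diff_subset, fun h => (h hx).2 rfl⟩ (Set.toFinite _)
  have haA := (hU' a).resolve_right ha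
  obtain ⟨c, hc, d, hd, hcP, hdP, hcd⟩ := cc_edge (hG.cc hc) (A \ B) (a := a) (b := b)
    (fun h => ha h.1.2) (fun h => hb h.1.1) ⟨haA, ha⟩ (fun h => hb h.1)
  rcases hE hcd with h | h
  · have hdB : d ∈ B := by
      by_contra hh; exact hdP ⟨h.2, hh⟩
    have : d = x := by
      by_contra hne; exact hd ⟨⟨h.2, hdB⟩, hne⟩
    subst this
    exact ⟨c, hcP, hcd.symm⟩
  · exact absurd h.1 hcP.2

theorem sep_fan (hG : Gd G) (h : IsSep G 3 A B) {x : Fin 3 → V} (hxi : Function.Injective x)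
    (hx : A ∩ B = Set.range x) (hnp : NP (addTri G (A ∩ B)) B) : Fan G (A \ B) x := by
  have hcc := sep_cc hG h
  have hxX : ∀ i, x i ∈ A ∩ B := fun i => hx ▸ Set.mem_range_self i
  have hE := h.2.2.2.2
  refine fan_of hcc hxi (fun i hi => hi.2 (hxX i).2) ?_ (fun i => sep_nbr hG h (hxX i)) ?_ hG.deg ?_
  · intro w hw a hwa
    rcases hE hwa with h | h
    · by_cases haB : a ∈ B
      · right
        have : a ∈ Set.range x := hx ▸ ⟨h.2, haB⟩
        obtain ⟨i, hi⟩ := this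
        exact ⟨i, hi.symm⟩
      · exact Or.inl ⟨h.2, haB⟩
    · exact absurd h.1 hw.2
  · intro W' hW' hccW hadj
    rw [hx] at hnp
    have key : NP G (B ∪ W') := by
      rcases ym_of_np hnp hccW (fun v hv => (hW' hv).2) hadj with ⟨M, h1, h2, -⟩ | ⟨M, h1, h2, -⟩
      · exact Or.inl ⟨M, h1, h2⟩
      · exact Or.inr ⟨M, h1, h2⟩
    refine hW'.antisymm fun v hv => ?_
    exact (hG.tight key v).resolve_left hv.2
  · intro v y hvi hy hvW hvv hvy hN
    refine prism_contra hvi hvv hvy ?_ hN (fun i => (hvW i).2) (fun S hS => hG.tight hS) hG.f3 hG.f4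
      (B := B) (by rw [hy, ← hx]; exact hnp)
    intro i j e
    have : y i ∈ A ∩ B := by rw [hx, ← hy]; exact Set.mem_range_self i
    exact (hvW j).2 (e ▸ this.2)

end sep

/-- enumerate a 3-element set. -/
theorem enum3 {V : Type*} {X : Set V} (h : X.ncard = 3) :
    ∃ x : Fin 3 → V, Function.Injective x ∧ X = Set.range x := by
  obtain ⟨a, b, c, h1, h2, h3, rfl⟩ := Set.ncard_eq_three.1 h
  refine ⟨![a, b, c], ?_, ?_⟩
  · intro i j
    fin_cases i <;> fin_cases j <;> simp [h1, h2, h3, h1.symm, h2.symm, h3.symm]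
  · ext v
    simp [eq_comm]
    tauto

/-- The reduced graph is again good, and a minor. -/
theorem gd_reduce {V : Type*} [Finite V] {G : SimpleGraph V} {A B : Set V} (hG : Gd G)
    (h : IsSep G 3 A B) {x : Fin 3 → V}
    (hx : A ∩ B = Set.range x) (hnp : NP (addTri G (A ∩ B)) B) {C : Fin 3 → Set V}
    (hC : RT G (A \ B) x C) :
    Gd ((addTri G (A ∩ B)).induce B) ∧ IsMinor ((addTri G (A ∩ B)).induce B) G := by
  classical
  obtain ⟨hU, hA, hB, hX, hE⟩ := h
  have hU' : ∀ v, v ∈ A ∨ v ∈ B := fun v => by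
    have : v ∈ A ∪ B := hU ▸ Set.mem_univ v
    exact this
  obtain ⟨c1, c2, c3, c4, c5⟩ := hC
  have hshadow : ∀ a b, a ∉ B → b ∈ B → G.Adj a b → b ∈ A ∩ B := by
    intro a b ha hb hab
    rcases hE hab with h | h
    · exact ⟨h.2, hb⟩
    · exact absurd h.1 ha
  have hmin : IsMinor ((addTri G (A ∩ B)).induce B) G := by
    have h0 : MIn ((addTri G (A ∩ B)).induce B) (addTri G (Set.range x)) B := by
      refine ⟨fun w => {w.1}, ⟨fun w => cc_singleton _, ?_, ?_⟩, ?_⟩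
      · rintro w1 w2 v rfl e
        exact Subtype.ext e
      · intro w1 w2 hw
        rw [hx] at hw
        exact ⟨_, rfl, _, rfl, hw⟩
      · rintro w _ rfl
        exact w.2
    have h1 := rt_minor h0 c1 c2 (by
      intro i v hv hvB
      rcases c3 i v hv with h | h
      · exact h
      · exact absurd hvB h.2) c4 c5
    exact isMinor_iff_MIn.2 (h1.mono (Set.subset_univ _) (fun _ _ _ _ h => h))
  have h5 := hnp.card
  refine ⟨⟨⟨?_, ?_⟩, ?_, fun hm => hG.f1 (isMinor_trans hm hmin),
    fun hm => hG.f2 (isMinor_trans hm hmin), fun hm => hG.f3 (isMinor_trans hm hmin),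
    fun hm => hG.f4 (isMinor_trans hm hmin), ?_⟩, hmin⟩
  · rw [Nat.card_coe_set_eq]; omega
  · intro s hs
    rw [cc_iff, cc_induce]
    have hs' : (Subtype.val '' s).ncard < 3 := by
      rwa [Set.ncard_image_of_injective _ Subtype.val_injective]
    have e : Subtype.val '' sᶜ = (Subtype.val '' s)ᶜ ∩ B := by
      ext v
      simp only [Set.mem_image, Set.mem_compl_iff, Subtype.exists, Set.mem_inter_iff]
      constructor
      · rintro ⟨w, hw, h1, rfl⟩
        exact ⟨fun ⟨u, hu, h2, h3⟩ => h1 (by subst h3; exact h2), hw⟩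
      · rintro ⟨h1, h2⟩
        exact ⟨v, h2, fun h3 => h1 ⟨v, h2, h3, rfl⟩, rfl⟩
    rw [e]
    refine cc_shadow hshadow (hG.cc hs') ?_
    by_contra hcon
    have hsub : B ⊆ Subtype.val '' s := by
      intro v hv
      by_contra hv'
      exact hcon ⟨v, hv', hv⟩
    have := Set.ncard_le_ncard hsub (Set.toFinite _)
    omega
  · rw [NP_induce]
    simpa using hnp
  · intro Y hY c hc hsurj
    have hY' : (Subtype.val '' Y).ncard = 3 := by
      rwa [Set.ncard_image_of_injective _ Subtype.val_injective]
    have hmem : ∀ (v : V) (hv : v ∈ B), v ∉ Subtype.val '' Y ↔ (⟨v, hv⟩ : B) ∉ Y := by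
      intro v hv
      simp [hv]
    -- the colour for the deleted side
    obtain ⟨c0, hc0⟩ : ∃ c0, ∀ (v : V) (hv : v ∈ A ∩ B), v ∉ Subtype.val '' Y →
        c ⟨v, hv.2⟩ = c0 := by
      by_cases hex : ∃ u, ∃ hu : u ∈ A ∩ B, u ∉ Subtype.val '' Y
      · obtain ⟨u, hu, huY⟩ := hex
        refine ⟨c ⟨u, hu.2⟩, fun v hv hvY => ?_⟩
        by_cases e : v = u
        · subst e; rfl
        · refine hc _ _ ((hmem _ _).1 hvY) ((hmem _ _).1 huY) ?_
          exact addTri_adj.2 (Or.inr ⟨e, hv, hu⟩)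
      · exact ⟨0, fun v hv hvY => absurd ⟨v, hv, hvY⟩ hex⟩
    refine hG.hs _ hY' (fun v => if hv : v ∈ B then c ⟨v, hv⟩ else c0) ?_ ?_
    · intro a b ha hb hab
      by_cases haB : a ∈ B <;> by_cases hbB : b ∈ B
      · simp only [haB, hbB, dif_pos]
        exact hc _ _ ((hmem _ _).1 ha) ((hmem _ _).1 hb) (addTri_adj.2 (Or.inl hab))
      · simp only [haB, hbB, dif_pos, dif_neg, not_false_iff]
        exact hc0 a (hshadow b a hbB haB hab.symm) ha
      · simp only [haB, hbB, dif_pos, dif_neg, not_false_iff]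
        exact (hc0 b (hshadow a b haB hbB hab) hb).symm
      · simp only [haB, hbB, dif_neg, not_false_iff]
    · intro i
      obtain ⟨a, ha, hi⟩ := hsurj i
      exact ⟨a.1, (hmem _ a.2).2 ha, by simp [hi]⟩


/-- A decomposition of `G[B]` into `G'` plus wheels. -/
structure Dc {V U ι : Type} (G : SimpleGraph V) (B : Set V) (G' : SimpleGraph U) (g : U → V)
    (Wp : ι → Set V) (T : ι → Set U) : Prop where
  gB : ∀ u, g u ∈ B
  WB : ∀ i, Wp i ⊆ B
  gi : Function.Injective g
  t3 : ∀ i, (T i).ncard = 3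
  tri : ∀ i, ∀ x ∈ T i, ∀ y ∈ T i, x ≠ y → G'.Adj x y
  ti : Function.Injective T
  dg : ∀ i v, v ∈ Wp i → ∀ u, g u ≠ v
  dw : ∀ i j v, v ∈ Wp i → v ∈ Wp j → i = j
  cov : ∀ v ∈ B, (∃ u, g u = v) ∨ ∃ i, v ∈ Wp i
  ne : ∀ i, (Wp i).Nonempty
  wh : ∀ i, IsWheel (deltaGraph G (Wp i ∪ g '' T i) (g '' T i))
  a1 : ∀ a b, G.Adj (g a) (g b) → G'.Adj a b
  a2 : ∀ a b, G'.Adj a b → G.Adj (g a) (g b) ∨ ∃ i, a ∈ T i ∧ b ∈ T i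
  cl : ∀ i, ∀ x ∈ Wp i, ∀ y ∈ B, G.Adj x y → y ∈ Wp i ∪ g '' T i
  np : ∀ i, NP (addTri G (g '' T i)) (B \ Wp i)

theorem IsWheel.of_iso {V W : Type*} {G : SimpleGraph V} {H : SimpleGraph W} (e : G ≃g H)
    (h : IsWheel H) : IsWheel G := by
  obtain ⟨n, hn, ⟨f⟩⟩ := h
  exact ⟨n, hn, ⟨e.trans f⟩⟩

theorem Dc.lift {V U ι : Type} {F : SimpleGraph V} {B : Set V} {G' : SimpleGraph U} {g : U → B}
    {Wp : ι → Set B} {T : ι → Set U} (h : Dc (F.induce B) Set.univ G' g Wp T) :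
    Dc F B G' (fun u => (g u).1) (fun i => Subtype.val '' Wp i) T := by
  have him : ∀ i, (fun u => (g u).1) '' T i = Subtype.val '' (g '' T i) := by
    intro i; rw [Set.image_image]
  refine ⟨fun u => (g u).2, ?_, fun a b e => h.gi (Subtype.ext e), h.t3, h.tri, h.ti, ?_, ?_, ?_,
    fun i => (h.ne i).image _, ?_, fun a b e => h.a1 a b e, fun a b e => h.a2 a b e, ?_, ?_⟩
  · rintro i _ ⟨w, -, rfl⟩; exact w.2
  · rintro i _ ⟨w, hw, rfl⟩ u e
    exact h.dg i w hw u (Subtype.ext e)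
  · rintro i j _ ⟨w, hw, rfl⟩ ⟨w', hw', e⟩
    have : w' = w := Subtype.ext e
    subst this
    exact h.dw i j _ hw hw'
  · intro v hv
    rcases h.cov ⟨v, hv⟩ trivial with ⟨u, hu⟩ | ⟨i, hi⟩
    · exact Or.inl ⟨u, by rw [hu]⟩
    · exact Or.inr ⟨i, _, hi, rfl⟩
  · intro i
    have e1 : Subtype.val '' Wp i ∪ (fun u => (g u).1) '' T i
        = Subtype.val '' (Wp i ∪ g '' T i) := by
      rw [him, Set.image_union]
    rw [e1, him]
    refine IsWheel.of_iso (SimpleGraph.Iso.symm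
      ⟨Equiv.Set.image Subtype.val (Wp i ∪ g '' T i) Subtype.val_injective, ?_⟩) (h.wh i)
    intro a b
    rw [delta_adj, delta_adj]
    simp [Equiv.Set.image_apply, Subtype.val_inj]
  · rintro i _ ⟨w, hw, rfl⟩ y hy hadj
    rw [him, ← Set.image_union]
    exact ⟨⟨y, hy⟩, h.cl i w hw ⟨y, hy⟩ trivial hadj, rfl⟩
  · intro i
    have h1 : NP ((addTri F (Subtype.val '' (g '' T i))).induce B) (Set.univ \ Wp i) := by
      refine (h.np i).mono le_rfl ?_
      intro a _ b _ hab
      rw [addTri_adj] at hab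
      refine addTri_adj.2 ?_
      rcases hab with hab | ⟨h1, h2, h3⟩
      · exact Or.inl hab
      · exact Or.inr ⟨fun e => h1 (Subtype.ext e), ⟨a, h2, rfl⟩, ⟨b, h3, rfl⟩⟩
    rw [NP_induce] at h1
    rw [him]
    refine h1.mono ?_ (fun _ _ _ _ h => h)
    rintro _ ⟨w, hw, rfl⟩
    exact ⟨w.2, fun ⟨w', hw', e⟩ => hw.2 (by rwa [Subtype.ext e] at hw')⟩

theorem exists_notMem_of_card {U : Type*} [Finite U] (h5 : 5 ≤ Nat.card U) {T : Set U}
    (h3 : T.ncard = 3) : ∃ u, u ∉ T := by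
  by_contra hcon
  push Not at hcon
  rw [Set.eq_univ_of_forall hcon, Set.ncard_univ] at h3
  omega

theorem Dc.clash {V U ι : Type} [Finite V] {G : SimpleGraph V} {A B : Set V} {G' : SimpleGraph U}
    {g : U → V} {Wp : ι → Set V} {T : ι → Set U} (hs : IsSep G 3 A B)
    (h : Dc (addTri G (A ∩ B)) B G' g Wp T) (h5 : 5 ≤ Nat.card U) {i : ι} {v : V}
    (hvX : v ∈ A ∩ B) (hv : v ∈ Wp i) :
    ∃ A2 B2, IsSep G 3 A2 B2 ∧ A.ncard < A2.ncard ∧ 5 ≤ A2.ncard ∧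
      NP (addTri G (A2 ∩ B2)) B2 := by
  obtain ⟨hU, hA, hB, hX, hE⟩ := hs
  have hU' : ∀ v, v ∈ A ∨ v ∈ B := fun v => by
    have : v ∈ A ∪ B := hU ▸ Set.mem_univ v
    exact this
  have : Finite U := Finite.of_injective g h.gi
  have hXs : A ∩ B ⊆ Wp i ∪ g '' T i := by
    intro u hu
    by_cases e : v = u
    · subst e; exact Or.inl hv
    · exact h.cl i v hv u hu.2 (addTri_adj.2 (Or.inr ⟨e, hvX, hu⟩))
  have hgW : ∀ t, g t ∉ Wp i := fun t ht => h.dg i _ ht t rfl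
  have hI : (A ∪ (Wp i ∪ g '' T i)) ∩ (B \ Wp i) = g '' T i := by
    ext u
    constructor
    · rintro ⟨hu | hu | hu, hB, hW⟩
      · exact (hXs ⟨hu, hB⟩).resolve_left hW
      · exact absurd hu hW
      · exact hu
    · rintro ⟨t, ht, rfl⟩
      exact ⟨Or.inr (Or.inr ⟨t, ht, rfl⟩), h.gB t, hgW t⟩
  have hT3 : (g '' T i).ncard = 3 := by rw [Set.ncard_image_of_injective _ h.gi, h.t3]
  have hW4 : 4 ≤ (Wp i ∪ g '' T i).ncard := by
    rw [Set.ncard_union_eq ?_ (Set.toFinite _) (Set.toFinite _), hT3]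
    · have := (Set.ncard_pos (Set.toFinite (Wp i))).2 (h.ne i)
      omega
    · rw [Set.disjoint_left]
      rintro _ hw ⟨t, -, rfl⟩
      exact hgW t hw
  have hlt : A.ncard < (A ∪ (Wp i ∪ g '' T i)).ncard := by
    refine Set.ncard_lt_ncard ⟨Set.subset_union_left, fun hsub => ?_⟩ (Set.toFinite _)
    have : Wp i ∪ g '' T i ⊆ A ∩ B := by
      intro u hu
      refine ⟨hsub (Or.inr hu), ?_⟩
      rcases hu with hu | ⟨t, -, rfl⟩
      · exact h.WB i hu
      · exact h.gB t
    have := Set.ncard_le_ncard this (Set.toFinite _)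
    omega
  obtain ⟨a, ha⟩ := (Set.ne_univ_iff_exists_notMem B).1 hB
  have hA4 : 4 ≤ A.ncard := by
    have : (A ∩ B).ncard < A.ncard :=
      Set.ncard_lt_ncard ⟨Set.inter_subset_left, fun hsub =>
        ha (hsub ((hU' a).resolve_right ha)).2⟩ (Set.toFinite _)
    omega
  refine ⟨A ∪ (Wp i ∪ g '' T i), B \ Wp i, ⟨?_, ?_, ?_, ?_, ?_⟩, hlt, by omega, ?_⟩
  · refine Set.eq_univ_of_forall fun u => ?_
    by_cases hu : u ∈ Wp i
    · exact Or.inl (Or.inr (Or.inl hu))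
    · rcases hU' u with h | h
      · exact Or.inl (Or.inl h)
      · exact Or.inr ⟨h, hu⟩
  · obtain ⟨t, ht⟩ := exists_notMem_of_card h5 (h.t3 i)
    have hgt : g t ∉ g '' T i := fun ⟨t', ht', e⟩ => ht (h.gi e ▸ ht')
    refine (Set.ne_univ_iff_exists_notMem _).2 ⟨g t, ?_⟩
    rintro (h1 | h1 | h1)
    · exact (hXs ⟨h1, h.gB t⟩).elim (hgW t) hgt
    · exact hgW t h1
    · exact hgt h1
  · exact (Set.ne_univ_iff_exists_notMem _).2 ⟨a, fun hh => ha hh.1⟩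
  · rw [hI, hT3]
  · intro p q hpq
    rcases hE hpq with hh | hh
    · exact Or.inl ⟨Or.inl hh.1, Or.inl hh.2⟩
    · have hF : (addTri G (A ∩ B)).Adj p q := addTri_adj.2 (Or.inl hpq)
      by_cases hp : p ∈ Wp i
      · exact Or.inl ⟨Or.inr (Or.inl hp), Or.inr (h.cl i p hp q hh.2 hF)⟩
      · by_cases hq : q ∈ Wp i
        · exact Or.inl ⟨Or.inr (h.cl i q hq p hh.1 hF.symm), Or.inr (Or.inl hq)⟩
        · exact Or.inr ⟨⟨hh.1, hp⟩, hh.2, hq⟩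
  · rw [hI]
    refine (h.np i).mono le_rfl ?_
    intro p hp q hq hpq
    rw [addTri_adj, addTri_adj] at hpq
    rw [addTri_adj]
    rcases hpq with (h1 | ⟨h1, h2, h3⟩) | h1
    · exact Or.inl h1
    · exact Or.inr ⟨h1, (hXs h2).resolve_left hp.2, (hXs h3).resolve_left hq.2⟩
    · exact Or.inr h1

theorem Dc.glue {V U ι : Type} [Finite V] {G : SimpleGraph V} {A B : Set V} {G' : SimpleGraph U}
    {g : U → V} {Wp : ι → Set V} {T : ι → Set U} (hG : Gd G) (hs : IsSep G 3 A B)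
    (h : Dc (addTri G (A ∩ B)) B G' g Wp T) (h5 : 5 ≤ Nat.card U)
    (hno : ∀ i v, v ∈ A ∩ B → v ∉ Wp i) (hnp : NP (addTri G (A ∩ B)) B)
    {x : Fin 3 → V} (hxi : Function.Injective x) (hx : A ∩ B = Set.range x)
    (hfan : Fan G (A \ B) x) {C : Fin 3 → Set V} (hC : RT G (A \ B) x C) :
    Dc G Set.univ G' g (fun o : Option ι => o.elim (A \ B) Wp)
      (fun o : Option ι => o.elim (g ⁻¹' (A ∩ B)) T) := by
  classical
  obtain ⟨hU, hA, hB, hX, hE⟩ := hs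
  have hU' : ∀ v, v ∈ A ∨ v ∈ B := fun v => by
    have : v ∈ A ∪ B := hU ▸ Set.mem_univ v
    exact this
  have : Finite U := Finite.of_injective g h.gi
  have hXg : A ∩ B ⊆ Set.range g := by
    intro v hv
    rcases h.cov v hv.2 with hh | ⟨i, hi⟩
    · exact hh
    · exact absurd hi (hno i v hv)
  have hT0 : g '' (g ⁻¹' (A ∩ B)) = A ∩ B := Set.image_preimage_eq_of_subset hXg
  have hT03 : (g ⁻¹' (A ∩ B)).ncard = 3 := by
    rw [← Set.ncard_image_of_injective _ h.gi, hT0, hX]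
  obtain ⟨a, ha⟩ := (Set.ne_univ_iff_exists_notMem B).1 hB
  have haA : a ∈ A \ B := ⟨(hU' a).resolve_right ha, ha⟩
  have hWA : ∀ i, ∀ v ∈ Wp i, v ∉ A := fun i v hv hvA => hno i v ⟨hvA, h.WB i hv⟩ hv
  have hclG : ∀ i, ∀ p ∈ Wp i, ∀ q, G.Adj p q → q ∈ Wp i ∪ g '' T i := by
    intro i p hp q hpq
    rcases hE hpq with hh | hh
    · exact absurd hh.1 (hWA i p hp)
    · exact h.cl i p hp q hh.2 (addTri_adj.2 (Or.inl hpq))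
  have hclA : ∀ p ∈ A \ B, ∀ q, G.Adj p q → q ∈ A := by
    intro p hp q hpq
    rcases hE hpq with hh | hh
    · exact hh.2
    · exact absurd hh.1 hp.2
  have hne : ∀ i, g ⁻¹' (A ∩ B) ≠ T i := by
    intro i e
    have hTX : g '' T i = A ∩ B := by rw [← e, hT0]
    refine hG.hs (A ∩ B) hX (fun v => if v ∈ Wp i then 0 else if v ∈ A then 1 else 2) ?_ ?_
    · have key : ∀ p q, p ∉ A ∩ B → q ∉ A ∩ B → G.Adj p q →
          (p ∈ Wp i → q ∈ Wp i) ∧ (p ∈ A → q ∈ A) := by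
        intro p q hp hq hpq
        refine ⟨fun hpW => ?_, fun hpA => ?_⟩
        · rcases hclG i p hpW q hpq with hh | hh
          · exact hh
          · exact absurd (hTX ▸ hh) hq
        · exact hclA p ⟨hpA, fun hpB => hp ⟨hpA, hpB⟩⟩ q hpq
      intro p q hp hq hpq
      obtain ⟨k1, k2⟩ := key p q hp hq hpq
      obtain ⟨k3, k4⟩ := key q p hq hp hpq.symm
      by_cases h1 : p ∈ Wp i
      · simp [h1, k1 h1]
      · have h1' : q ∉ Wp i := fun h => h1 (k3 h)
        by_cases h2 : p ∈ A
        · simp [h1, h1', h2, k2 h2]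
        · have h2' : q ∉ A := fun h => h2 (k4 h)
          simp [h1, h1', h2, h2']
    · intro j
      fin_cases j
      · obtain ⟨w, hw⟩ := h.ne i
        exact ⟨w, fun hh => hWA i w hw hh.1, by simp [hw]⟩
      · have haW : a ∉ Wp i := fun hh => ha (h.WB i hh)
        exact ⟨a, fun hh => ha hh.2, by simp [haA.1, haW]⟩
      · obtain ⟨t, ht⟩ := exists_notMem_of_card h5 (h.t3 i)
        have h1 : g t ∉ Wp i := fun hh => h.dg i _ hh t rfl
        have h2 : g t ∉ A ∩ B := fun hh => by
          rw [← e] at ht; exact ht hh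
        have h3 : g t ∉ A := fun hh => h2 ⟨hh, h.gB t⟩
        exact ⟨g t, h2, by simp [h1, h3]⟩
  have hxX : ∀ i, x i ∈ A ∩ B := fun i => hx ▸ Set.mem_range_self i
  refine ⟨fun _ => trivial, fun _ => Set.subset_univ _, h.gi, ?_, ?_, ?_, ?_, ?_, ?_, ?_, ?_, ?_, ?_,
    ?_, ?_⟩
  · rintro (_ | i)
    · exact hT03
    · exact h.t3 i
  · rintro (_ | i)
    · intro p hp q hq hpq
      exact h.a1 p q (addTri_adj.2 (Or.inr ⟨fun e => hpq (h.gi e), hp, hq⟩))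
    · exact h.tri i
  · rintro (_ | i) (_ | j) e
    · rfl
    · exact absurd e (hne j)
    · exact absurd e.symm (hne i)
    · exact congrArg some (h.ti e)
  · rintro (_ | i) v hv u
    · rintro rfl
      exact hv.2 (h.gB u)
    · exact h.dg i v hv u
  · rintro (_ | i) (_ | j) v hv hv'
    · rfl
    · exact absurd hv.1 (hWA j v hv')
    · exact absurd hv'.1 (hWA i v hv)
    · exact congrArg some (h.dw i j v hv hv')
  · intro v _
    by_cases hvB : v ∈ B
    · rcases h.cov v hvB with hh | ⟨i, hi⟩
      · exact Or.inl hh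
      · exact Or.inr ⟨some i, hi⟩
    · exact Or.inr ⟨none, (hU' v).resolve_right hvB, hvB⟩
  · rintro (_ | i)
    · exact ⟨a, haA⟩
    · exact h.ne i
  · rintro (_ | i)
    · exact fan_wheel hfan hxi (fun i hi => hi.2 (hxX i).2) (hT0.trans hx) rfl
    · have e : deltaGraph G (Wp i ∪ g '' T i) (g '' T i)
          = deltaGraph (addTri G (A ∩ B)) (Wp i ∪ g '' T i) (g '' T i) := by
        ext p q
        rw [delta_adj, delta_adj, addTri_adj]
        constructor
        · rintro (h1 | h1)
          · exact Or.inl (Or.inl h1)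
          · exact Or.inr h1
        · rintro ((h1 | ⟨h1, h2, h3⟩) | h1)
          · exact Or.inl h1
          · exact Or.inr ⟨h1, p.2.resolve_left (hno i _ h2), q.2.resolve_left (hno i _ h3)⟩
          · exact Or.inr h1
      have := h.wh i
      rw [← e] at this
      exact this
  · intro p q hpq
    exact h.a1 p q (addTri_adj.2 (Or.inl hpq))
  · intro p q hpq
    rcases h.a2 p q hpq with hh | ⟨i, hi⟩
    · rcases addTri_adj.1 hh with h1 | ⟨-, h2, h3⟩
      · exact Or.inl h1
      · exact Or.inr ⟨none, h2, h3⟩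
    · exact Or.inr ⟨some i, hi⟩
  · rintro (_ | i) p hp q _ hpq
    · have hqA := hclA p hp q hpq
      by_cases hqB : q ∈ B
      · exact Or.inr (hT0.symm ▸ (⟨hqA, hqB⟩ : q ∈ A ∩ B))
      · exact Or.inl ⟨hqA, hqB⟩
    · exact hclG i p hp q hpq
  · rintro (_ | i)
    · change NP (addTri G (g '' (g ⁻¹' (A ∩ B)))) (Set.univ \ (A \ B))
      rw [hT0]
      exact hnp.mono (fun v hv => ⟨trivial, fun hh => hh.2 hv⟩) (fun _ _ _ _ h => h)
    · change NP (addTri G (g '' T i)) (Set.univ \ Wp i)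
      have h1 : NP (addTri (addTri G (g '' T i)) (Set.range x)) (B \ Wp i) := by
        refine (h.np i).mono le_rfl ?_
        intro p _ q _ hpq
        simp only [addTri_adj, ← hx] at hpq ⊢
        tauto
      obtain ⟨c1, c2, c3, c4, c5⟩ := hC
      have key : ∀ {W : Type} (K : SimpleGraph W),
          MIn K (addTri (addTri G (g '' T i)) (Set.range x)) (B \ Wp i) →
          MIn K (addTri G (g '' T i)) (Set.univ \ Wp i) := by
        intro W K hK
        have := rt_minor hK c1
          (fun j => cc_mono (c2 j) (fun _ _ _ _ hh => addTri_adj.2 (Or.inl hh)))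
          (by
            intro j v hv hvB
            rcases c3 j v hv with hh | hh
            · exact hh
            · exact absurd hvB.1 hh.2) c4
          (fun j k hjk => by
            obtain ⟨p, hp, q, hq, hpq⟩ := c5 j k hjk
            exact ⟨p, hp, q, hq, addTri_adj.2 (Or.inl hpq)⟩)
        refine this.mono ?_ (fun _ _ _ _ h => h)
        rintro v (hv | hv)
        · exact ⟨trivial, hv.2⟩
        · obtain ⟨j, hj⟩ := Set.mem_iUnion.1 hv
          refine ⟨trivial, fun hvW => ?_⟩
          rcases c3 j v hj with hh | hh
          · exact hno i v (hh ▸ hxX j) hvW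
          · exact hWA i v hvW hh.1
      exact h1.imp (key _) (key _)


theorem not_k13_of_card {V : Type*} {G : SimpleGraph V} {A : Set V} (h : 5 ≤ A.ncard) :
    ¬ Nonempty (G.induce A ≃g K13) := by
  rintro ⟨e⟩
  have := Nat.card_congr e.toEquiv
  rw [Nat.card_coe_set_eq] at this
  simp at this
  omega

theorem Dc.base {V : Type} {G : SimpleGraph V} :
    Dc G Set.univ G (id : V → V) (fun i : Empty => i.elim) (fun i : Empty => i.elim) := by
  refine ⟨fun _ => trivial, fun i => i.elim, Function.injective_id, fun i => i.elim,
    fun i => i.elim, fun i => i.elim, fun i => i.elim, fun i => i.elim,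
    fun v _ => Or.inl ⟨v, rfl⟩, fun i => i.elim, fun i => i.elim, fun _ _ h => h,
    fun _ _ h => Or.inl h, fun i => i.elim, fun i => i.elim⟩

theorem main_ind (n : ℕ) : ∀ (V : Type) [Finite V] (G : SimpleGraph V), Nat.card V = n → Gd G →
    ∃ (U : Type) (G' : SimpleGraph U), InternallyFourConnected G' ∧ NP G' Set.univ ∧
      IsMinor G' G ∧ ∃ (g : U → V) (ι : Type) (_ : Finite ι) (Wp : ι → Set V) (T : ι → Set U),
        Dc G Set.univ G' g Wp T := by
  induction n using Nat.strong_induction_on with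
  | _ n ih =>
  intro V _ G hn hG
  let Bad : Set (Set V × Set V) := {p | IsSep G 3 p.1 p.2 ∧ ¬ Nonempty (G.induce p.1 ≃g K13) ∧
    NP (addTri G (p.1 ∩ p.2)) p.2}
  by_cases hbad : Bad.Nonempty
  swap
  · refine ⟨V, G, ⟨hG.k3, ?_, ?_⟩, hG.np, ?_, id, Empty, inferInstance, _, _, Dc.base⟩
    · have := hG.np.card
      rwa [Set.ncard_univ] at this
    · intro A B hs
      obtain ⟨x, hxi, hx⟩ := enum3 hs.2.2.2.1
      have hU' : ∀ v, v ∈ A ∨ v ∈ B := fun v => by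
        have : v ∈ A ∪ B := hs.1 ▸ Set.mem_univ v
        exact this
      have hsp := np_split hU' (fun v => by rw [← hx]; rfl) hxi (fun a b h => hs.2.2.2.2 h)
        (sep_cc hG hs) (sep_cc hG (sep_symm hs)) hG.np
      rw [← hx] at hsp
      rcases hsp with h | h
      · refine Or.inl ⟨?_, not_k13_of_card h.card⟩
        by_contra hcon
        exact hbad ⟨(A, B), hs, hcon, h⟩
      · refine Or.inr ⟨?_, not_k13_of_card h.card⟩
        by_contra hcon
        exact hbad ⟨(B, A), sep_symm hs, hcon, by rw [Set.inter_comm]; exact h⟩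
    · exact isMinor_iff.2 ⟨fun v => {v}, fun v => cc_singleton v,
        fun a b v ha hb => by rw [← show v = a from ha, ← show v = b from hb],
        fun a b h => ⟨a, rfl, b, rfl, h⟩⟩
  · obtain ⟨⟨A, B⟩, ⟨hs, hk, hnp⟩, hmax⟩ := Set.exists_max_image Bad (fun p => p.1.ncard)
      (Set.toFinite _) hbad
    simp only at hs hk hnp hmax
    obtain ⟨x, hxi, hx⟩ := enum3 hs.2.2.2.1
    have hfan := sep_fan hG hs hxi hx hnp
    have hxW : ∀ i, x i ∉ A \ B := fun i hi => by
      have : x i ∈ A ∩ B := hx ▸ Set.mem_range_self i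
      exact hi.2 this.2
    have hAe : A = A \ B ∪ Set.range x := by
      rw [← hx, Set.diff_union_inter]
    obtain ⟨C, hC⟩ := (fan_rt hfan hxi hxW hAe).resolve_right hk
    obtain ⟨hG1, hmin⟩ := gd_reduce hG hs hx hnp hC
    have hlt : Nat.card B < n := by
      obtain ⟨a, ha⟩ := (Set.ne_univ_iff_exists_notMem B).1 hs.2.2.1
      rw [Nat.card_coe_set_eq, ← hn, ← Set.ncard_univ]
      exact Set.ncard_lt_ncard ⟨Set.subset_univ _, fun h => ha (h trivial)⟩ (Set.toFinite _)
    obtain ⟨U, G', h4, hnp', hm', g, ι, hι, Wp, T, hD⟩ := ih _ hlt B _ rfl hG1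
    have hD' := hD.lift
    refine ⟨U, G', h4, hnp', isMinor_trans hm' hmin, _, Option ι, inferInstance, _, _,
      hD'.glue hG hs h4.2.1 ?_ hnp hxi hx hfan hC⟩
    intro i v hvX hv
    obtain ⟨A2, B2, k1, k2, k3, k4⟩ := hD'.clash hs h4.2.1 hvX hv
    have := hmax (A2, B2) ⟨k1, not_k13_of_card k3, k4⟩
    simp only at this
    omega

theorem main_thm {V : Type} [Fintype V] (G : SimpleGraph V)
    (h3 : KConnected G 3) (hnp : ¬ Planar G)
    (hfree : ¬ IsMinor K5plus G ∧ ¬ IsMinor K33plus G ∧ ¬ IsMinor K5h G ∧ ¬ IsMinor K33h G)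
    (hstrong : ∀ x y z : V,
      Nat.card (G.induce (({x, y, z} : Set V)ᶜ)).ConnectedComponent ≤ 2) :
    ∃ (U : Type) (G' : SimpleGraph U),
      InternallyFourConnected G' ∧ ¬ Planar G' ∧ IsMinor G' G ∧ SumWheelsOnto G G' := by
  obtain ⟨U, G', h4, hnp', hm, g, ι, hι, Wp, T, hD⟩ := main_ind _ V G rfl
    ⟨h3, not_planar_iff.1 hnp, hfree.1, hfree.2.1, hfree.2.2.1, hfree.2.2.2, hs_of hstrong⟩
  refine ⟨U, G', h4, not_planar_iff.2 hnp', hm, ⟨g, hD.gi⟩, Nat.card ι,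
    fun k => Wp ((Finite.equivFin ι).symm k), fun k => T ((Finite.equivFin ι).symm k), fun k => hD.t3 _,
    fun k => hD.tri _, hD.ti.comp (Equiv.injective _), ?_, ?_, ?_, fun k => hD.wh _, hD.a1, ?_, ?_,
    fun k p hp q hpq => hD.cl _ p hp q trivial hpq⟩
  · intro k
    rw [Set.disjoint_left]
    rintro v hv ⟨u, hu⟩
    exact hD.dg _ v hv u hu
  · intro j k hjk
    change Disjoint _ _
    rw [Set.disjoint_left]
    intro v hv hv'
    exact hjk ((Equiv.injective _) (hD.dw _ _ v hv hv'))
  · refine Set.eq_univ_of_forall fun v => ?_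
    rcases hD.cov v trivial with h | ⟨i, hi⟩
    · exact Or.inl h
    · exact Or.inr (Set.mem_iUnion.2 ⟨Finite.equivFin ι i, by simpa using hi⟩)
  · intro a b hab
    rcases hD.a2 a b hab with h | ⟨i, hi⟩
    · exact Or.inl h
    · exact Or.inr ⟨Finite.equivFin ι i, by simpa using hi⟩
  · intro p q hpq
    rcases hD.cov p trivial with h | ⟨i, hi⟩
    · rcases hD.cov q trivial with h' | ⟨i, hi⟩
      · exact Or.inl ⟨h, h'⟩
      · right
        refine ⟨Finite.equivFin ι i, ?_⟩
        beta_reduce; rw [Equiv.symm_apply_apply]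
        exact ⟨hD.cl i q hi p trivial hpq.symm, Or.inl hi⟩
    · right
      refine ⟨Finite.equivFin ι i, ?_⟩
      beta_reduce; rw [Equiv.symm_apply_apply]
      exact ⟨Or.inl hi, hD.cl i p hi q trivial hpq⟩

/-- A 3-connected nonplanar {K5+, K33+, K5h, K33h}-free graph in which no three
vertices separate the graph into more than two components is obtained from an
internally 4-connected nonplanar minor `G'` by 3-summing wheels onto distinct
triangles of `G'`. -/
theorem stmt17 {V : Type} [Fintype V] (G : SimpleGraph V)
    (h3 : KConnected G 3) (hnp : ¬ Planar G)
    (hfree : ¬ IsMinor K5plus G ∧ ¬ IsMinor K33plus G ∧ ¬ IsMinor K5h G ∧ ¬ IsMinor K33h G)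
    (hstrong : ∀ x y z : V,
      Nat.card (G.induce (({x, y, z} : Set V)ᶜ)).ConnectedComponent ≤ 2) :
    ∃ (U : Type) (G' : SimpleGraph U), InternallyFourConnected G' ∧ ¬ Planar G' ∧
      IsMinor G' G ∧ SumWheelsOnto G G' := by
  exact main_thm G h3 hnp hfree hstrong
end

section
/- For every n ≥ 2, the graph C²_{2n+1} is a minor of the Möbius ladder M_{2n+1}, and the alternating double wheel AW_{2n} is a minor of the double wheel DW_{2n}. -/
open SimpleGraph

/-- A subgraph on the same vertex set is a minor. -/
lemma isMinor_of_le {V : Type*} {H G : SimpleGraph V} (h : H ≤ G) : IsMinor H G := by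
  refine ⟨fun w => {w}, fun w => Set.singleton_nonempty w, fun w => ?_, fun a b hab => ?_,
    fun a b hab => ⟨a, rfl, b, rfl, h hab⟩⟩
  · have : Unique ↥({w} : Set V) := Set.uniqueSingleton w
    exact ⟨SimpleGraph.Preconnected.of_subsingleton⟩
  · simpa using hab

lemma altDoubleWheel_le (n : ℕ) : altDoubleWheel n ≤ doubleWheel (2 * n) := by
  intro a b hab
  rcases a with a | a <;> rcases b with b | b <;>
    simp_all [altDoubleWheel, doubleWheel, SimpleGraph.fromRel_adj]

/-- First vertex of the branch set of `i`. -/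
def ladderStart (n i : ℕ) : ℕ := if i % 2 = 0 then i else i + (2 * n + 1)

lemma ladderStart_lt {n i : ℕ} (hi : i < 2 * n + 1) :
    ladderStart n i + 1 < 2 * (2 * n + 1) := by
  unfold ladderStart; split <;> omega

lemma mobius_adj {n : ℕ} {a b : Fin (2 * (2 * n + 1))}
    (h : b.val = a.val + 1 ∨ b.val = a.val + (2 * n + 1) ∨
      (a.val = 2 * (2 * n + 1) - 1 ∧ b.val = 0)) :
    (mobiusLadder (2 * n + 1)).Adj a b := by
  have ha := a.isLt
  have hb := b.isLt
  rw [mobiusLadder, SimpleGraph.fromRel_adj]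
  refine ⟨fun e => by rw [e] at h; omega, Or.inl ?_⟩
  rcases h with h | h | ⟨h, h'⟩
  · left; rw [h, Nat.mod_eq_of_lt]; omega
  · right; rw [h, Nat.mod_eq_of_lt]; omega
  · left
    rw [h', h, show 2 * (2 * n + 1) - 1 + 1 = 2 * (2 * n + 1) by omega, Nat.mod_self]

/-- Branch sets contracting alternate rim edges of the ladder. -/
def ladderBranch (n : ℕ) (i : Fin (2 * n + 1)) : Set (Fin (2 * (2 * n + 1))) :=
  {⟨ladderStart n i, by have := ladderStart_lt i.isLt; omega⟩,
    ⟨ladderStart n i + 1, ladderStart_lt i.isLt⟩}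

lemma mem_ladderBranch {n : ℕ} {i : Fin (2 * n + 1)} {x : Fin (2 * (2 * n + 1))} :
    x ∈ ladderBranch n i ↔ x.val = ladderStart n i ∨ x.val = ladderStart n i + 1 := by
  simp [ladderBranch, Fin.ext_iff]

lemma ladder_edge {n : ℕ} (hn : 2 ≤ n) {i j : Fin (2 * n + 1)}
    (h : j.val = (i.val + 1) % (2 * n + 1) ∨ j.val = (i.val + 2) % (2 * n + 1)) :
    ∃ a ∈ ladderBranch n i, ∃ b ∈ ladderBranch n j, (mobiusLadder (2 * n + 1)).Adj a b := by
  have hi := i.isLt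
  have hj := j.isLt
  have key : ∃ a b : ℕ, (a = ladderStart n i ∨ a = ladderStart n i + 1) ∧
      (b = ladderStart n j ∨ b = ladderStart n j + 1) ∧
      ((b = a + 1 ∨ b = a + (2 * n + 1) ∨ (a = 2 * (2 * n + 1) - 1 ∧ b = 0)) ∨
       a = b + (2 * n + 1)) := by
    have h' : (j.val = i.val + 1 ∨ (i.val = 2 * n ∧ j.val = 0)) ∨
        (j.val = i.val + 2 ∨ (i.val = 2 * n - 1 ∧ j.val = 0) ∨ (i.val = 2 * n ∧ j.val = 1)) := by
      rcases h with h | h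
      · left
        by_cases hlt : i.val + 1 < 2 * n + 1
        · rw [Nat.mod_eq_of_lt hlt] at h; omega
        · rw [Nat.mod_eq_sub_mod (by omega), Nat.mod_eq_of_lt (by omega)] at h; omega
      · right
        by_cases hlt : i.val + 2 < 2 * n + 1
        · rw [Nat.mod_eq_of_lt hlt] at h; omega
        · rw [Nat.mod_eq_sub_mod (by omega), Nat.mod_eq_of_lt (by omega)] at h; omega
    generalize i.val = x at *
    generalize j.val = y at *
    rcases h' with (h' | h') | (h' | h' | h')
    · by_cases hx : x % 2 = 0
      · refine ⟨ladderStart n x + 1, ladderStart n y, by simp, by simp, ?_⟩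
        unfold ladderStart; split_ifs <;> omega
      · refine ⟨ladderStart n x + 1, ladderStart n y, by simp, by simp, ?_⟩
        unfold ladderStart; split_ifs <;> omega
    all_goals
      refine ⟨ladderStart n x + 1, ladderStart n y, by simp, by simp, ?_⟩
      unfold ladderStart; split_ifs <;> omega
  obtain ⟨a, b, ha, hb, hab⟩ := key
  have h1 := ladderStart_lt hi
  have h2 := ladderStart_lt hj
  refine ⟨⟨a, by omega⟩, mem_ladderBranch.2 ha, ⟨b, by omega⟩, mem_ladderBranch.2 hb, ?_⟩
  rcases hab with hab | hab
  · exact mobius_adj hab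
  · exact (mobius_adj (Or.inr (Or.inl hab))).symm

lemma squareCycle_minor {n : ℕ} (hn : 2 ≤ n) :
    IsMinor (squareCycle (2 * n + 1)) (mobiusLadder (2 * n + 1)) := by
  refine ⟨ladderBranch n, fun w => ⟨_, Or.inl rfl⟩, fun w => ?_, fun i j hij => ?_,
    fun i j hij => ?_⟩
  · exact SimpleGraph.induce_pair_connected_of_adj (mobius_adj (Or.inl rfl))
  · refine Set.disjoint_left.2 ?_
    intro x hx hy
    rw [mem_ladderBranch] at hx hy
    apply hij
    have hi := i.isLt
    have hj := j.isLt
    apply Fin.ext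
    unfold ladderStart at hx hy
    split_ifs at hx hy <;> omega
  · rw [squareCycle, SimpleGraph.fromRel_adj] at hij
    rcases hij.2 with h | h
    · exact ladder_edge hn h
    · obtain ⟨a, ha, b, hb, hab⟩ := ladder_edge hn h
      exact ⟨b, hb, a, ha, hab.symm⟩

/-- For `n ≥ 2`, `C²_{2n+1}` is a minor of the Möbius ladder `M_{2n+1}` and the
alternating double wheel `AW_{2n}` is a minor of the double wheel `DW_{2n}`. -/
theorem stmt19 (n : ℕ) (hn : 2 ≤ n) :
    IsMinor (squareCycle (2 * n + 1)) (mobiusLadder (2 * n + 1)) ∧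
    IsMinor (altDoubleWheel n) (doubleWheel (2 * n)) := by
  exact ⟨squareCycle_minor hn, isMinor_of_le (altDoubleWheel_le n)⟩
end
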